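/- arXiv:1109.5287 — 3 statements merged into one kernel-verified Lean document; each statement's English description precedes it below -/
import Mathlib

section
/- Let μ be a κ′-concave probability measure on ℝⁿ and ν a κ″-concave probability measure on ℝⁿ, where κ′, κ″ ∈ [−1,1] are nonzero and satisfy κ′ + κ″ > 0. Let κ be defined by 1/κ = 1/κ′ + 1/κ″. Then the convolution μ ∗ ν (the pushforward of the product measure μ ⊗ ν under the map (x,y) ↦ x+y) is κ-concave. -/
open MeasureTheory ProbabilityTheory Real
open scoped Pointwise ENNReal

noncomputable def ent {n : ℕ} (f : EuclideanSpace ℝ (Fin n) → ℝ) : ℝ :=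
  -∫ x, f x * Real.log (f x)

noncomputable def densSup {n : ℕ} (f : EuclideanSpace ℝ (Fin n) → ℝ) : ℝ :=
  (essSup (fun x => ENNReal.ofReal (f x)) volume).toReal

def HasDensity {Ω : Type*} [MeasurableSpace Ω] (P : Measure Ω) {n : ℕ}
    (X : Ω → EuclideanSpace ℝ (Fin n)) (f : EuclideanSpace ℝ (Fin n) → ℝ) : Prop :=
  Measure.map X P = volume.withDensity (fun x => ENNReal.ofReal (f x))

def ConvexForm {n : ℕ} (f : EuclideanSpace ℝ (Fin n) → ℝ) (β : ℝ) : Prop :=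
  ∃ (S : Set (EuclideanSpace ℝ (Fin n))) (V : EuclideanSpace ℝ (Fin n) → ℝ),
    IsOpen S ∧ Convex ℝ S ∧ ConvexOn ℝ S V ∧
    (∀ x ∈ S, 0 < V x) ∧ (∀ x ∈ S, f x = V x ^ (-β)) ∧ (∀ x ∉ S, f x = 0)

def LogConcaveDensity {n : ℕ} (f : EuclideanSpace ℝ (Fin n) → ℝ) : Prop :=
  (∀ x, 0 ≤ f x) ∧
  ∀ x y : EuclideanSpace ℝ (Fin n), ∀ t : ℝ, 0 < t → t < 1 →
    f x ^ t * f y ^ (1 - t) ≤ f (t • x + (1 - t) • y)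

def KConcave {n : ℕ} (μ : Measure (EuclideanSpace ℝ (Fin n))) (κ : ℝ) : Prop :=
  ∀ A B : Set (EuclideanSpace ℝ (Fin n)), MeasurableSet A → MeasurableSet B →
    0 < μ A → 0 < μ B → ∀ t : ℝ, 0 < t → t < 1 →
      (t * (μ A).toReal ^ κ + (1 - t) * (μ B).toReal ^ κ) ^ (1/κ) ≤
        (μ (t • A + (1 - t) • B)).toReal

def IsConvexBody {n : ℕ} (A : Set (EuclideanSpace ℝ (Fin n))) : Prop :=
  Convex ℝ A ∧ IsCompact A ∧ (interior A).Nonempty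

def IsUniformOn {Ω : Type*} [MeasurableSpace Ω] (P : Measure Ω) {n : ℕ}
    (X : Ω → EuclideanSpace ℝ (Fin n)) (A : Set (EuclideanSpace ℝ (Fin n))) : Prop :=
  Measure.map X P = (volume A)⁻¹ • volume.restrict A

noncomputable def Mn (p t x y : ℝ) : ℝ := (t * x ^ p + (1 - t) * y ^ p) ^ (1 / p)

lemma Mn_sum_pos {p t x y : ℝ} (ht0 : 0 < t) (ht1 : t < 1) (hx : 0 < x) (hy : 0 < y) :
    0 < t * x ^ p + (1 - t) * y ^ p := by
  have := Real.rpow_pos_of_pos hx p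
  have := Real.rpow_pos_of_pos hy p
  have : 0 < 1 - t := by linarith
  positivity

lemma Mn_pos {p t x y : ℝ} (ht0 : 0 < t) (ht1 : t < 1) (hx : 0 < x) (hy : 0 < y) :
    0 < Mn p t x y := Real.rpow_pos_of_pos (Mn_sum_pos ht0 ht1 hx hy) _

lemma Mn_mono {p t x y x' y' : ℝ} (hp : p ≠ 0) (ht0 : 0 < t) (ht1 : t < 1) (hx : 0 < x)
    (hy : 0 < y) (hxx : x ≤ x') (hyy : y ≤ y') : Mn p t x y ≤ Mn p t x' y' := by
  unfold Mn
  have h1 : 0 ≤ 1 - t := by linarith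
  rcases lt_or_gt_of_ne hp with h | h
  · apply Real.rpow_le_rpow_of_nonpos (Mn_sum_pos ht0 ht1 (hx.trans_le hxx) (hy.trans_le hyy))
    · gcongr ?_ * ?_ + ?_ * ?_
      · exact Real.rpow_le_rpow_of_nonpos hx hxx h.le
      · exact Real.rpow_le_rpow_of_nonpos hy hyy h.le
    · exact (one_div_neg.mpr h).le
  · apply Real.rpow_le_rpow (Mn_sum_pos ht0 ht1 hx hy).le
    · gcongr
    · positivity

lemma Mn_smul {p t x y c : ℝ} (hp : p ≠ 0) (ht0 : 0 < t) (ht1 : t < 1) (hx : 0 < x)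
    (hy : 0 < y) (hc : 0 < c) : Mn p t (c * x) (c * y) = c * Mn p t x y := by
  unfold Mn
  rw [Real.mul_rpow hc.le hx.le, Real.mul_rpow hc.le hy.le]
  have : t * (c ^ p * x ^ p) + (1 - t) * (c ^ p * y ^ p)
    = c ^ p * (t * x ^ p + (1 - t) * y ^ p) := by ring
  rw [this, Real.mul_rpow (by positivity) (Mn_sum_pos ht0 ht1 hx hy).le, ← Real.rpow_mul hc.le,
    mul_one_div_cancel hp, Real.rpow_one]

lemma Mn_inv {p t x y : ℝ} (ht0 : 0 < t) (ht1 : t < 1) (hx : 0 < x)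
    (hy : 0 < y) : Mn (-p) t x⁻¹ y⁻¹ = (Mn p t x y)⁻¹ := by
  unfold Mn
  rw [Real.inv_rpow hx.le, Real.inv_rpow hy.le, Real.rpow_neg hx.le, Real.rpow_neg hy.le,
    inv_inv, inv_inv, one_div, one_div, inv_neg, Real.rpow_neg (Mn_sum_pos ht0 ht1 hx hy).le]

lemma holder_pos {p q k t x y x' y' : ℝ} (hp : 0 < p) (hq : 0 < q)
    (hk : 1 / k = 1 / p + 1 / q) (ht0 : 0 < t) (ht1 : t < 1) (hx : 0 < x) (hy : 0 < y)
    (hx' : 0 < x') (hy' : 0 < y') :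
    Mn k t (x * x') (y * y') ≤ Mn p t x y * Mn q t x' y' := by
  have hk0 : 0 < k := by
    have : 0 < 1 / k := by rw [hk]; positivity
    exact one_div_pos.mp this
  have hsum : k / p + k / q = 1 := by
    have : k * (1 / k) = k * (1 / p + 1 / q) := by rw [hk]
    rw [mul_one_div_cancel hk0.ne'] at this
    rw [this]; ring
  have hP := Mn_sum_pos (p := p) ht0 ht1 hx hy
  have hQ := Mn_sum_pos (p := q) ht0 ht1 hx' hy'
  set P := t * x ^ p + (1 - t) * y ^ p with hPd
  set Q := t * x' ^ q + (1 - t) * y' ^ q with hQd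
  have key : ∀ u v : ℝ, 0 < u → 0 < v →
      (u * v) ^ k ≤ P ^ (k / p) * Q ^ (k / q) * (k / p * (u ^ p / P) + k / q * (v ^ q / Q)) := by
    intro u v hu hv
    have h := Real.geom_mean_le_arith_mean2_weighted (w₁ := k / p) (w₂ := k / q)
      (p₁ := u ^ p / P) (p₂ := v ^ q / Q) (by positivity) (by positivity) (by positivity)
      (by positivity) hsum
    have e1 : (u ^ p / P) ^ (k / p) = u ^ k / P ^ (k / p) := by
      rw [Real.div_rpow (by positivity) hP.le, ← Real.rpow_mul hu.le, mul_div_cancel₀ _ hp.ne']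
    have e2 : (v ^ q / Q) ^ (k / q) = v ^ k / Q ^ (k / q) := by
      rw [Real.div_rpow (by positivity) hQ.le, ← Real.rpow_mul hv.le, mul_div_cancel₀ _ hq.ne']
    have hP' := Real.rpow_pos_of_pos hP (k / p)
    have hQ' := Real.rpow_pos_of_pos hQ (k / q)
    calc (u * v) ^ k = P ^ (k / p) * Q ^ (k / q) * ((u ^ p / P) ^ (k / p) * (v ^ q / Q) ^ (k / q)) := by
          rw [e1, e2, Real.mul_rpow hu.le hv.le]; field_simp
      _ ≤ _ := by gcongr
  have h1t : 0 < 1 - t := by linarith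
  have main : t * (x * x') ^ k + (1 - t) * (y * y') ^ k ≤ P ^ (k / p) * Q ^ (k / q) := by
    calc _ ≤ t * (P ^ (k / p) * Q ^ (k / q) * (k / p * (x ^ p / P) + k / q * (x' ^ q / Q)))
        + (1 - t) * (P ^ (k / p) * Q ^ (k / q) * (k / p * (y ^ p / P) + k / q * (y' ^ q / Q))) := by
          gcongr
          · exact key _ _ hx hx'
          · exact key _ _ hy hy'
      _ = P ^ (k / p) * Q ^ (k / q) * (k / p * ((t * x ^ p + (1 - t) * y ^ p) / P)
          + k / q * ((t * x' ^ q + (1 - t) * y' ^ q) / Q)) := by ring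
      _ = _ := by
          rw [← hPd, ← hQd, div_self hP.ne', div_self hQ.ne', mul_one, mul_one, hsum, mul_one]
  unfold Mn
  calc _ ≤ (P ^ (k / p) * Q ^ (k / q)) ^ (1 / k) :=
        Real.rpow_le_rpow (Mn_sum_pos ht0 ht1 (by positivity) (by positivity)).le main
          (by positivity)
    _ = _ := by
        rw [Real.mul_rpow (by positivity) (by positivity), ← Real.rpow_mul hP.le,
          ← Real.rpow_mul hQ.le]
        congr 2 <;> field_simp

lemma holder_neg {p q k t x y x' y' : ℝ} (hp : p < 0) (hq : 0 < q) (hpq : 0 < p + q)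
    (hk : 1 / k = 1 / p + 1 / q) (ht0 : 0 < t) (ht1 : t < 1) (hx : 0 < x) (hy : 0 < y)
    (hx' : 0 < x') (hy' : 0 < y') :
    Mn k t (x * x') (y * y') ≤ Mn p t x y * Mn q t x' y' := by
  have hk0 : k < 0 := by
    have h : 1 / k < 0 := by
      rw [hk, div_add_div _ _ hp.ne hq.ne']
      apply div_neg_of_pos_of_neg (by linarith) (mul_neg_of_neg_of_pos hp hq)
    exact one_div_neg.mp h
  have h := holder_pos (p := -k) (q := q) (k := -p) (t := t) (x := (x * x')⁻¹) (y := (y * y')⁻¹)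
    (x' := x') (y' := y') (by linarith) hq
    (by rw [one_div_neg_eq_neg_one_div, one_div_neg_eq_neg_one_div, hk]; ring) ht0 ht1
    (by positivity) (by positivity) hx' hy'
  have e1 : (x * x')⁻¹ * x' = x⁻¹ := by field_simp
  have e2 : (y * y')⁻¹ * y' = y⁻¹ := by field_simp
  rw [e1, e2, Mn_inv ht0 ht1 hx hy, Mn_inv ht0 ht1 (by positivity) (by positivity)] at h
  have hA := Mn_pos (p := p) ht0 ht1 hx hy
  have hB := Mn_pos (p := k) ht0 ht1 (mul_pos hx hx') (mul_pos hy hy')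
  have hC := Mn_pos (p := q) ht0 ht1 hx' hy'
  rw [inv_mul_eq_div, inv_eq_one_div, div_le_div_iff₀ hA hB] at h
  linarith

lemma Mn_holder {p q k t x y x' y' : ℝ} (hp : p ≠ 0) (hq : q ≠ 0) (hpq : 0 < p + q)
    (hk : 1 / k = 1 / p + 1 / q) (ht0 : 0 < t) (ht1 : t < 1) (hx : 0 < x) (hy : 0 < y)
    (hx' : 0 < x') (hy' : 0 < y') :
    Mn k t (x * x') (y * y') ≤ Mn p t x y * Mn q t x' y' := by
  rcases lt_or_gt_of_ne hp with h | h
  · exact holder_neg h (by linarith) hpq hk ht0 ht1 hx hy hx' hy'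
  · rcases lt_or_gt_of_ne hq with h' | h'
    · have := holder_neg h' h (by linarith) (by rw [hk, add_comm]) ht0 ht1 hx' hy' hx hy
      rw [mul_comm x x', mul_comm y y', mul_comm (Mn p t x y)]
      exact this
    · exact holder_pos h h' hk ht0 ht1 hx hy hx' hy'

lemma bm_inner {X Y Z : Set ℝ} (hX : MeasurableSet X)
    (hYZ : volume Y ≤ volume Z)
    (h : ∀ K, K ⊆ X → K.Nonempty → IsCompact K → volume K + volume Y ≤ volume Z) :
    volume X + volume Y ≤ volume Z := by
  by_cases hZ : volume Z = ⊤
  · rw [hZ]; exact le_top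
  have hY : volume Y ≠ ⊤ := ne_top_of_le_ne_top hZ hYZ
  have : volume X ≤ volume Z - volume Y := by
    rw [hX.measure_eq_iSup_isCompact]
    refine iSup_le fun K => iSup_le fun hK => iSup_le fun hc => ?_
    apply ENNReal.le_sub_of_add_le_right hY
    rcases K.eq_empty_or_nonempty with rfl | hne
    · simpa using hYZ
    · exact h K hK hne hc
  calc _ ≤ volume Z - volume Y + volume Y := by gcongr
    _ = _ := tsub_add_cancel_of_le hYZ

lemma bm_compact {K L Z : Set ℝ} (hK : IsCompact K) (hL : IsCompact L) (hKn : K.Nonempty)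
    (hLn : L.Nonempty) (h : ∀ x ∈ K, ∀ y ∈ L, x + y ∈ Z) : volume K + volume L ≤ volume Z := by
  obtain ⟨a, haK, ha⟩ := hK.exists_isGreatest hKn
  obtain ⟨b, hbL, hb⟩ := hL.exists_isLeast hLn
  have e1 : volume ((fun x => x + (-b)) ⁻¹' K) = volume K := measure_preimage_add_right _ _ _
  have e2 : volume ((fun x => x + (-a)) ⁻¹' L) = volume L := measure_preimage_add_right _ _ _
  rw [← e1, ← e2, ← measure_union₀]
  · apply measure_mono
    rintro x (hx | hx)
    · have := h _ hx _ hbL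
      simpa using this
    · have := h _ haK _ hx
      simpa using this
  · exact ((measurable_add_const _) hL.measurableSet).nullMeasurableSet
  · apply measure_mono_null (t := {a + b})
    · rintro x ⟨hx1, hx2⟩
      have h1 := ha hx1
      have h2 := hb hx2
      simp only [Set.mem_singleton_iff]
      apply le_antisymm <;> linarith
    · simp

lemma bm_add {X Y Z : Set ℝ} (hX : MeasurableSet X) (hY : MeasurableSet Y) (hXn : X.Nonempty)
    (hYn : Y.Nonempty) (h : ∀ x ∈ X, ∀ y ∈ Y, x + y ∈ Z) : volume X + volume Y ≤ volume Z := by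
  have tr : ∀ W : Set ℝ, ∀ a, (∀ w ∈ W, w + a ∈ Z) → volume W ≤ volume Z := by
    intro W a hw
    rw [← measure_preimage_add_right volume (-a) W]
    apply measure_mono
    intro x hx
    simpa using hw _ hx
  apply bm_inner hX
  · obtain ⟨x, hx⟩ := hXn
    exact tr Y x (fun w hw => by rw [add_comm]; exact h x hx w hw)
  · intro K hK hKn hKc
    rw [add_comm]
    apply bm_inner hY
    · obtain ⟨y, hy⟩ := hYn
      exact tr K y (fun w hw => h w (hK hw) y hy)
    · intro L hL hLn hLc
      rw [add_comm]
      exact bm_compact hKc hLc hKn hLn (fun x hx y hy => h x (hK hx) y (hL hy))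

lemma bm_one {X Y Z : Set ℝ} {t : ℝ} (ht0 : 0 < t) (ht1 : t < 1)
    (hX : MeasurableSet X) (hY : MeasurableSet Y) (hXn : X.Nonempty)
    (hYn : Y.Nonempty) (h : ∀ x ∈ X, ∀ y ∈ Y, t * x + (1 - t) * y ∈ Z) :
    ENNReal.ofReal t * volume X + ENNReal.ofReal (1 - t) * volume Y ≤ volume Z := by
  have h1t : 0 < 1 - t := by linarith
  have e : ∀ s : ℝ, 0 < s → ∀ W : Set ℝ,
      ENNReal.ofReal s * volume W = volume ((fun x => s⁻¹ * x) ⁻¹' W) := by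
    intro s hs W
    rw [Real.volume_preimage_mul_left (inv_ne_zero hs.ne'), inv_inv, abs_of_pos hs]
  rw [e t ht0, e _ h1t]
  apply bm_add ((measurable_const_mul _) hX) ((measurable_const_mul _) hY)
  · obtain ⟨x, hx⟩ := hXn
    exact ⟨t * x, by simpa [ht0.ne'] using hx⟩
  · obtain ⟨x, hx⟩ := hYn
    exact ⟨(1 - t) * x, by simpa [h1t.ne'] using hx⟩
  · intro x hx y hy
    have := h _ hx _ hy
    rwa [mul_inv_cancel_left₀ ht0.ne', mul_inv_cancel_left₀ h1t.ne'] at this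

/-- normalized one-dimensional inequality -/
lemma bbl_norm {Φ Ψ Θ : ℝ → ℝ} {t : ℝ} (ht0 : 0 < t) (ht1 : t < 1)
    (mΦ : Measurable Φ) (mΨ : Measurable Ψ) (mΘ : Measurable Θ)
    (pΦ : ∀ x, 0 ≤ Φ x) (pΨ : ∀ x, 0 ≤ Ψ x) (pΘ : ∀ x, 0 ≤ Θ x)
    (bΦ : ∀ x, Φ x ≤ 1) (bΨ : ∀ x, Ψ x ≤ 1)
    (sΦ : ∀ l < 1, ∃ x, l ≤ Φ x) (sΨ : ∀ l < 1, ∃ x, l ≤ Ψ x)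
    (h : ∀ l, 0 < l → ∀ x y, l ≤ Φ x → l ≤ Ψ y → l ≤ Θ (t * x + (1 - t) * y)) :
    ENNReal.ofReal t * (∫⁻ x, ENNReal.ofReal (Φ x)) +
      ENNReal.ofReal (1 - t) * (∫⁻ x, ENNReal.ofReal (Ψ x)) ≤ ∫⁻ x, ENNReal.ofReal (Θ x) := by
  rw [lintegral_eq_lintegral_meas_le volume (Filter.Eventually.of_forall pΦ) mΦ.aemeasurable,
    lintegral_eq_lintegral_meas_le volume (Filter.Eventually.of_forall pΨ) mΨ.aemeasurable,
    lintegral_eq_lintegral_meas_le volume (Filter.Eventually.of_forall pΘ) mΘ.aemeasurable]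
  have meas : ∀ f : ℝ → ℝ, Measurable fun l : ℝ => volume {a | l ≤ f a} := by
    intro f
    apply Antitone.measurable
    intro a b hab
    exact measure_mono fun x hx => le_trans hab hx
  rw [← lintegral_const_mul _ (meas Φ), ← lintegral_const_mul _ (meas Ψ),
    ← lintegral_add_left ((meas Φ).const_mul _)]
  apply lintegral_mono_ae
  have hne : ∀ᵐ l : ℝ ∂(volume.restrict (Set.Ioi 0)), l ≠ 1 := by
    apply ae_restrict_of_ae
    exact Measure.ae_ne volume 1
  filter_upwards [ae_restrict_mem measurableSet_Ioi, hne] with l hl hl1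
  rcases lt_or_gt_of_ne hl1 with h1 | h1
  · apply bm_one ht0 ht1 (measurableSet_le measurable_const mΦ)
      (measurableSet_le measurable_const mΨ) (sΦ l h1) (sΨ l h1)
    intro x hx y hy
    exact h l hl x y hx hy
  · have e1 : {a | l ≤ Φ a} = ∅ := by
      ext a; simp; linarith [bΦ a]
    have e2 : {a | l ≤ Ψ a} = ∅ := by
      ext a; simp; linarith [bΨ a]
    rw [e1, e2]; simp

lemma lint_div {Φ : ℝ → ℝ} (mΦ : Measurable Φ) {x c : ℝ} (hc : 0 < c)
    (hI : ∫⁻ a, ENNReal.ofReal (Φ a) = ENNReal.ofReal x) :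
    ∫⁻ a, ENNReal.ofReal (Φ a / c) = ENNReal.ofReal (x / c) := by
  simp_rw [ENNReal.ofReal_div_of_pos hc, div_eq_mul_inv]
  rw [lintegral_mul_const _ mΦ.ennreal_ofReal, hI]

lemma sup_facts {Φ : ℝ → ℝ} (pΦ : ∀ x, 0 ≤ Φ x) (bΦ : ∀ x, Φ x ≤ 1) {x : ℝ} (hx : 0 < x)
    (hI : ∫⁻ a, ENNReal.ofReal (Φ a) = ENNReal.ofReal x) :
    ∃ c, 0 < c ∧ (∀ a, Φ a / c ≤ 1) ∧ (∀ l < 1, ∃ a, l ≤ Φ a / c) := by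
  have hb : BddAbove (Set.range Φ) := ⟨1, by rintro _ ⟨a, rfl⟩; exact bΦ a⟩
  have hpos : 0 < ⨆ a, Φ a := by
    by_contra hcon
    have : ∀ a, ENNReal.ofReal (Φ a) = 0 := fun a =>
      ENNReal.ofReal_eq_zero.mpr ((le_ciSup hb a).trans (not_lt.mp hcon))
    simp only [this, lintegral_zero] at hI
    exact absurd hI.symm (ENNReal.ofReal_pos.mpr hx).ne'
  refine ⟨⨆ a, Φ a, hpos, fun a => ?_, fun l hl => ?_⟩
  · rw [div_le_one hpos]; exact le_ciSup hb a
  · have : l * (⨆ a, Φ a) < ⨆ a, Φ a := by nlinarith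
    obtain ⟨a, ha⟩ := exists_lt_of_lt_ciSup this
    exact ⟨a, by rw [le_div_iff₀ hpos]; exact ha.le⟩

lemma bbl1 {Φ Ψ Θ : ℝ → ℝ} {t r κ x y z : ℝ} (ht0 : 0 < t) (ht1 : t < 1)
    (hr : r ≠ 0) (hr1 : 0 < r + 1) (hκ : 1 / κ = 1 / r + 1)
    (mΦ : Measurable Φ) (mΨ : Measurable Ψ) (mΘ : Measurable Θ)
    (pΦ : ∀ x, 0 ≤ Φ x) (pΨ : ∀ x, 0 ≤ Ψ x) (pΘ : ∀ x, 0 ≤ Θ x)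
    (bΦ : ∀ x, Φ x ≤ 1) (bΨ : ∀ x, Ψ x ≤ 1)
    (h : ∀ x y, 0 < Φ x → 0 < Ψ y → Mn r t (Φ x) (Ψ y) ≤ Θ (t * x + (1 - t) * y))
    (hx : 0 < x) (hy : 0 < y) (hz : 0 ≤ z)
    (hIx : ∫⁻ a, ENNReal.ofReal (Φ a) = ENNReal.ofReal x)
    (hIy : ∫⁻ a, ENNReal.ofReal (Ψ a) = ENNReal.ofReal y)
    (hIz : ∫⁻ a, ENNReal.ofReal (Θ a) = ENNReal.ofReal z) :
    Mn κ t x y ≤ z := by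
  obtain ⟨φ, hφ, hφ1, hφ2⟩ := sup_facts pΦ bΦ hx hIx
  obtain ⟨γ, hγ, hγ1, hγ2⟩ := sup_facts pΨ bΨ hy hIy
  have h1t : 0 < 1 - t := by linarith
  have hM := Mn_pos (p := r) ht0 ht1 hφ hγ
  set M := Mn r t φ γ with hMd
  have key := bbl_norm (Φ := fun a => Φ a / φ) (Ψ := fun a => Ψ a / γ) (Θ := fun a => Θ a / M)
    ht0 ht1 (mΦ.div_const _) (mΨ.div_const _) (mΘ.div_const _)
    (fun a => div_nonneg (pΦ a) hφ.le) (fun a => div_nonneg (pΨ a) hγ.le)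
    (fun a => div_nonneg (pΘ a) hM.le) hφ1 hγ1 hφ2 hγ2 (by
      intro l hl a b ha hb
      rw [le_div_iff₀ hφ] at ha
      rw [le_div_iff₀ hγ] at hb
      rw [le_div_iff₀ hM, hMd, ← Mn_smul hr ht0 ht1 hφ hγ hl]
      have p1 : 0 < l * φ := by positivity
      have p2 : 0 < l * γ := by positivity
      exact (Mn_mono hr ht0 ht1 p1 p2 ha hb).trans (h a b (p1.trans_le ha) (p2.trans_le hb)))
  rw [lint_div mΦ hφ hIx, lint_div mΨ hγ hIy, lint_div mΘ hM hIz,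
    ← ENNReal.ofReal_mul ht0.le, ← ENNReal.ofReal_mul h1t.le,
    ← ENNReal.ofReal_add (by positivity) (by positivity),
    ENNReal.ofReal_le_ofReal_iff (by positivity), le_div_iff₀ hM] at key
  have hh := Mn_holder (p := r) (q := 1) (k := κ) (t := t) (x := φ) (y := γ) (x' := x / φ)
    (y' := y / γ) hr one_ne_zero hr1 (by rw [hκ]; norm_num) ht0 ht1 hφ hγ (by positivity)
    (by positivity)
  rw [mul_div_cancel₀ _ hφ.ne', mul_div_cancel₀ _ hγ.ne'] at hh
  refine hh.trans (le_trans (le_of_eq ?_) key)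
  rw [mul_comm]
  congr 1
  simp [Mn]

lemma cov {F : ℝ → ℝ} {k : ℝ} (hk : k ≠ 0) (mF : Measurable F) {x : ℝ}
    (hI : ∫⁻ a in Set.Ioi 0, ENNReal.ofReal (F a) = ENNReal.ofReal x) :
    ∫⁻ α, ENNReal.ofReal ((Set.Ioi (0:ℝ)).indicator
      (fun α => F (α ^ (1 / k)) * α ^ (1 / k - 1)) α) = ENNReal.ofReal (|k| * x) := by
  have hk1 : 1 / k ≠ 0 := one_div_ne_zero hk
  have himg : (fun α : ℝ => α ^ (1 / k)) '' Set.Ioi 0 = Set.Ioi 0 := by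
    ext a
    constructor
    · rintro ⟨b, hb, rfl⟩
      exact Real.rpow_pos_of_pos hb _
    · intro ha
      refine ⟨a ^ k, Real.rpow_pos_of_pos ha _, ?_⟩
      simp only
      rw [← Real.rpow_mul (le_of_lt ha), mul_one_div_cancel hk, Real.rpow_one]
  have hcv := lintegral_image_eq_lintegral_abs_deriv_mul (s := Set.Ioi (0:ℝ))
    (f := fun α => α ^ (1 / k)) (f' := fun α => 1 / k * α ^ (1 / k - 1)) measurableSet_Ioi
    (fun a ha => (Real.hasDerivAt_rpow_const (Or.inl (ne_of_gt ha))).hasDerivWithinAt)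
    (fun a ha b hb hab => (Real.rpow_left_inj (le_of_lt ha) (le_of_lt hb) hk1).mp hab)
    (fun a => ENNReal.ofReal (F a))
  rw [himg, hI] at hcv
  have e1 : (fun α => ENNReal.ofReal ((Set.Ioi (0:ℝ)).indicator
      (fun α => F (α ^ (1 / k)) * α ^ (1 / k - 1)) α)) = (Set.Ioi (0:ℝ)).indicator
      (fun α => ENNReal.ofReal (F (α ^ (1 / k)) * α ^ (1 / k - 1))) := by
    ext α
    by_cases hα : α ∈ Set.Ioi (0:ℝ) <;> simp [Set.indicator, hα]
  rw [e1, lintegral_indicator measurableSet_Ioi, ENNReal.ofReal_mul (abs_nonneg k), hcv,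
    ← lintegral_const_mul' _ _ ENNReal.ofReal_ne_top]
  apply setLIntegral_congr_fun measurableSet_Ioi
  intro a ha
  have hp := Real.rpow_pos_of_pos ha (1 / k - 1)
  simp only
  rw [← mul_assoc, ← ENNReal.ofReal_mul (abs_nonneg k), ← abs_mul, ← mul_assoc,
    mul_one_div_cancel hk, one_mul, abs_of_pos hp, mul_comm (F _),
    ENNReal.ofReal_mul hp.le]

lemma dist_ineq {F G H : ℝ → ℝ} {t κ' κ'' κ x y z : ℝ} (ht0 : 0 < t) (ht1 : t < 1)
    (hκ'u : κ' ≤ 1) (hκ''u : κ'' ≤ 1)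
    (hκ'0 : κ' ≠ 0) (hκ''0 : κ'' ≠ 0) (hsum : 0 < κ' + κ'') (hκ : 1 / κ = 1 / κ' + 1 / κ'')
    (mF : Measurable F) (mG : Measurable G) (mH : Measurable H)
    (pF : ∀ x, 0 ≤ F x) (pG : ∀ x, 0 ≤ G x) (pH : ∀ x, 0 ≤ H x)
    (bF : ∀ x, F x ≤ 1) (bG : ∀ x, G x ≤ 1)
    (zF : ∀ x, 1 < x → F x = 0) (zG : ∀ x, 1 < x → G x = 0)
    (h : ∀ a b, 0 < a → 0 < b → 0 < F a → 0 < G b → Mn κ'' t (F a) (G b) ≤ H (Mn κ' t a b))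
    (hx : 0 < x) (hy : 0 < y) (hz : 0 ≤ z)
    (hIx : ∫⁻ a in Set.Ioi 0, ENNReal.ofReal (F a) = ENNReal.ofReal x)
    (hIy : ∫⁻ a in Set.Ioi 0, ENNReal.ofReal (G a) = ENNReal.ofReal y)
    (hIz : ∫⁻ a in Set.Ioi 0, ENNReal.ofReal (H a) = ENNReal.ofReal z) :
    Mn κ t x y ≤ z := by
  have h1t : 0 < 1 - t := by linarith
  have meas : ∀ F : ℝ → ℝ, Measurable F → Measurable ((Set.Ioi (0:ℝ)).indicator
      (fun α => F (α ^ (1 / κ')) * α ^ (1 / κ' - 1))) := by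
    intro F mF
    apply Measurable.indicator _ measurableSet_Ioi
    exact (mF.comp (measurable_id.pow_const _)).mul (measurable_id.pow_const _)
  have pos : ∀ F : ℝ → ℝ, (∀ x, 0 ≤ F x) → ∀ a, 0 ≤ ((Set.Ioi (0:ℝ)).indicator
      (fun α => F (α ^ (1 / κ')) * α ^ (1 / κ' - 1))) a := by
    intro F pF a
    apply Set.indicator_nonneg
    intro a ha
    exact mul_nonneg (pF _) (Real.rpow_pos_of_pos ha _).le
  have bd : ∀ F : ℝ → ℝ, (∀ x, 0 ≤ F x) → (∀ x, F x ≤ 1) → (∀ x, 1 < x → F x = 0) →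
      ∀ a, ((Set.Ioi (0:ℝ)).indicator
      (fun α => F (α ^ (1 / κ')) * α ^ (1 / κ' - 1))) a ≤ 1 := by
    intro F pF bF zF a
    apply Set.indicator_apply_le' _ (fun _ => zero_le_one)
    intro ha
    have ha : 0 < a := ha
    by_cases hc : 1 < a ^ (1 / κ')
    · rw [zF _ hc]; simp
    have hle : a ^ (1 / κ' - 1) ≤ 1 := by
      rcases lt_or_gt_of_ne hκ'0 with hk | hk
      · have hk' : 1 / κ' < 0 := one_div_neg.mpr hk
        have : 1 ≤ a := by
          by_contra hcon
          exact hc (Real.one_lt_rpow_of_pos_of_lt_one_of_neg ha (not_le.mp hcon) hk')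
        exact Real.rpow_le_one_of_one_le_of_nonpos this (by linarith)
      · have hk' : 1 ≤ 1 / κ' := by rw [le_div_iff₀ hk]; linarith
        have : a ≤ 1 := by
          by_contra hcon
          exact hc (Real.one_lt_rpow (not_le.mp hcon) (by linarith))
        exact Real.rpow_le_one ha.le this (by linarith)
    exact mul_le_one₀ (bF _) (Real.rpow_pos_of_pos ha _).le hle
  -- parameters
  have hκ0 : κ ≠ 0 := by
    rintro rfl
    rw [div_add_div _ _ hκ'0 hκ''0, div_zero, eq_comm, div_eq_zero_iff] at hκ
    rcases hκ with hκ | hκ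
    · linarith
    · exact mul_ne_zero hκ'0 hκ''0 hκ
  have hκk : κ * (κ' + κ'') = κ' * κ'' := by
    field_simp at hκ
    linarith
  have hκ1 : κ < 1 := by
    by_contra hcon
    have hcon := not_lt.mp hcon
    have h1 : κ' + κ'' ≤ κ' * κ'' := by nlinarith
    have h2 : 0 < κ' * κ'' := by linarith
    rcases lt_or_gt_of_ne hκ'0 with hk | hk
    · nlinarith
    · have : 0 < κ'' := pos_of_mul_pos_right h2 hk.le
      nlinarith
  have h1κ : 0 < 1 - κ := by linarith
  obtain ⟨r, hr⟩ : ∃ r, r = κ / (1 - κ) := ⟨_, rfl⟩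
  have hr0 : r ≠ 0 := by rw [hr]; exact div_ne_zero hκ0 h1κ.ne'
  have hr1 : 0 < r + 1 := by
    have : r + 1 = 1 / (1 - κ) := by rw [hr]; field_simp; ring
    rw [this]; positivity
  have hrκ : 1 / κ = 1 / r + 1 := by rw [hr]; field_simp; ring
  have hol : ∀ u v a b : ℝ, 0 < u → 0 < v → 0 < a → 0 < b →
      Mn r t (u * a ^ (1 / κ' - 1)) (v * b ^ (1 / κ' - 1)) ≤
        Mn κ'' t u v * (t * a + (1 - t) * b) ^ (1 / κ' - 1) := by
    intro u v a b hu hv ha hb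
    by_cases hc : κ' = 1
    · have : r = κ'' := by
        have : 1 / r = 1 / κ'' := by
          rw [hc] at hκ
          linarith
        simpa using this
      rw [hc, this]; simp
    have hcp : κ' < 1 := lt_of_le_of_ne hκ'u hc
    have h1κ' : 0 < 1 - κ' := by linarith
    obtain ⟨c, hcd⟩ : ∃ c, c = 1 / κ' - 1 := ⟨_, rfl⟩
    have hce : c = (1 - κ') / κ' := by rw [hcd]; field_simp
    have hc0 : c ≠ 0 := by rw [hce]; exact div_ne_zero h1κ'.ne' hκ'0
    rw [← hcd]
    have hsum' : 0 < κ'' + 1 / c := by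
      have : κ' ≤ 1 / c := by
        rw [hce, one_div_div, le_div_iff₀ h1κ']
        nlinarith [sq_nonneg κ']
      linarith
    have := Mn_holder (p := κ'') (q := 1 / c) (k := r) (t := t) (x := u) (y := v)
      (x' := a ^ c) (y' := b ^ c) hκ''0 (one_div_ne_zero hc0) hsum'
      (by rw [one_div_one_div, hcd]; linarith) ht0 ht1 hu hv (Real.rpow_pos_of_pos ha _)
      (Real.rpow_pos_of_pos hb _)
    refine this.trans (le_of_eq ?_)
    congr 1
    unfold Mn
    rw [← Real.rpow_mul ha.le, ← Real.rpow_mul hb.le, mul_one_div_cancel hc0, Real.rpow_one,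
      Real.rpow_one, one_div_one_div]
  have hk' : 0 < |κ'| := abs_pos.mpr hκ'0
  have fin := bbl1 (κ := κ) ht0 ht1 hr0 hr1 hrκ (meas F mF) (meas G mG) (meas H mH)
    (pos F pF) (pos G pG) (pos H pH) (bd F pF bF zF) (bd G pG bG zG) (by
      intro a b hFa hGb
      have ha : 0 < a := by
        by_contra hcon
        rw [Set.indicator_of_notMem (show a ∉ Set.Ioi (0:ℝ) from hcon)] at hFa
        exact lt_irrefl _ hFa
      have hb : 0 < b := by
        by_contra hcon
        rw [Set.indicator_of_notMem (show b ∉ Set.Ioi (0:ℝ) from hcon)] at hGb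
        exact lt_irrefl _ hGb
      have hab : 0 < t * a + (1 - t) * b := by positivity
      rw [Set.indicator_of_mem (show a ∈ Set.Ioi 0 from ha)] at hFa ⊢
      rw [Set.indicator_of_mem (show b ∈ Set.Ioi 0 from hb)] at hGb ⊢
      rw [Set.indicator_of_mem (show t * a + (1 - t) * b ∈ Set.Ioi 0 from hab)]
      have hu : 0 < F (a ^ (1 / κ')) := pos_of_mul_pos_left hFa (Real.rpow_pos_of_pos ha _).le
      have hv : 0 < G (b ^ (1 / κ')) := pos_of_mul_pos_left hGb (Real.rpow_pos_of_pos hb _).le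
      refine (hol _ _ a b hu hv ha hb).trans ?_
      gcongr
      refine (h _ _ (Real.rpow_pos_of_pos ha _) (Real.rpow_pos_of_pos hb _) hu hv).trans
        (le_of_eq ?_)
      unfold Mn
      rw [← Real.rpow_mul ha.le, ← Real.rpow_mul hb.le, one_div_mul_cancel hκ'0, Real.rpow_one,
        Real.rpow_one])
    (mul_pos hk' hx) (mul_pos hk' hy) (mul_nonneg hk'.le hz) (cov hκ'0 mF hIx)
    (cov hκ'0 mG hIy) (cov hκ'0 mH hIz)
  rw [Mn_smul hκ0 ht0 ht1 hx hy hk'] at fin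
  exact le_of_mul_le_mul_left fin hk'

/-- The distribution integral of the sections of the preimage of a measurable set. -/
lemma section_layer {n : ℕ} (μ ν : Measure (EuclideanSpace ℝ (Fin n)))
    [IsProbabilityMeasure μ] [IsProbabilityMeasure ν]
    {A : Set (EuclideanSpace ℝ (Fin n))} (hA : MeasurableSet A) :
    (Measurable fun y => (μ ((fun x => x + y) ⁻¹' A)).toReal) ∧
    ∫⁻ a in Set.Ioi 0, ENNReal.ofReal
      (ν {y | a ≤ (μ ((fun x => x + y) ⁻¹' A)).toReal}).toReal =
    ENNReal.ofReal (Measure.map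
        (fun p : EuclideanSpace ℝ (Fin n) × EuclideanSpace ℝ (Fin n) => p.1 + p.2)
        (μ.prod ν) A).toReal := by
  have mS : MeasurableSet ((fun p : EuclideanSpace ℝ (Fin n) × EuclideanSpace ℝ (Fin n) =>
      p.1 + p.2) ⁻¹' A) := (measurable_fst.add measurable_snd) hA
  have m1 : Measurable fun y => μ ((fun x => x + y) ⁻¹' A) :=
    measurable_measure_prodMk_right (μ := μ) mS
  refine ⟨m1.ennreal_toReal, ?_⟩
  have mS2 : Measurable (fun p : EuclideanSpace ℝ (Fin n) × EuclideanSpace ℝ (Fin n) =>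
      p.1 + p.2) := measurable_fst.add measurable_snd
  rw [Measure.map_apply mS2 hA,
    ENNReal.ofReal_toReal (measure_ne_top _ _), Measure.prod_apply_symm mS]
  have := lintegral_eq_lintegral_meas_le ν (f := fun y => (μ ((fun x => x + y) ⁻¹' A)).toReal)
    (Filter.Eventually.of_forall fun _ => ENNReal.toReal_nonneg) m1.ennreal_toReal.aemeasurable
  simp only [ENNReal.ofReal_toReal (measure_ne_top _ _)] at this ⊢
  exact this.symm

/-- Convolution of a κ'-concave and a κ''-concave probability measure is κ-concave,
where 1/κ = 1/κ' + 1/κ'' (Proposition 2.2). -/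
theorem statement3 (n : ℕ) (μ ν : Measure (EuclideanSpace ℝ (Fin n)))
    [IsProbabilityMeasure μ] [IsProbabilityMeasure ν]
    (κ' κ'' κ : ℝ)
    (hκ'l : -1 ≤ κ') (hκ'u : κ' ≤ 1) (hκ''l : -1 ≤ κ'') (hκ''u : κ'' ≤ 1)
    (hκ'0 : κ' ≠ 0) (hκ''0 : κ'' ≠ 0)
    (hsum : 0 < κ' + κ'')
    (hκ : 1 / κ = 1 / κ' + 1 / κ'')
    (h₁ : KConcave μ κ') (h₂ : KConcave ν κ'') :
    KConcave
      (Measure.map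
        (fun p : EuclideanSpace ℝ (Fin n) × EuclideanSpace ℝ (Fin n) => p.1 + p.2)
        (μ.prod ν)) κ := by
  intro A B hA hB hA0 hB0 t ht0 ht1
  set m := Measure.map
        (fun p : EuclideanSpace ℝ (Fin n) × EuclideanSpace ℝ (Fin n) => p.1 + p.2)
        (μ.prod ν) with hm
  haveI : IsProbabilityMeasure m :=
    Measure.isProbabilityMeasure_map (measurable_fst.add measurable_snd).aemeasurable
  obtain ⟨C, hCs, hC, hCm⟩ := exists_measurable_superset m (t • A + (1 - t) • B)
  rw [← hCm]
  obtain ⟨mf, If⟩ := section_layer μ ν hA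
  obtain ⟨mg, Ig⟩ := section_layer μ ν hB
  obtain ⟨mh, Ih⟩ := section_layer μ ν hC
  rw [← hm] at If Ig Ih
  set f := fun y => (μ ((fun x => x + y) ⁻¹' A)).toReal with hf
  set g := fun y => (μ ((fun x => x + y) ⁻¹' B)).toReal with hg
  set h := fun y => (μ ((fun x => x + y) ⁻¹' C)).toReal with hh
  have hfgh : ∀ y z, 0 < f y → 0 < g z → Mn κ' t (f y) (g z) ≤ h (t • y + (1 - t) • z) := by
    intro y z hy hz
    refine (h₁ _ _ ((measurable_add_const y) hA) ((measurable_add_const z) hB)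
      (ENNReal.toReal_pos_iff.mp hy).1 (ENNReal.toReal_pos_iff.mp hz).1 t ht0 ht1).trans ?_
    apply ENNReal.toReal_mono (measure_ne_top _ _)
    apply measure_mono
    rintro _ ⟨_, ⟨a, ha, rfl⟩, _, ⟨b, hb, rfl⟩, rfl⟩
    apply hCs
    refine ⟨t • (a + y), ⟨_, ha, rfl⟩, (1 - t) • (b + z), ⟨_, hb, rfl⟩, ?_⟩
    simp only [smul_add]
    abel
  have meas : ∀ f : EuclideanSpace ℝ (Fin n) → ℝ, Measurable fun a : ℝ => (ν {y | a ≤ f y}).toReal := by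
    intro f
    apply Antitone.measurable
    intro a b hab
    exact ENNReal.toReal_mono (measure_ne_top _ _) (measure_mono fun x hx => le_trans hab hx)
  have le1 : ∀ (ρ : Measure (EuclideanSpace ℝ (Fin n))) [IsProbabilityMeasure ρ] S,
      (ρ S).toReal ≤ 1 := by
    intro ρ _ S
    exact ENNReal.toReal_le_of_le_ofReal zero_le_one (by simpa using prob_le_one)
  have zero : ∀ f : EuclideanSpace ℝ (Fin n) → ℝ, (∀ y, f y ≤ 1) → ∀ a, 1 < a →
      (ν {y | a ≤ f y}).toReal = 0 := by
    intro f hf a ha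
    have : {y | a ≤ f y} = ∅ := by
      ext y; simp; linarith [hf y]
    rw [this]; simp
  refine dist_ineq (F := fun a => (ν {y | a ≤ f y}).toReal) (G := fun a => (ν {y | a ≤ g y}).toReal)
    (H := fun a => (ν {y | a ≤ h y}).toReal) ht0 ht1 hκ'u hκ''u hκ'0 hκ''0 hsum hκ (meas f) (meas g)
    (meas h) (fun _ => ENNReal.toReal_nonneg) (fun _ => ENNReal.toReal_nonneg)
    (fun _ => ENNReal.toReal_nonneg) (fun _ => le1 _ _) (fun _ => le1 _ _)
    (zero f fun _ => le1 _ _) (zero g fun _ => le1 _ _) ?_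
    (ENNReal.toReal_pos hA0.ne' (measure_ne_top _ _))
    (ENNReal.toReal_pos hB0.ne' (measure_ne_top _ _)) ENNReal.toReal_nonneg If Ig Ih
  intro a b ha hb hFa hGb
  refine (h₂ _ _ (measurableSet_le measurable_const mf) (measurableSet_le measurable_const mg)
    (ENNReal.toReal_pos_iff.mp hFa).1 (ENNReal.toReal_pos_iff.mp hGb).1 t ht0 ht1).trans ?_
  apply ENNReal.toReal_mono (measure_ne_top _ _)
  apply measure_mono
  rintro _ ⟨_, ⟨y, hy, rfl⟩, _, ⟨z, hz, rfl⟩, rfl⟩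
  have hy : a ≤ f y := hy
  have hz : b ≤ g z := hz
  exact (Mn_mono hκ'0 ht0 ht1 ha hb hy hz).trans
    (hfgh y z (ha.trans_le hy) (hb.trans_le hz))
end

section
/- Fix β₀ > 1 and set c₀ = exp(−32β₀/(β₀ − 1)). There exist constants C′(β₀) > 0 and C″(β₀) > 0 depending only on β₀ with the following property. Let X be a random vector in ℝⁿ whose density f is of convex form with parameter β, where β ≥ n+1 and β ≥ β₀·n, and let K_f = {x : f(x) ≥ c₀ⁿ·‖f‖} be the essential support of the distribution of X. Then C′(β₀)·|K_f|^{2/n} ≤ H(X) ≤ C″(β₀)·|K_f|^{2/n}. -/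
open MeasureTheory ProbabilityTheory Real
open scoped Pointwise ENNReal

structure CF {n : ℕ} (f : EuclideanSpace ℝ (Fin n) → ℝ) (β : ℝ)
    (S : Set (EuclideanSpace ℝ (Fin n))) (V : EuclideanSpace ℝ (Fin n) → ℝ) : Prop where
  hS : IsOpen S
  hV : ConvexOn ℝ S V
  hpos : ∀ x ∈ S, 0 < V x
  hf : ∀ x ∈ S, f x = V x ^ (-β)
  hf0 : ∀ x ∉ S, f x = 0
  hint : ∫ x, f x = 1

/-- sublevel sets of `V` in `S` -/
def Lev {n : ℕ} (S : Set (EuclideanSpace ℝ (Fin n))) (V : EuclideanSpace ℝ (Fin n) → ℝ)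
    (c : ℝ) : Set (EuclideanSpace ℝ (Fin n)) := {x | x ∈ S ∧ V x ≤ c}

namespace CF

variable {n : ℕ} {f : EuclideanSpace ℝ (Fin n) → ℝ} {β : ℝ}
    {S : Set (EuclideanSpace ℝ (Fin n))} {V : EuclideanSpace ℝ (Fin n) → ℝ}

lemma nonneg (h : CF f β S V) (x) : 0 ≤ f x := by
  by_cases hx : x ∈ S
  · rw [h.hf x hx]; exact (Real.rpow_pos_of_pos (h.hpos x hx) _).le
  · rw [h.hf0 x hx]

lemma pos (h : CF f β S V) {x} (hx : x ∈ S) : 0 < f x := by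
  rw [h.hf x hx]; exact Real.rpow_pos_of_pos (h.hpos x hx) _

lemma contV (h : CF f β S V) : ContinuousOn V S := ConvexOn.continuousOn h.hS h.hV

lemma contf (h : CF f β S V) : ContinuousOn f S := by
  have : ContinuousOn (fun x => V x ^ (-β)) S :=
    h.contV.rpow_const (fun x hx => Or.inl (h.hpos x hx).ne')
  exact this.congr (fun x hx => h.hf x hx)

lemma meas (h : CF f β S V) : Measurable f := by
  classical
  have h1 : Measurable (S.piecewise f (fun _ => (0:ℝ))) :=
    ContinuousOn.measurable_piecewise h.contf continuousOn_const h.hS.measurableSet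
  have : S.piecewise f (fun _ => (0:ℝ)) = f := by
    ext x
    by_cases hx : x ∈ S
    · simp [hx]
    · simp [hx, h.hf0 x hx]
  rwa [this] at h1

lemma measLev (h : CF f β S V) (c : ℝ) : MeasurableSet (Lev S V c) := by
  have h1 : IsOpen (S ∩ V ⁻¹' Set.Ioi c) := h.contV.isOpen_inter_preimage h.hS isOpen_Ioi
  have : Lev S V c = S \ (S ∩ V ⁻¹' Set.Ioi c) := by
    ext x; simp only [Lev, Set.mem_ofPred_eq, Set.mem_sdiff, Set.mem_inter_iff, Set.mem_preimage, Set.mem_Ioi]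
    constructor
    · rintro ⟨a, b⟩; exact ⟨a, fun q => absurd q.2 (not_lt.mpr b)⟩
    · rintro ⟨a, b⟩; exact ⟨a, not_lt.mp fun q => b ⟨a, q⟩⟩
  rw [this]
  exact h.hS.measurableSet.diff h1.measurableSet

lemma integrable (h : CF f β S V) : Integrable f := integrable_of_integral_eq_one h.hint

lemma lint (h : CF f β S V) : ∫⁻ x, ENNReal.ofReal (f x) = 1 := by
  rw [← ofReal_integral_eq_lintegral_ofReal h.integrable (Filter.Eventually.of_forall h.nonneg),
    h.hint, ENNReal.ofReal_one]

lemma nonempty (h : CF f β S V) : S.Nonempty := by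
  by_contra hne
  rw [Set.not_nonempty_iff_eq_empty] at hne
  have : f = fun _ => 0 := by
    ext x; exact h.hf0 x (by simp [hne])
  have h1 := h.hint
  rw [this] at h1
  simp at h1

lemma scale (h : CF f β S V) {x₀} (hx₀ : x₀ ∈ S) {s t : ℝ} (hs : 1 ≤ s) :
    volume (Lev S V (V x₀ + s * t)) ≤ ENNReal.ofReal (s ^ n) * volume (Lev S V (V x₀ + t)) := by
  have hs0 : 0 < s := by linarith
  have h1 : Lev S V (V x₀ + s * t) ⊆ AffineMap.homothety x₀ s '' Lev S V (V x₀ + t) := by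
    rintro x ⟨hx, hVx⟩
    have e1 : (1 - s⁻¹) + s⁻¹ = 1 := by ring
    have hi : 0 ≤ 1 - s⁻¹ := by
      have := inv_le_one_of_one_le₀ hs
      linarith
    have hi' : 0 ≤ s⁻¹ := by positivity
    refine ⟨(1 - s⁻¹) • x₀ + s⁻¹ • x, ⟨h.hV.1 hx₀ hx hi hi' e1, ?_⟩, ?_⟩
    · have := h.hV.2 hx₀ hx hi hi' e1
      simp only [smul_eq_mul] at this
      have h2 : s⁻¹ * V x ≤ s⁻¹ * (V x₀ + s * t) := mul_le_mul_of_nonneg_left hVx hi'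
      have h3 : s⁻¹ * (V x₀ + s * t) = s⁻¹ * V x₀ + t := by field_simp
      linarith
    · simp only [AffineMap.homothety_apply, vsub_eq_sub, vadd_eq_add]
      have : (1 - s⁻¹) • x₀ + s⁻¹ • x - x₀ = s⁻¹ • (x - x₀) := by module
      rw [this, smul_smul, mul_inv_cancel₀ hs0.ne']
      simp
  refine (measure_mono h1).trans ?_
  rw [Measure.addHaar_image_homothety, finrank_euclideanSpace_fin, abs_of_pos (by positivity)]

lemma markov (h : CF f β S V) (hβ : 0 < β) {c : ℝ} (hc : 0 < c) :
    volume (Lev S V c) ≤ ENNReal.ofReal (c ^ β) := by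
  have hcp : 0 < c ^ (-β) := Real.rpow_pos_of_pos hc _
  have h1 : Lev S V c ⊆ {x | ENNReal.ofReal (c ^ (-β)) ≤ ENNReal.ofReal (f x)} := by
    rintro x ⟨hx, hVx⟩
    apply ENNReal.ofReal_le_ofReal
    rw [h.hf x hx]
    exact Real.rpow_le_rpow_of_nonpos (h.hpos x hx) hVx (by linarith)
  refine (measure_mono h1).trans ?_
  refine (meas_ge_le_lintegral_div h.meas.ennreal_ofReal.aemeasurable (by simpa using hcp)
    ENNReal.ofReal_ne_top).trans ?_
  rw [h.lint, one_div, ← ENNReal.ofReal_inv_of_pos hcp, Real.rpow_neg hc.le, inv_inv]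

lemma levPos (h : CF f β S V) {a} (ha : a ∈ S) {c : ℝ} (hc : V a < c) :
    0 < volume (Lev S V c) := by
  have h1 : IsOpen (S ∩ V ⁻¹' Set.Iio c) := h.contV.isOpen_inter_preimage h.hS isOpen_Iio
  refine (h1.measure_pos volume ⟨a, ha, hc⟩).trans_le (measure_mono ?_)
  rintro x ⟨hx, hx'⟩
  exact ⟨hx, le_of_lt hx'⟩

lemma lower (h : CF f β S V) (hβ : (n : ℝ) < β) : ∃ m > 0, ∀ x ∈ S, m ≤ V x := by
  obtain ⟨a, ha⟩ := h.nonempty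
  have hβ0 : 0 < β := lt_of_le_of_lt (Nat.cast_nonneg n) hβ
  set r := V a + 1 with hr
  have hr0 : 0 < r := by have := h.hpos a ha; linarith
  have hδ := h.levPos ha (show V a < r by linarith)
  have hfin : volume (Lev S V r) ≠ ⊤ :=
    ne_top_of_le_ne_top ENNReal.ofReal_ne_top (h.markov hβ0 hr0)
  set δ := (volume (Lev S V r)).toReal with hδd
  have hδ0 : 0 < δ := ENNReal.toReal_pos hδ.ne' hfin
  have hδe : volume (Lev S V r) = ENNReal.ofReal δ := (ENNReal.ofReal_toReal hfin).symm
  have hk : 0 < r ^ n * 2 ^ β := by positivity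
  refine ⟨min (r / 2) ((δ / (r ^ n * 2 ^ β)) ^ (β - n)⁻¹), by positivity, fun x hx => ?_⟩
  by_cases hvr : r / 2 ≤ V x
  · exact (min_le_left _ _).trans hvr
  push Not at hvr
  refine (min_le_right _ _).trans ?_
  have hv := h.hpos x hx
  set v := V x with hvd
  have hs : 1 ≤ (r - v) / v := by rw [le_div_iff₀ hv]; linarith
  have h1 := h.scale (t := v) hx hs
  have e : V x + (r - v) / v * v = r := by field_simp; rw [← hvd]; ring
  rw [e, hδe] at h1
  have h2 := h1.trans (mul_le_mul_right (h.markov hβ0 (show 0 < V x + v by linarith)) _)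
  rw [← ENNReal.ofReal_mul (by positivity)] at h2
  have h3 := (ENNReal.ofReal_le_ofReal_iff (by positivity)).mp h2
  rw [Real.rpow_inv_le_iff_of_pos (by positivity) hv.le (by linarith), div_le_iff₀ hk]
  refine h3.trans ?_
  have e2 : V x + v = 2 * v := by rw [← hvd]; ring
  rw [e2, Real.mul_rpow (by norm_num) hv.le, Real.rpow_sub hv, Real.rpow_natCast]
  have : ((r - v) / v) ^ n ≤ (r / v) ^ n := by
    apply pow_le_pow_left₀ (by linarith)
    gcongr
    linarith
  calc ((r - v) / v) ^ n * (2 ^ β * v ^ β) ≤ (r / v) ^ n * (2 ^ β * v ^ β) := by gcongr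
    _ = _ := by rw [div_pow]; field_simp

/-- the supremum -/
lemma sup (h : CF f β S V) (hβ : (n : ℝ) < β) : 0 < densSup f ∧ (∀ x, f x ≤ densSup f) ∧
    ∀ c < densSup f, ∃ x ∈ S, c < f x := by
  obtain ⟨m, hm, hmV⟩ := h.lower hβ
  have hβ0 : 0 < β := lt_of_le_of_lt (Nat.cast_nonneg n) hβ
  have hle : ∀ c, (∀ x, f x ≤ c) →
      essSup (fun x => ENNReal.ofReal (f x)) volume ≤ ENNReal.ofReal c := fun c hc =>
    essSup_le_of_ae_le _ (Filter.Eventually.of_forall fun x => ENNReal.ofReal_le_ofReal (hc x))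
  have hfin : essSup (fun x => ENNReal.ofReal (f x)) volume ≠ ⊤ := by
    refine ne_top_of_le_ne_top ENNReal.ofReal_ne_top (hle (m ^ (-β)) fun x => ?_)
    by_cases hx : x ∈ S
    · rw [h.hf x hx]
      exact Real.rpow_le_rpow_of_nonpos hm (hmV x hx) (by linarith)
    · rw [h.hf0 x hx]; positivity
  have hM0 : 0 ≤ densSup f := ENNReal.toReal_nonneg
  have hle' : ∀ x, f x ≤ densSup f := by
    intro x
    by_contra hlt
    push Not at hlt
    have hx : x ∈ S := by
      by_contra hx
      rw [h.hf0 x hx] at hlt; linarith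
    have ho : IsOpen (S ∩ f ⁻¹' Set.Ioi (densSup f)) :=
      h.contf.isOpen_inter_preimage h.hS isOpen_Ioi
    have hp := ho.measure_pos volume ⟨x, hx, hlt⟩
    have hae := ENNReal.ae_le_essSup (μ := volume) (fun x => ENNReal.ofReal (f x))
    rw [ae_iff] at hae
    have : volume (S ∩ f ⁻¹' Set.Ioi (densSup f)) ≤ 0 := by
      rw [← hae]
      apply measure_mono
      rintro y ⟨hy, hy'⟩ hcon
      have := ENNReal.toReal_mono hfin hcon
      rw [ENNReal.toReal_ofReal (h.nonneg y)] at this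
      exact absurd hy' (not_lt.mpr this)
    exact absurd hp (not_lt.mpr this)
  have hMpos : 0 < densSup f := by
    obtain ⟨a, ha⟩ := h.nonempty
    exact (h.pos ha).trans_le (hle' a)
  refine ⟨hMpos, hle', fun c hc => ?_⟩
  by_contra hcon
  push Not at hcon
  have h1 : ∀ x, f x ≤ max c 0 := by
    intro x
    by_cases hx : x ∈ S
    · exact (hcon x hx).trans (le_max_left _ _)
    · rw [h.hf0 x hx]; exact le_max_right _ _
  have h2 := ENNReal.toReal_mono ENNReal.ofReal_ne_top (hle _ h1)
  rw [ENNReal.toReal_ofReal (le_max_right _ _)] at h2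
  have h3 : densSup f ≤ max c 0 := h2
  exact absurd (max_lt hc hMpos) (not_lt.mpr h3)

lemma numeric {β₀ β y : ℝ} {n : ℕ} (hβ₀ : 1 < β₀) (hn : 1 ≤ n) (hβ : β₀ * n ≤ β) (hy : 0 < y) :
    (y / β₀) ^ (β₀ * n) ≤ (1 + y * (n / β)) ^ β := by
  have hn' : (0:ℝ) < n := by exact_mod_cast hn
  have hb : 0 < β₀ * n := by positivity
  have hβ0 : 0 < β := by linarith
  have h1 : 1 ≤ β / (β₀ * n) := by rw [le_div_iff₀ hb]; linarith
  have h0 : 0 ≤ y * (n / β) := by positivity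
  have h2 := one_add_mul_self_le_rpow_one_add (s := y * (n / β)) (by linarith) h1
  have h3 : y / β₀ ≤ (1 + y * (n / β)) ^ (β / (β₀ * n)) := by
    refine le_trans ?_ h2
    have : β / (β₀ * n) * (y * (n / β)) = y / β₀ := by field_simp
    rw [this]; linarith
  calc (y / β₀) ^ (β₀ * n) ≤ ((1 + y * (n / β)) ^ (β / (β₀ * n))) ^ (β₀ * n) :=
        Real.rpow_le_rpow (by positivity) h3 hb.le
    _ = _ := by
        rw [← Real.rpow_mul (by positivity)]
        congr 1
        field_simp

/-- the geometric constant -/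
noncomputable def Acst (β₀ γ : ℝ) : ℝ := 1 + 2 * β₀ ^ γ * (1 - 2 ^ (1 - γ))⁻¹

lemma series {β₀ γ : ℝ} {n : ℕ} (hβ₀ : 1 < β₀) (hγ : 1 < γ) (hn : 1 ≤ n) :
    1 + ∑' j : ℕ, ENNReal.ofReal (((β₀ / 2 ^ j) ^ γ) ^ n) * ENNReal.ofReal ((2 ^ (j + 1)) ^ n)
      ≤ ENNReal.ofReal (Acst β₀ γ ^ n) := by
  set ρ : ℝ := 2 ^ (1 - γ) with hρ
  have hρ0 : 0 < ρ := by positivity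
  have hρ1 : ρ < 1 := Real.rpow_lt_one_of_one_lt_of_neg (by norm_num) (by linarith)
  set b : ℝ := 2 * β₀ ^ γ with hb
  have hb0 : 0 < b := by positivity
  have hterm : ∀ j : ℕ, ENNReal.ofReal (((β₀ / 2 ^ j) ^ γ) ^ n) * ENNReal.ofReal ((2 ^ (j + 1)) ^ n)
      ≤ ENNReal.ofReal (b ^ n * ρ ^ j) := by
    intro j
    rw [← ENNReal.ofReal_mul (by positivity)]
    apply ENNReal.ofReal_le_ofReal
    have e : (β₀ / 2 ^ j) ^ γ * 2 ^ (j + 1) = b * ρ ^ j := by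
      rw [Real.div_rpow (by positivity) (by positivity), hρ, Real.rpow_sub (by norm_num),
        Real.rpow_one, div_pow, hb, ← Real.rpow_natCast 2 j, ← Real.rpow_mul (by norm_num),
        ← Real.rpow_mul_natCast (by norm_num), mul_comm (j:ℝ) γ, pow_succ, ← Real.rpow_natCast 2 j]
      ring
    rw [← mul_pow, e, mul_pow]
    gcongr
    exact pow_le_of_le_one (by positivity) (pow_le_one₀ hρ0.le hρ1.le) (by omega)
  have hsum := (hasSum_geometric_of_lt_one hρ0.le hρ1).mul_left (b ^ n)
  have h1 : ∑' j : ℕ, ENNReal.ofReal (((β₀ / 2 ^ j) ^ γ) ^ n) * ENNReal.ofReal ((2 ^ (j + 1)) ^ n)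
      ≤ ENNReal.ofReal (b ^ n * (1 - ρ)⁻¹) := by
    refine (ENNReal.tsum_le_tsum hterm).trans ?_
    rw [← ENNReal.ofReal_tsum_of_nonneg (fun j => by positivity) hsum.summable, hsum.tsum_eq]
  refine (add_le_add le_rfl h1).trans ?_
  have hR : 1 ≤ (1 - ρ)⁻¹ := by
    apply (one_le_inv₀ (by linarith)).mpr; linarith
  rw [← ENNReal.ofReal_one, ← ENNReal.ofReal_add (by norm_num) (by positivity)]
  apply ENNReal.ofReal_le_ofReal
  have : Acst β₀ γ = 1 + b * (1 - ρ)⁻¹ := rfl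
  rw [this]
  have hx : 0 ≤ b * (1 - ρ)⁻¹ := by positivity
  calc 1 + b ^ n * (1 - ρ)⁻¹ ≤ 1 ^ n + b ^ n * (1 - ρ)⁻¹ ^ n := by
        rw [one_pow]
        gcongr
        exact le_self_pow₀ hR (by omega)
    _ = 1 ^ n + (b * (1 - ρ)⁻¹) ^ n := by rw [mul_pow b]
    _ ≤ _ := pow_add_pow_le zero_le_one hx (by omega)

lemma core (h : CF f β S V) {β₀ α : ℝ} (hβ₀ : 1 < β₀) (hn : 1 ≤ n) (hβ : β₀ * n ≤ β)
    (hα0 : 0 < α) (hα : 1 < α * β₀) :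
    ∃ L : ℝ, 0 ≤ L ∧ L * densSup f ≤ Real.exp (2 * n) ∧
      ENNReal.ofReal L ≤ volume {x | Real.exp (-(2 * n)) * densSup f ≤ f x} ∧
      ∫⁻ x, ENNReal.ofReal ((f x / densSup f) ^ α) ≤
        ENNReal.ofReal (L * Acst β₀ (α * β₀) ^ n) := by
  have hn' : (0:ℝ) < n := by exact_mod_cast hn
  have hβn : (n:ℝ) < β := by nlinarith
  have hβ0 : 0 < β := by linarith
  obtain ⟨hM, hle, hex⟩ := h.sup hβn
  set M := densSup f with hMd
  set m : ℝ := M ^ (-β⁻¹) with hm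
  have hm0 : 0 < m := Real.rpow_pos_of_pos hM _
  have hmβ : m ^ (-β) = M := by
    rw [hm, ← Real.rpow_mul hM.le]; field_simp; simp
  have hu : ∀ x ∈ S, f x / M = (V x / m) ^ (-β) := by
    intro x hx
    rw [Real.div_rpow (h.hpos x hx).le hm0.le, hmβ, h.hf x hx]
  have hmV : ∀ x ∈ S, m ≤ V x := by
    intro x hx
    by_contra hlt
    push Not at hlt
    have h1 := hle x
    rw [h.hf x hx, ← hmβ] at h1
    exact absurd (Real.rpow_lt_rpow_of_neg (h.hpos x hx) hlt (by linarith)) (not_lt.mpr h1)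
  set t : ℝ := n / β with ht
  have ht0 : 0 < t := by positivity
  -- near-minimal point
  obtain ⟨x₀, hx₀, hVx₀⟩ : ∃ x₀ ∈ S, V x₀ ≤ m * (1 + t) := by
    have hlt : (m * (1 + t)) ^ (-β) < M := by
      rw [← hmβ]
      exact Real.rpow_lt_rpow_of_neg hm0 (by nlinarith) (by linarith)
    obtain ⟨x, hx, hfx⟩ := hex _ hlt
    refine ⟨x, hx, ?_⟩
    by_contra hc
    push Not at hc
    rw [h.hf x hx] at hfx
    have := Real.rpow_le_rpow_of_nonpos (show 0 < m * (1 + t) by positivity) hc.le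
      (show -β ≤ 0 by linarith)
    linarith
  have hexp : (1 + 2 * t) ^ β ≤ Real.exp (2 * n) := by
    have h1 : 1 + 2 * t ≤ Real.exp (2 * t) := by linarith [Real.add_one_le_exp (2 * t)]
    calc (1 + 2 * t) ^ β ≤ (Real.exp (2 * t)) ^ β := Real.rpow_le_rpow (by positivity) h1 hβ0.le
      _ = _ := by rw [← Real.exp_mul, ht]; congr 1; field_simp
  let Lk : ℕ → Set (EuclideanSpace ℝ (Fin n)) := fun k => Lev S V (V x₀ + 2 ^ k * (m * t))
  have hL0 : Lk 0 ⊆ Lev S V (m * (1 + 2 * t)) := by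
    rintro x ⟨hx, hVx⟩
    refine ⟨hx, hVx.trans ?_⟩
    simp only [pow_zero]; nlinarith
  have hmk := (measure_mono hL0).trans (h.markov hβ0 (show 0 < m * (1 + 2 * t) by positivity))
  have hfin : volume (Lk 0) ≠ ⊤ := ne_top_of_le_ne_top ENNReal.ofReal_ne_top hmk
  have hLe : ENNReal.ofReal (volume (Lk 0)).toReal = volume (Lk 0) := ENNReal.ofReal_toReal hfin
  refine ⟨(volume (Lk 0)).toReal, ENNReal.toReal_nonneg, ?_, ?_, ?_⟩
  · have h1 := ENNReal.toReal_mono ENNReal.ofReal_ne_top hmk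
    rw [ENNReal.toReal_ofReal (by positivity), Real.mul_rpow hm0.le (by positivity)] at h1
    have h2 : m ^ β * M = 1 := by
      rw [← hmβ, ← Real.rpow_add hm0]; simp
    calc (volume (Lk 0)).toReal * M ≤ (m ^ β * (1 + 2 * t) ^ β) * M := by gcongr
      _ = (1 + 2 * t) ^ β := by rw [mul_right_comm, h2, one_mul]
      _ ≤ _ := hexp
  · rw [hLe]
    apply measure_mono
    intro x hx
    obtain ⟨hx, hVx⟩ := hL0 hx
    show Real.exp (-(2 * n)) * M ≤ f x
    rw [← le_div_iff₀ hM, hu x hx, Real.exp_neg]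
    have h1 : V x / m ≤ 1 + 2 * t := by rw [div_le_iff₀ hm0]; linarith
    have h2 : 0 < V x / m := div_pos (h.hpos x hx) hm0
    calc (Real.exp (2 * n))⁻¹ ≤ ((1 + 2 * t) ^ β)⁻¹ := by gcongr
      _ = (1 + 2 * t) ^ (-β) := (Real.rpow_neg (by positivity) _).symm
      _ ≤ _ := Real.rpow_le_rpow_of_nonpos h2 h1 (by linarith)
  · let g : ℕ → EuclideanSpace ℝ (Fin n) → ENNReal := fun j =>
      (Lk (j + 1)).indicator fun _ => ENNReal.ofReal (((β₀ / 2 ^ j) ^ (α * β₀)) ^ n)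
    have hpt : ∀ x, ENNReal.ofReal ((f x / M) ^ α) ≤
        (Lk 0).indicator (fun _ => 1) x + ∑' j, g j x := by
      intro x
      by_cases hx : x ∈ S
      swap
      · rw [h.hf0 x hx, zero_div, Real.zero_rpow hα0.ne']; simp
      have hexk : ∃ k, x ∈ Lk k := by
        obtain ⟨k, hk⟩ := pow_unbounded_of_one_lt (V x / (m * t)) (one_lt_two)
        refine ⟨k, hx, ?_⟩
        rw [div_lt_iff₀ (by positivity)] at hk
        have := h.hpos x₀ hx₀
        linarith
      classical
      have hk := Nat.find_spec hexk
      have hmin := fun j => Nat.find_min (H := hexk) (m := j)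
      rcases hkk : Nat.find hexk with _ | j
      · rw [hkk] at hk
        rw [Set.indicator_of_mem hk]
        refine le_trans ?_ (le_add_of_nonneg_right zero_le)
        rw [← ENNReal.ofReal_one]
        apply ENNReal.ofReal_le_ofReal
        exact Real.rpow_le_one (div_nonneg (h.nonneg x) hM.le) ((div_le_one hM).mpr (hle x)) hα0.le
      · rw [hkk] at hk
        have hj : x ∉ Lk j := hmin j (by omega)
        have hVx : m * (1 + 2 ^ j * t) < V x := by
          by_contra hc
          push Not at hc
          apply hj
          refine ⟨hx, hc.trans ?_⟩
          have := hmV x₀ hx₀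
          nlinarith
        refine le_trans ?_ (le_add_of_nonneg_left zero_le)
        refine le_trans ?_ (ENNReal.le_tsum j)
        show _ ≤ (Lk (j + 1)).indicator _ x
        rw [Set.indicator_of_mem hk]
        apply ENNReal.ofReal_le_ofReal
        rw [hu x hx]
        have h1 : 1 + 2 ^ j * t ≤ V x / m := by rw [le_div_iff₀ hm0]; linarith
        have h3 := numeric (y := 2 ^ j) hβ₀ hn hβ (by positivity)
        have h4 : 0 < (2 ^ j / β₀ : ℝ) := by positivity
        have h5 : (V x / m) ^ (-β) ≤ (2 ^ j / β₀) ^ (-(β₀ * n)) := by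
          calc (V x / m) ^ (-β) ≤ (1 + 2 ^ j * t) ^ (-β) :=
                Real.rpow_le_rpow_of_nonpos (by positivity) h1 (by linarith)
            _ = ((1 + 2 ^ j * t) ^ β)⁻¹ := Real.rpow_neg (by positivity) _
            _ ≤ ((2 ^ j / β₀) ^ (β₀ * n))⁻¹ := by
                gcongr
            _ = _ := (Real.rpow_neg h4.le _).symm
        calc ((V x / m) ^ (-β)) ^ α ≤ ((2 ^ j / β₀) ^ (-(β₀ * n))) ^ α := by
              apply Real.rpow_le_rpow _ h5 hα0.le
              exact Real.rpow_nonneg (div_nonneg (h.hpos x hx).le hm0.le) _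
          _ = _ := by
              rw [← Real.rpow_mul h4.le, ← inv_div β₀, Real.inv_rpow (by positivity),
                ← Real.rpow_neg (by positivity), ← Real.rpow_mul_natCast (by positivity)]
              congr 1; ring
    calc ∫⁻ x, ENNReal.ofReal ((f x / M) ^ α)
        ≤ ∫⁻ x, ((Lk 0).indicator (fun _ => 1) x + ∑' j, g j x) := lintegral_mono hpt
      _ = volume (Lk 0) + ∑' j, ENNReal.ofReal (((β₀ / 2 ^ j) ^ (α * β₀)) ^ n)
            * volume (Lk (j + 1)) := by
          rw [lintegral_add_left (measurable_const.indicator (h.measLev _)),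
            lintegral_tsum (fun j => (measurable_const.indicator (h.measLev _)).aemeasurable),
            lintegral_indicator_const (h.measLev _), one_mul]
          congr 2
          ext j
          exact lintegral_indicator_const (h.measLev _) _
      _ ≤ volume (Lk 0) + ∑' j, (ENNReal.ofReal (((β₀ / 2 ^ j) ^ (α * β₀)) ^ n)
            * ENNReal.ofReal ((2 ^ (j + 1)) ^ n)) * volume (Lk 0) := by
          refine add_le_add le_rfl (ENNReal.tsum_le_tsum fun j => ?_)
          rw [mul_assoc]
          refine mul_le_mul_right ?_ _
          have := h.scale (t := m * t) hx₀ (s := 2 ^ (j + 1)) (one_le_pow₀ one_le_two)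
          simpa [Lk] using this
      _ = (1 + ∑' j : ℕ, (ENNReal.ofReal (((β₀ / 2 ^ j) ^ (α * β₀)) ^ n)
            * ENNReal.ofReal ((2 ^ (j + 1)) ^ n))) * volume (Lk 0) := by
          rw [ENNReal.tsum_mul_right, add_mul, one_mul]
      _ ≤ ENNReal.ofReal (Acst β₀ (α * β₀) ^ n) * volume (Lk 0) := by
          gcongr
          exact series hβ₀ hα hn
      _ = _ := by
          rw [mul_comm, ENNReal.ofReal_mul ENNReal.toReal_nonneg, hLe]

end CF

lemma Acst_one_le {β₀ γ : ℝ} (hβ₀ : 1 < β₀) (hγ : 1 < γ) : 1 ≤ CF.Acst β₀ γ := by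
  have hρ1 : (2:ℝ) ^ (1 - γ) < 1 :=
    Real.rpow_lt_one_of_one_lt_of_neg (by norm_num) (by linarith)
  have : 0 < (1 - (2:ℝ) ^ (1 - γ))⁻¹ := inv_pos.mpr (by linarith)
  have h2 : 0 < β₀ ^ γ := Real.rpow_pos_of_pos (by linarith) _
  unfold CF.Acst
  nlinarith [mul_pos h2 this]

lemma point_ineq {α y M B : ℝ} (hα : 0 < α) (hy : 0 ≤ y) (hM : 0 < M) (hB : 0 < B) :
    (1 - α) * (y * Real.log M - y * Real.log y) ≤
      M / B * (y / M) ^ α + y * (Real.log B - 1) := by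
  rcases hy.eq_or_lt with rfl | hy
  · simp [Real.zero_rpow hα.ne']
  have hu : 0 < y / M := div_pos hy hM
  have hz : 0 < (y / M) ^ (α - 1) / B := by positivity
  have h1 := Real.log_le_sub_one_of_pos hz
  rw [Real.log_div (by positivity) hB.ne', Real.log_rpow hu, Real.log_div hy.ne' hM.ne'] at h1
  have h2 := mul_le_mul_of_nonneg_left h1 hy.le
  have h3 : y * ((y / M) ^ (α - 1) / B) = M / B * (y / M) ^ α := by
    rw [Real.rpow_sub hu, Real.rpow_one]; field_simp
  nlinarith

lemma ent_bounds {n : ℕ} {f : EuclideanSpace ℝ (Fin n) → ℝ} {β : ℝ}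
    {S : Set (EuclideanSpace ℝ (Fin n))} {V : EuclideanSpace ℝ (Fin n) → ℝ}
    (h : CF f β S V) {α M I B : ℝ} (hα0 : 0 < α) (hα1 : α < 1) (hM : 0 < M)
    (hle : ∀ x, f x ≤ M) (hI0 : 0 ≤ I) (hB : 0 < B) (hMI : M * I ≤ B)
    (hI : ∫⁻ x, ENNReal.ofReal ((f x / M) ^ α) ≤ ENNReal.ofReal I) :
    M⁻¹ ≤ I ∧ -Real.log M ≤ ent f ∧ ent f ≤ -Real.log M + Real.log B / (1 - α) := by
  have hf := h.integrable
  have hu0 : ∀ x, 0 ≤ f x / M := fun x => div_nonneg (h.nonneg x) hM.le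
  have hu1 : ∀ x, f x / M ≤ 1 := fun x => (div_le_one hM).mpr (hle x)
  have hp0 : ∀ x, 0 ≤ (f x / M) ^ α := fun x => Real.rpow_nonneg (hu0 x) _
  have hmeas : Measurable (fun x => (f x / M) ^ α) := (h.meas.div_const M).pow_const α
  have hpi : Integrable (fun x => (f x / M) ^ α) := by
    refine ⟨hmeas.aestronglyMeasurable, ?_⟩
    rw [hasFiniteIntegral_iff_ofReal (Filter.Eventually.of_forall hp0)]
    exact hI.trans_lt ENNReal.ofReal_lt_top
  have hpI : ∫ x, (f x / M) ^ α ≤ I := by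
    rw [integral_eq_lintegral_of_nonneg_ae (Filter.Eventually.of_forall hp0)
      hmeas.aestronglyMeasurable]
    exact ENNReal.toReal_le_of_le_ofReal hI0 hI
  have hpt := fun x => point_ineq hα0 (h.nonneg x) hM hB
  have hnn : ∀ x, 0 ≤ f x * Real.log M - f x * Real.log (f x) := by
    intro x
    rcases (h.nonneg x).eq_or_lt with h0 | h0
    · simp [← h0]
    · have := Real.log_le_log h0 (hle x)
      nlinarith
  have hbi : Integrable (fun x => M / B * (f x / M) ^ α + f x * (Real.log B - 1)) :=
    (hpi.const_mul _).add (hf.mul_const _)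
  have hα' : 0 < 1 - α := by linarith
  have hdi : Integrable (fun x => (1 - α) * (f x * Real.log M - f x * Real.log (f x))) := by
    refine hbi.mono' ?_ (Filter.Eventually.of_forall fun x => ?_)
    · exact (((h.meas.mul_const _).sub (h.meas.mul h.meas.log)).const_mul _).aestronglyMeasurable
    · rw [Real.norm_eq_abs, abs_of_nonneg (mul_nonneg hα'.le (hnn x))]
      exact hpt x
  have hdi' : Integrable (fun x => f x * Real.log M - f x * Real.log (f x)) := by
    have := hdi.const_mul (1 - α)⁻¹
    refine this.congr (Filter.Eventually.of_forall fun x => ?_)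
    field_simp
  have hfl : Integrable (fun x => f x * Real.log (f x)) := by
    have := (hf.mul_const (Real.log M)).sub hdi'
    refine this.congr (Filter.Eventually.of_forall fun x => ?_)
    simp
  have hD : ∫ x, (f x * Real.log M - f x * Real.log (f x)) = Real.log M + ent f := by
    rw [integral_sub (hf.mul_const _) hfl, integral_mul_const, h.hint, ent]; ring
  have hD0 : 0 ≤ Real.log M + ent f := hD ▸ integral_nonneg hnn
  have hDu : (1 - α) * (Real.log M + ent f) ≤ M / B * (∫ x, (f x / M) ^ α) + (Real.log B - 1) := by
    have h1 := integral_mono hdi hbi hpt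
    rw [integral_const_mul, hD, integral_add (hpi.const_mul _) (hf.mul_const _),
      integral_const_mul, integral_mul_const, h.hint, one_mul] at h1
    exact h1
  have hMB : M / B * (∫ x, (f x / M) ^ α) ≤ 1 := by
    rw [div_mul_eq_mul_div, div_le_one hB]
    exact (mul_le_mul_of_nonneg_left hpI hM.le).trans hMI
  refine ⟨?_, by linarith, ?_⟩
  · have h1 : ∫ x, f x / M ≤ ∫ x, (f x / M) ^ α := by
      refine integral_mono (hf.div_const _) hpi fun x => ?_
      exact Real.self_le_rpow_of_le_one (hu0 x) (hu1 x) hα1.le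
    rw [integral_div, h.hint, one_div] at h1
    exact h1.trans hpI
  · have : Real.log M + ent f ≤ Real.log B / (1 - α) := by
      rw [le_div_iff₀ hα']; linarith
    linarith

/-- Entropy power of a convex measure is comparable to |K_f|^(2/n), where K_f is the
essential support (Corollary 5.5). -/
theorem statement14 (β₀ : ℝ) (hβ₀ : 1 < β₀) :
    ∃ C' C'' : ℝ, 0 < C' ∧ 0 < C'' ∧
      ∀ (n : ℕ), 1 ≤ n → ∀ β : ℝ, (n : ℝ) + 1 ≤ β → β₀ * n ≤ β →
        ∀ f : EuclideanSpace ℝ (Fin n) → ℝ, ConvexForm f β → (∫ x, f x = 1) →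
          C' * (volume {x | Real.exp (-32 * β₀ / (β₀ - 1)) ^ n * densSup f ≤ f x}).toReal
              ^ ((2 : ℝ) / n)
            ≤ Real.exp (2 * ent f / n) ∧
          Real.exp (2 * ent f / n) ≤
            C'' * (volume {x | Real.exp (-32 * β₀ / (β₀ - 1)) ^ n * densSup f ≤ f x}).toReal
              ^ ((2 : ℝ) / n) := by
  set α : ℝ := (1 + β₀) / (2 * β₀) with hα
  have hα0 : 0 < α := by positivity
  have hα1 : α < 1 := by rw [hα, div_lt_one (by positivity)]; linarith
  have hαβ : 1 < α * β₀ := by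
    have : α * β₀ = (1 + β₀) / 2 := by rw [hα]; field_simp
    rw [this]; linarith
  set A := CF.Acst β₀ (α * β₀) with hA
  have hA1 : 1 ≤ A := Acst_one_le hβ₀ hαβ
  have hA0 : 0 < A := by linarith
  set κ : ℝ := -32 * β₀ / (β₀ - 1) with hκ
  have hκ2 : κ ≤ -2 := by
    rw [hκ, div_le_iff₀ (by linarith)]; linarith
  refine ⟨Real.exp (2 * κ), Real.exp (2 * Real.log A + 2 * ((2 + Real.log A) / (1 - α))),
    Real.exp_pos _, Real.exp_pos _, ?_⟩
  intro n hn β hβ1 hβ f hf hint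
  obtain ⟨S, V, hS, -, hV, hpos, hfS, hf0⟩ := hf
  have h : CF f β S V := ⟨hS, hV, hpos, hfS, hf0, hint⟩
  have hn' : (0:ℝ) < n := by exact_mod_cast hn
  obtain ⟨hM, hle, -⟩ := h.sup (by linarith)
  obtain ⟨L, hL0, hLM, hLK, hI⟩ := h.core hβ₀ hn hβ hα0 hαβ
  set M := densSup f with hMd
  have hec : Real.exp κ ^ n = Real.exp (n * κ) := (Real.exp_nat_mul κ n).symm
  rw [hec]
  have hIB : M * (L * A ^ n) ≤ Real.exp (2 * n) * A ^ n := by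
    rw [← mul_assoc, mul_comm M]
    gcongr
  obtain ⟨h1, h2, h3⟩ := ent_bounds h hα0 hα1 hM hle (by positivity) (by positivity) hIB hI
  set K := {x | Real.exp (n * κ) * M ≤ f x} with hK
  have hcM : 0 < Real.exp (n * κ) * M := by positivity
  have hvK : volume K ≤ ENNReal.ofReal (Real.exp (n * κ) * M)⁻¹ := by
    have e : K ⊆ {x | ENNReal.ofReal (Real.exp (n * κ) * M) ≤ ENNReal.ofReal (f x)} :=
      fun x hx => ENNReal.ofReal_le_ofReal hx
    refine (measure_mono e).trans ?_
    refine (meas_ge_le_lintegral_div h.meas.ennreal_ofReal.aemeasurable (by simpa using hcM)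
      ENNReal.ofReal_ne_top).trans ?_
    rw [h.lint, one_div, ← ENNReal.ofReal_inv_of_pos hcM]
  have hfin : volume K ≠ ⊤ := ne_top_of_le_ne_top ENNReal.ofReal_ne_top hvK
  set v := (volume K).toReal with hv
  have hvu : v ≤ (Real.exp (n * κ) * M)⁻¹ := ENNReal.toReal_le_of_le_ofReal (by positivity) hvK
  have hLv : L ≤ v := by
    have e : {x | Real.exp (-(2 * n)) * M ≤ f x} ⊆ K := by
      intro x hx
      have hx' : Real.exp (-(2 * n)) * M ≤ f x := hx
      show Real.exp (n * κ) * M ≤ f x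
      refine le_trans ?_ hx'
      gcongr
      nlinarith
    have := ENNReal.toReal_mono hfin (hLK.trans (measure_mono e))
    rwa [ENNReal.toReal_ofReal hL0] at this
  have hvl : M⁻¹ ≤ v * A ^ n := h1.trans (by gcongr)
  have hv0 : 0 < v := by
    by_contra hc
    push Not at hc
    have : 0 < M⁻¹ := by positivity
    have hAn : 0 < A ^ n := by positivity
    nlinarith
  have l1 := Real.log_le_log (by positivity) hvl
  rw [Real.log_inv, Real.log_mul hv0.ne' (by positivity), Real.log_pow] at l1
  have l2 := Real.log_le_log hv0 hvu
  rw [Real.log_inv, Real.log_mul (by positivity) hM.ne', Real.log_exp] at l2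
  rw [Real.log_mul (by positivity) (by positivity), Real.log_exp, Real.log_pow] at h3
  rw [Real.rpow_def_of_pos hv0, ← Real.exp_add, ← Real.exp_add]
  have hc : (2 * (n:ℝ) + n * Real.log A) / (1 - α) = n * ((2 + Real.log A) / (1 - α)) := by ring
  rw [hc] at h3
  have e1 : ∀ a b : ℝ, a + Real.log v * (2 / n) ≤ b ↔ a * n + 2 * Real.log v ≤ b * n := by
    intro a b
    have : a + Real.log v * (2 / n) = (a * n + 2 * Real.log v) / n := by field_simp
    rw [this, div_le_iff₀ hn']
  have e2 : 2 * ent f / n * n = 2 * ent f := by field_simp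
  constructor
  · rw [Real.exp_le_exp, e1, e2]
    linarith
  · rw [Real.exp_le_exp, div_le_iff₀ hn', add_mul]
    have e3 : Real.log v * (2 / n) * n = 2 * Real.log v := by field_simp
    rw [e3]
    linarith
end

section
/- Fix β₀ > 1. There exists c₀ ∈ (0,1) depending only on β₀ with the following property. Let μ be a probability measure on ℝⁿ whose density f is of convex form with parameter β, where β ≥ n+1, β ≥ β₀·n, and ‖f‖ ≥ 1. Then there exists an affine map u : ℝⁿ → ℝⁿ whose linear part has |determinant| = 1 such that the pushforward measure u♯μ satisfies (u♯μ)(D) ≥ c₀ⁿ, where D is the Euclidean ball in ℝⁿ centered at the origin with volume |D| = 1. -/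
open MeasureTheory ProbabilityTheory Real
open scoped Pointwise ENNReal

namespace MPos

/-- Euclidean space -/
abbrev Eu (n : ℕ) := EuclideanSpace ℝ (Fin n)

/-- the (unnormalised) Gaussian density, in `ℝ≥0∞` -/
noncomputable def gd {n : ℕ} (x : Eu n) : ℝ≥0∞ := ENNReal.ofReal (Real.exp (-(‖x‖ ^ 2 / 2)))

lemma gd_meas {n : ℕ} : Measurable (gd : Eu n → ℝ≥0∞) := by
  unfold gd; fun_prop

/-- the (unnormalised) Gaussian measure -/
noncomputable def gm (n : ℕ) : Measure (Eu n) := volume.withDensity gd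

lemma gm_univ_eq (n : ℕ) : gm n Set.univ = ENNReal.ofReal ((2 * π) ^ ((n : ℝ) / 2)) := by
  have h := GaussianFourier.integral_rexp_neg_mul_sq_norm (V := Eu n) (b := 1 / 2) (by norm_num)
  have hi : Integrable (fun v : Eu n => Real.exp (-(1/2) * ‖v‖ ^ 2)) := by
    by_contra hc
    rw [integral_undef hc] at h
    have : 0 < (π / (1 / 2)) ^ ((Module.finrank ℝ (Eu n) : ℝ) / 2) := by positivity
    linarith
  rw [gm, withDensity_apply _ MeasurableSet.univ, Measure.restrict_univ]
  unfold gd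
  have e : ∀ v : Eu n, Real.exp (-(‖v‖ ^ 2 / 2)) = Real.exp (-(1/2) * ‖v‖ ^ 2) := by
    intro v; congr 1; ring
  simp_rw [e]
  rw [← ofReal_integral_eq_lintegral_ofReal hi (ae_of_all _ fun v => by positivity), h]
  simp
  congr 2; ring

lemma gm_ne_top (n : ℕ) : gm n Set.univ ≠ ⊤ := by rw [gm_univ_eq]; simp
lemma gm_ne_zero (n : ℕ) : gm n Set.univ ≠ 0 := by
  rw [gm_univ_eq]; simp; positivity

/-- exponential moment -/
lemma gm_mgf {n : ℕ} (q : Eu n) :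
    ∫⁻ x, gd x * ENNReal.ofReal (Real.exp (inner ℝ x q)) =
      ENNReal.ofReal (Real.exp (‖q‖ ^ 2 / 2)) * gm n Set.univ := by
  have e : ∀ x : Eu n, gd x * ENNReal.ofReal (Real.exp (inner ℝ x q)) =
      ENNReal.ofReal (Real.exp (‖q‖ ^ 2 / 2)) * gd (x - q) := by
    intro x
    unfold gd
    rw [← ENNReal.ofReal_mul (by positivity), ← ENNReal.ofReal_mul (by positivity),
      ← Real.exp_add, ← Real.exp_add, norm_sub_sq_real]
    congr 2; ring
  simp_rw [e]
  rw [lintegral_const_mul _ (by unfold gd; fun_prop), lintegral_sub_right_eq_self (fun x => gd x) q]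
  rw [gm, withDensity_apply _ MeasurableSet.univ, Measure.restrict_univ]

lemma gm_tail {n : ℕ} (q : Eu n) (a ρ : ℝ) (ha : 0 ≤ a) (hρ : 0 < ρ) (hq : ‖q‖ ≤ ρ) :
    gm n {x | a ≤ inner ℝ x q} ≤
      ENNReal.ofReal (Real.exp (-(a ^ 2 / (2 * ρ ^ 2)))) * gm n Set.univ := by
  have hm : MeasurableSet {x : Eu n | a ≤ inner ℝ x q} :=
    measurableSet_le measurable_const (by fun_prop)
  set l := a / ρ ^ 2 with hl
  have hl0 : 0 ≤ l := by positivity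
  rw [gm, withDensity_apply _ hm]
  calc ∫⁻ x in {x : Eu n | a ≤ inner ℝ x q}, gd x
      ≤ ∫⁻ x in {x : Eu n | a ≤ inner ℝ x q}, ENNReal.ofReal (Real.exp (-(l * a))) *
          (gd x * ENNReal.ofReal (Real.exp (inner ℝ x (l • q)))) := by
        refine setLIntegral_mono' hm fun x hx => ?_
        have hx' : a ≤ inner ℝ x q := hx
        rw [mul_left_comm, ← ENNReal.ofReal_mul (by positivity), ← Real.exp_add]
        have : (1 : ℝ≥0∞) ≤ ENNReal.ofReal (Real.exp (-(l * a) + inner ℝ x (l • q))) := by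
          rw [← ENNReal.ofReal_one]
          apply ENNReal.ofReal_le_ofReal
          apply Real.one_le_exp
          rw [inner_smul_right]
          nlinarith
        calc gd x = gd x * 1 := (mul_one _).symm
          _ ≤ _ := by gcongr
    _ ≤ ∫⁻ x, ENNReal.ofReal (Real.exp (-(l * a))) *
          (gd x * ENNReal.ofReal (Real.exp (inner ℝ x (l • q)))) := setLIntegral_le_lintegral _ _
    _ = ENNReal.ofReal (Real.exp (-(l * a))) *
          (ENNReal.ofReal (Real.exp (‖l • q‖ ^ 2 / 2)) * gm n Set.univ) := by
        rw [lintegral_const_mul _ (by unfold gd; fun_prop), gm_mgf]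
    _ ≤ _ := by
        rw [← mul_assoc, ← ENNReal.ofReal_mul (by positivity), ← Real.exp_add]
        change _ ≤ _ * gm n Set.univ
        gcongr
        rw [norm_smul, Real.norm_of_nonneg hl0, mul_pow]
        have h1 : ‖q‖ ^ 2 ≤ ρ ^ 2 := by gcongr
        have h2 : l ^ 2 * ‖q‖ ^ 2 ≤ l ^ 2 * ρ ^ 2 := by gcongr
        have h3 : l ^ 2 * ρ ^ 2 = a ^ 2 / ρ ^ 2 := by rw [hl]; field_simp
        have h4 : l * a = a ^ 2 / ρ ^ 2 := by rw [hl]; field_simp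
        have h5 : a ^ 2 / (2 * ρ ^ 2) = a ^ 2 / ρ ^ 2 / 2 := by field_simp
        rw [h5, h4]; linarith

lemma gm_norm_tail {n : ℕ} (hn : 1 ≤ n) :
    gm n {x | 3 * √n ≤ ‖x‖} ≤ ENNReal.ofReal (1 / 4) * gm n Set.univ := by
  have hm : MeasurableSet {x : Eu n | 3 * √n ≤ ‖x‖} :=
    measurableSet_le measurable_const (by fun_prop)
  have h := GaussianFourier.integral_rexp_neg_mul_sq_norm (V := Eu n) (b := 1 / 4) (by norm_num)
  have hi : Integrable (fun v : Eu n => Real.exp (-(1/4) * ‖v‖ ^ 2)) := by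
    by_contra hc
    rw [integral_undef hc] at h
    have : 0 < (π / (1 / 4)) ^ ((Module.finrank ℝ (Eu n) : ℝ) / 2) := by positivity
    linarith
  have hn' : (1 : ℝ) ≤ n := by exact_mod_cast hn
  rw [gm_univ_eq, gm, withDensity_apply _ hm]
  calc ∫⁻ x in {x : Eu n | 3 * √n ≤ ‖x‖}, gd x
      ≤ ∫⁻ x in {x : Eu n | 3 * √n ≤ ‖x‖}, ENNReal.ofReal (Real.exp (-(9 * n / 4)))
          * ENNReal.ofReal (Real.exp (-(1/4) * ‖x‖ ^ 2)) := by
        refine setLIntegral_mono' hm fun x hx => ?_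
        have hx' : 3 * √n ≤ ‖x‖ := hx
        have : (3 * √n) ^ 2 ≤ ‖x‖ ^ 2 := by gcongr
        rw [mul_pow, Real.sq_sqrt (by positivity)] at this
        unfold gd
        rw [← ENNReal.ofReal_mul (by positivity), ← Real.exp_add]
        gcongr
        linarith
    _ ≤ ∫⁻ x : Eu n, ENNReal.ofReal (Real.exp (-(9 * n / 4)))
          * ENNReal.ofReal (Real.exp (-(1/4) * ‖x‖ ^ 2)) := setLIntegral_le_lintegral _ _
    _ = ENNReal.ofReal (Real.exp (-(9 * n / 4)) * (π / (1/4)) ^ ((n : ℝ) / 2)) := by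
        rw [lintegral_const_mul _ (by fun_prop),
          ← ofReal_integral_eq_lintegral_ofReal hi (ae_of_all _ fun v => by positivity), h,
          ← ENNReal.ofReal_mul (by positivity)]
        simp
    _ ≤ _ := by
        rw [← ENNReal.ofReal_mul (by positivity)]
        apply ENNReal.ofReal_le_ofReal
        have e : (π / (1/4)) ^ ((n : ℝ) / 2) = 2 ^ ((n : ℝ) / 2) * (2 * π) ^ ((n : ℝ) / 2) := by
          rw [← Real.mul_rpow (by norm_num) (by positivity)]; congr 1; ring
        rw [e, ← mul_assoc]
        gcongr
        have h2 : (2 : ℝ) ^ ((n : ℝ) / 2) ≤ Real.exp (n / 2) := by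
          rw [Real.rpow_def_of_pos (by norm_num)]
          gcongr
          have := Real.log_two_lt_d9
          nlinarith
        calc Real.exp (-(9 * n / 4)) * 2 ^ ((n : ℝ) / 2)
            ≤ Real.exp (-(9 * n / 4)) * Real.exp (n / 2) := by gcongr
          _ = Real.exp (-(7 * n / 4)) := by rw [← Real.exp_add]; congr 1; ring
          _ ≤ Real.exp (-(7 / 4)) := by gcongr; linarith
          _ ≤ 1 / 4 := by
            rw [Real.exp_neg, inv_eq_one_div]
            apply one_div_le_one_div_of_le (by norm_num)
            have := Real.exp_one_gt_d9
            have h3 : Real.exp (7/4) = Real.exp 1 * Real.exp (3/4) := by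
              rw [← Real.exp_add]; norm_num
            have h4 : 3/4 + 1 ≤ Real.exp (3/4) := Real.add_one_le_exp _
            rw [h3]; nlinarith

/-- translation of a symmetric set -/
lemma gm_shift {n : ℕ} (A : Set (Eu n)) (hA : MeasurableSet A) (hs : ∀ x ∈ A, -x ∈ A) (w : Eu n) :
    ENNReal.ofReal (Real.exp (-(‖w‖ ^ 2 / 2))) * gm n A ≤ gm n {x | x + w ∈ A} := by
  have hA' : MeasurableSet {x : Eu n | x + w ∈ A} := measurable_add_const w hA
  have key : ∫⁻ x in A, gd x ≤ ∫⁻ x in A, gd x * ENNReal.ofReal (Real.exp (inner ℝ x w)) := by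
    have hneg : ∫⁻ x in A, gd x * ENNReal.ofReal (Real.exp (inner ℝ x w)) =
        ∫⁻ x in A, gd x * ENNReal.ofReal (Real.exp (-inner ℝ x w)) := by
      rw [← lintegral_indicator hA, ← lintegral_indicator hA, ← lintegral_neg_eq_self]
      apply lintegral_congr
      intro x
      by_cases hx : x ∈ A
      · rw [Set.indicator_of_mem (hs x hx), Set.indicator_of_mem hx]
        simp [gd]
      · have : -x ∉ A := fun h => hx (by simpa using hs _ h)
        rw [Set.indicator_of_notMem this, Set.indicator_of_notMem hx]
    have h2 : 2 * ∫⁻ x in A, gd x ≤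
        2 * ∫⁻ x in A, gd x * ENNReal.ofReal (Real.exp (inner ℝ x w)) := by
      calc 2 * ∫⁻ x in A, gd x = ∫⁻ x in A, 2 * gd x := by
            rw [lintegral_const_mul _ gd_meas]
        _ ≤ ∫⁻ x in A, (gd x * ENNReal.ofReal (Real.exp (inner ℝ x w)) +
              gd x * ENNReal.ofReal (Real.exp (-inner ℝ x w))) := by
            refine lintegral_mono fun x => ?_
            rw [← mul_add, mul_comm, ← ENNReal.ofReal_add (by positivity) (by positivity)]
            gcongr
            have : (2 : ℝ≥0∞) = ENNReal.ofReal 2 := by simp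
            refine this.trans_le ?_
            apply ENNReal.ofReal_le_ofReal
            have h1 := Real.add_one_le_exp (inner ℝ x w : ℝ)
            have h2 := Real.add_one_le_exp (-inner ℝ x w : ℝ)
            linarith
        _ = _ := by
            rw [lintegral_add_left (by unfold gd; fun_prop), ← hneg, two_mul]
    exact (ENNReal.mul_le_mul_iff_right (by norm_num) (by norm_num)).1 h2
  rw [gm, withDensity_apply _ hA, withDensity_apply _ hA']
  calc _ ≤ ENNReal.ofReal (Real.exp (-(‖w‖ ^ 2 / 2))) *
          ∫⁻ x in A, gd x * ENNReal.ofReal (Real.exp (inner ℝ x w)) := by gcongr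
    _ = ∫⁻ x in A, gd (x - w) := by
        rw [← lintegral_const_mul _ (by unfold gd; fun_prop)]
        apply lintegral_congr
        intro x
        unfold gd
        rw [← ENNReal.ofReal_mul (by positivity), ← ENNReal.ofReal_mul (by positivity),
          ← Real.exp_add, ← Real.exp_add, norm_sub_sq_real]
        congr 2; ring
    _ = ∫⁻ x in {x | x + w ∈ A}, gd x := by
        rw [← lintegral_indicator hA, ← lintegral_indicator hA',
          ← lintegral_add_right_eq_self _ w]
        apply lintegral_congr
        intro x
        by_cases hx : x + w ∈ A
        · rw [Set.indicator_of_mem hx, Set.indicator_of_mem (show x ∈ {x | x + w ∈ A} from hx)]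
          simp
        · rw [Set.indicator_of_notMem hx,
            Set.indicator_of_notMem (show x ∉ {x | x + w ∈ A} from hx)]
    _ ≤ _ := le_rfl

end MPos


namespace MPos

/-- volume comparison by Gaussian translation -/
lemma vol_step {n : ℕ} (A B : Set (Eu n)) (hA : IsClosed A) (hAc : Convex ℝ A)
    (hAs : ∀ x ∈ A, -x ∈ A) (hB : MeasurableSet B) (ρ δ l : ℝ) (hδ : 0 < δ) (hl : 0 < l)
    (hBA : B ⊆ A + Metric.closedBall (0 : Eu n) ρ)
    (hg : ENNReal.ofReal (1 / 2) * gm n Set.univ ≤ gm n (l • A)) :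
    volume B ≤ ENNReal.ofReal (2 * (1 + δ) ^ n * Real.exp (ρ ^ 2 * l ^ 2 / (2 * δ ^ 2)))
      * volume A := by
  set ε := δ / l with hε
  have hε0 : 0 < ε := by positivity
  set D : Set (Eu n) := (1 + δ) • A with hD
  have hDc : IsClosed D := hA.smul₀ _
  have hlA : IsClosed (l • A) := hA.smul₀ _
  have hlAs : ∀ x ∈ l • A, -x ∈ l • A := by
    rintro _ ⟨a, ha, rfl⟩
    exact ⟨-a, hAs a ha, by simp⟩
  -- pointwise bound
  have hpt : ∀ η ∈ B, ENNReal.ofReal (Real.exp (-(ρ ^ 2 * l ^ 2 / (2 * δ ^ 2))) * (1 / 2)) *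
      gm n Set.univ ≤ gm n {x | η + ε • x ∈ D} := by
    intro η hη
    obtain ⟨a, ha, w, hw, rfl⟩ := hBA hη
    have hw' : ‖w‖ ≤ ρ := by simpa using hw
    have hsub : {x : Eu n | x + ε⁻¹ • w ∈ l • A} ⊆ {x | a + w + ε • x ∈ D} := by
      rintro x ⟨a', ha', hx⟩
      have hx' : l • a' = x + ε⁻¹ • w := hx
      have h1 : w + ε • x = δ • a' := by
        have : ε • (l • a') = ε • x + w := by
          rw [hx', smul_add, smul_smul, mul_inv_cancel₀ hε0.ne', one_smul]
        rw [add_comm, ← this, smul_smul, hε, div_mul_cancel₀ _ hl.ne']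
      change a + w + ε • x ∈ (1 + δ) • A
      rw [add_assoc, h1, hAc.add_smul zero_le_one hδ.le, one_smul]
      exact Set.add_mem_add ha (Set.smul_mem_smul_set ha')
    calc _ = ENNReal.ofReal (Real.exp (-(ρ ^ 2 * l ^ 2 / (2 * δ ^ 2)))) *
          (ENNReal.ofReal (1 / 2) * gm n Set.univ) := by
          rw [ENNReal.ofReal_mul (by positivity), mul_assoc]
      _ ≤ ENNReal.ofReal (Real.exp (-(‖ε⁻¹ • w‖ ^ 2 / 2))) * gm n (l • A) := by
          refine mul_le_mul' (ENNReal.ofReal_le_ofReal (Real.exp_le_exp.2 (neg_le_neg ?_))) hg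
          rw [norm_smul, Real.norm_of_nonneg (by positivity), hε]
          have : ‖w‖ ^ 2 ≤ ρ ^ 2 := by gcongr
          have e : ((δ / l)⁻¹ * ‖w‖) ^ 2 / 2 = ‖w‖ ^ 2 * l ^ 2 / (2 * δ ^ 2) := by
            field_simp
          rw [e]; gcongr
      _ ≤ gm n {x | x + ε⁻¹ • w ∈ l • A} := gm_shift _ hlA.measurableSet hlAs _
      _ ≤ _ := measure_mono hsub
  -- integrate
  set c := ENNReal.ofReal (Real.exp (-(ρ ^ 2 * l ^ 2 / (2 * δ ^ 2))) * (1 / 2)) with hc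
  have hmeas : Measurable (fun p : Eu n × Eu n => D.indicator (fun _ => (1 : ℝ≥0∞)) (p.1 + ε • p.2)) :=
    (measurable_const.indicator hDc.measurableSet).comp (by fun_prop)
  have hgm : ∀ η, gm n {x | η + ε • x ∈ D} =
      ∫⁻ x, gd x * D.indicator (fun _ => (1 : ℝ≥0∞)) (η + ε • x) := by
    intro η
    have hms : MeasurableSet {x : Eu n | η + ε • x ∈ D} :=
      (by fun_prop : Measurable fun x : Eu n => η + ε • x) hDc.measurableSet
    rw [gm, withDensity_apply _ hms, ← lintegral_indicator hms]
    apply lintegral_congr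
    intro x
    by_cases hx : η + ε • x ∈ D
    · rw [Set.indicator_of_mem hx, Set.indicator_of_mem (show x ∈ {x | η + ε • x ∈ D} from hx),
        mul_one]
    · rw [Set.indicator_of_notMem hx,
        Set.indicator_of_notMem (show x ∉ {x | η + ε • x ∈ D} from hx), mul_zero]
  have hIntEq : c * gm n Set.univ * volume B ≤ gm n Set.univ * volume D := by
    calc c * gm n Set.univ * volume B = ∫⁻ η in B, c * gm n Set.univ := by
          rw [setLIntegral_const]
      _ ≤ ∫⁻ η in B, gm n {x | η + ε • x ∈ D} := setLIntegral_mono' hB hpt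
      _ ≤ ∫⁻ η, gm n {x | η + ε • x ∈ D} := setLIntegral_le_lintegral _ _
      _ = ∫⁻ η, ∫⁻ x, gd x * D.indicator (fun _ => (1 : ℝ≥0∞)) (η + ε • x) := by
          simp_rw [hgm]
      _ = ∫⁻ x, ∫⁻ η, gd x * D.indicator (fun _ => (1 : ℝ≥0∞)) (η + ε • x) := by
          apply lintegral_lintegral_swap
          exact ((gd_meas.comp measurable_snd).mul hmeas).aemeasurable
      _ = ∫⁻ x, gd x * volume D := by
          apply lintegral_congr
          intro x
          have hmx : Measurable (fun η : Eu n => D.indicator (fun _ => (1 : ℝ≥0∞)) (η + ε • x)) :=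
            (measurable_const.indicator hDc.measurableSet).comp (by fun_prop)
          rw [lintegral_const_mul _ hmx,
            lintegral_add_right_eq_self (fun y => D.indicator (fun _ => (1 : ℝ≥0∞)) y) (ε • x)]
          rw [lintegral_indicator hDc.measurableSet]; simp
      _ = gm n Set.univ * volume D := by
          rw [lintegral_mul_const _ gd_meas, gm, withDensity_apply _ MeasurableSet.univ,
            Measure.restrict_univ]
  have h2 : c * volume B ≤ volume D := by
    rw [mul_comm c, mul_assoc] at hIntEq
    exact (ENNReal.mul_le_mul_iff_right (gm_ne_zero n) (gm_ne_top n)).1 hIntEq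
  have hDv : volume D = ENNReal.ofReal ((1 + δ) ^ n) * volume A := by
    rw [hD, Measure.addHaar_smul_of_nonneg _ (by positivity)]; simp
  have hci : ENNReal.ofReal (2 * Real.exp (ρ ^ 2 * l ^ 2 / (2 * δ ^ 2))) * c = 1 := by
    rw [hc, ← ENNReal.ofReal_mul (by positivity)]
    rw [show 2 * Real.exp (ρ ^ 2 * l ^ 2 / (2 * δ ^ 2)) *
      (Real.exp (-(ρ ^ 2 * l ^ 2 / (2 * δ ^ 2))) * (1 / 2)) =
      Real.exp (ρ ^ 2 * l ^ 2 / (2 * δ ^ 2)) * Real.exp (-(ρ ^ 2 * l ^ 2 / (2 * δ ^ 2))) by ring,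
      ← Real.exp_add]
    simp
  calc volume B = ENNReal.ofReal (2 * Real.exp (ρ ^ 2 * l ^ 2 / (2 * δ ^ 2))) * (c * volume B) := by
        rw [← mul_assoc, hci, one_mul]
    _ ≤ ENNReal.ofReal (2 * Real.exp (ρ ^ 2 * l ^ 2 / (2 * δ ^ 2))) *
        (ENNReal.ofReal ((1 + δ) ^ n) * volume A) := by rw [← hDv]; gcongr
    _ = _ := by
        rw [← mul_assoc, ← ENNReal.ofReal_mul (by positivity)]
        congr 2; ring

/-- polar of `Q ∩ tB` -/
def pol {n : ℕ} (Q : Set (Eu n)) (t : ℝ) : Set (Eu n) :=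
  {η | ∀ q ∈ Q, ‖q‖ ≤ t → inner ℝ η q ≤ 1}

lemma pol_closed {n : ℕ} (Q : Set (Eu n)) (t : ℝ) : IsClosed (pol Q t) := by
  have : pol Q t = ⋂ q ∈ Q, ⋂ (_ : ‖q‖ ≤ t), {η | inner ℝ η q ≤ 1} := by
    ext; simp [pol]
  rw [this]
  refine isClosed_biInter fun q _ => isClosed_iInter fun _ => ?_
  exact isClosed_le (by fun_prop) continuous_const

lemma pol_convex {n : ℕ} (Q : Set (Eu n)) (t : ℝ) : Convex ℝ (pol Q t) := by
  intro x hx y hy a b ha hb hab q hq hqt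
  rw [inner_add_left, inner_smul_left, inner_smul_left]
  have h1 := hx q hq hqt
  have h2 := hy q hq hqt
  simp only [conj_trivial]
  nlinarith

lemma pol_symm {n : ℕ} {Q : Set (Eu n)} (hQ : ∀ x ∈ Q, -x ∈ Q) (t : ℝ) :
    ∀ x ∈ pol Q t, -x ∈ pol Q t := by
  intro x hx q hq hqt
  have := hx (-q) (hQ q hq) (by simpa using hqt)
  simpa using this

lemma zero_mem_pol {n : ℕ} (Q : Set (Eu n)) (t : ℝ) : (0 : Eu n) ∈ pol Q t := by
  intro q _ _; simp

lemma sep {n : ℕ} {s : Set (Eu n)} (hc : Convex ℝ s) (hcl : IsClosed s) (h0 : (0 : Eu n) ∈ s)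
    {x : Eu n} (hx : x ∉ s) : ∃ q : Eu n, (∀ a ∈ s, inner ℝ a q < 1) ∧ 1 < inner ℝ x q := by
  obtain ⟨f, u, h1, h2⟩ := geometric_hahn_banach_closed_point hc hcl hx
  have hu : 0 < u := by simpa using h1 0 h0
  set v := (InnerProductSpace.toDual ℝ (Eu n)).symm f with hv
  have hf : ∀ y, inner ℝ y v = f y := by
    intro y
    rw [real_inner_comm, hv, InnerProductSpace.toDual_symm_apply]
  refine ⟨u⁻¹ • v, fun a ha => ?_, ?_⟩
  · rw [inner_smul_right, hf, inv_mul_lt_iff₀ hu]; simpa using h1 a ha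
  · rw [inner_smul_right, hf, lt_inv_mul_iff₀ hu]; simpa using h2

lemma pol_subset {n : ℕ} {Q : Set (Eu n)} (hQ : IsCompact Q) (hQc : Convex ℝ Q)
    (h0 : (0 : Eu n) ∈ Q) {s t : ℝ} (hs : 0 < s) (ht : 0 < t) :
    pol Q s ⊆ pol Q t + Metric.closedBall (0 : Eu n) (1 / s) := by
  intro η hη
  by_contra hc
  have hcl : IsClosed (pol Q t + Metric.closedBall (0 : Eu n) (1 / s)) :=
    (pol_closed Q t).add_right_of_isCompact (isCompact_closedBall _ _)
  have hcv : Convex ℝ (pol Q t + Metric.closedBall (0 : Eu n) (1 / s)) :=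
    (pol_convex Q t).add (convex_closedBall _ _)
  have h00 : (0 : Eu n) ∈ Metric.closedBall (0 : Eu n) (1 / s) := by simp [hs.le]
  obtain ⟨q, h1, h2⟩ := sep hcv hcl ⟨0, zero_mem_pol Q t, 0, h00, by simp⟩ hc
  have hq : q ∈ Q ∩ Metric.closedBall 0 t := by
    by_contra hq
    obtain ⟨z, h3, h4⟩ := sep (hQc.inter (convex_closedBall (0 : Eu n) t))
      (hQ.isClosed.inter Metric.isClosed_closedBall) ⟨h0, by simp [ht.le]⟩ hq
    have hz : z ∈ pol Q t := by
      intro p hp hpt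
      have := h3 p ⟨hp, by simpa using hpt⟩
      rw [real_inner_comm]; exact this.le
    have := h1 z ⟨z, hz, 0, h00, by simp⟩
    rw [real_inner_comm] at this
    linarith
  have hqs : ‖q‖ ≤ s := by
    by_contra hqs
    push Not at hqs
    have hq0 : 0 < ‖q‖ := hs.trans hqs
    have := h1 ((1 / (s * ‖q‖)) • q) ⟨0, zero_mem_pol Q t, (1 / (s * ‖q‖)) • q, by
      simp only [Metric.mem_closedBall, dist_zero_right, norm_smul, Real.norm_eq_abs]
      rw [abs_of_pos (by positivity)]
      apply le_of_eq; field_simp, by simp⟩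
    rw [inner_smul_left, real_inner_self_eq_norm_sq] at this
    simp only [conj_trivial] at this
    have e : 1 / (s * ‖q‖) * ‖q‖ ^ 2 = ‖q‖ / s := by field_simp
    rw [e, div_lt_one hs] at this
    linarith
  have := hη q hq.1 hqs
  linarith

end MPos


namespace MPos

/-- exponentially tilted volume -/
noncomputable def tv {n : ℕ} (ξ : Eu n) (S : Set (Eu n)) : ℝ≥0∞ :=
  ∫⁻ y in S, ENNReal.ofReal (Real.exp (inner ℝ ξ y))

/-- a convex body, a tilt of bounded oscillation, such that most of the tilted mass is in a ball -/
structure Good {n : ℕ} (K : Set (Eu n)) (ξ b : Eu n) : Prop where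
  cpt : IsCompact K
  cvx : Convex ℝ K
  osc : ∀ y ∈ K, ∀ y' ∈ K, inner ℝ ξ (y - y') ≤ n
  ne_zero : tv ξ K ≠ 0
  ne_top : tv ξ K ≠ ⊤
  mass : ENNReal.ofReal (3 / 4) * tv ξ K ≤ tv ξ (K ∩ Metric.closedBall b (2 * √n))

lemma Good.pack {n : ℕ} (hn : 1 ≤ n) {K : Set (Eu n)} {ξ b : Eu n} (h : Good K ξ b)
    (X : Finset (Eu n)) (hX : ∀ x ∈ X, x ∈ K) (τ : ℝ) (hτ : 8 ≤ τ)
    (hsep : ∀ x ∈ X, ∀ y ∈ X, x ≠ y → τ * √n < dist x y) :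
    (X.card : ℝ) ≤ 4 / 3 * Real.exp (12 * n / τ) := by
  set s := 4 / τ with hs
  have hτ0 : 0 < τ := by linarith
  have hs0 : 0 < s := by positivity
  have hs1 : s ≤ 1 / 2 := by rw [hs, div_le_iff₀ hτ0]; linarith
  have hsτ : s * τ = 4 := by rw [hs]; field_simp
  have hn0 : (0 : ℝ) < √n := by
    apply Real.sqrt_pos.2; exact_mod_cast hn
  set A := K ∩ Metric.closedBall b (2 * √n) with hA
  have hAm : MeasurableSet A := (h.cpt.isClosed.inter Metric.isClosed_closedBall).measurableSet
  let φ : Eu n → Eu n → Eu n := fun x a => (1 - s) • a + s • x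
  have hφd : ∀ x a, HasFDerivAt (φ x) ((1 - s) • ContinuousLinearMap.id ℝ (Eu n)) a := by
    intro x a
    exact ((hasFDerivAt_id a).const_smul (1 - s)).add_const _
  have hφi : ∀ x, Function.Injective (φ x) := by
    intro x a a' haa
    have : (1 - s) • a = (1 - s) • a' := add_right_cancel haa
    exact smul_right_injective _ (by linarith : (1 - s) ≠ 0) this
  have hφc : ∀ x, Continuous (φ x) := fun x => by fun_prop
  have hAc : IsCompact A := h.cpt.inter_right Metric.isClosed_closedBall
  have hφm : ∀ x, MeasurableSet (φ x '' A) := fun x => (hAc.image (hφc x)).isClosed.measurableSet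
  have hdet : ((1 - s) • ContinuousLinearMap.id ℝ (Eu n)).det = (1 - s) ^ n := by
    rw [ContinuousLinearMap.det]
    simp
  have hlow : ∀ x ∈ X, ENNReal.ofReal (Real.exp (-(3 * s * n))) * tv ξ A ≤ tv ξ (φ x '' A) := by
    intro x hx
    unfold tv
    rw [lintegral_image_eq_lintegral_abs_det_fderiv_mul volume hAm
      (fun a _ => (hφd x a).hasFDerivWithinAt) (hφi x).injOn]
    rw [← lintegral_const_mul _ (by fun_prop)]
    refine setLIntegral_mono' hAm fun a ha => ?_
    rw [hdet, ← ENNReal.ofReal_mul (by positivity), ← ENNReal.ofReal_mul (by positivity)]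
    apply ENNReal.ofReal_le_ofReal
    rw [abs_of_nonneg (by have : 0 ≤ 1 - s := by linarith
                          positivity)]
    have h1 : Real.exp (-(2 * s)) ≤ 1 - s := by
      have h2 := Real.add_one_le_exp (2 * s)
      rw [Real.exp_neg, inv_le_comm₀ (by positivity) (by linarith)]
      refine le_trans ?_ h2
      rw [inv_le_iff_one_le_mul₀ (by linarith)]
      nlinarith
    have h3 : Real.exp (-(2 * s * n)) ≤ (1 - s) ^ n := by
      calc Real.exp (-(2 * s * n)) = Real.exp (-(2 * s)) ^ n := by
            rw [← Real.exp_nat_mul]; congr 1; ring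
        _ ≤ _ := by gcongr
    have h4 : inner ℝ ξ a - s * n ≤ inner ℝ ξ (φ x a) := by
      have := h.osc a ha.1 x (hX x hx)
      have e : φ x a = a - s • (a - x) := by
        simp only [φ]; module
      rw [e, inner_sub_right, inner_smul_right]
      nlinarith
    calc _ = Real.exp (-(2 * s * n)) * Real.exp (inner ℝ ξ a - s * n) := by
          rw [← Real.exp_add, ← Real.exp_add]; congr 1; ring
      _ ≤ _ := by
          gcongr
          exact (Real.exp_pos _).le.trans h3
  have hdisj : (X : Set (Eu n)).PairwiseDisjoint (fun x => φ x '' A) := by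
    intro x hx y hy hxy
    rw [Function.onFun, Set.disjoint_left]
    rintro _ ⟨a, ha, rfl⟩ ⟨a', ha', he⟩
    have h1 := hsep x hx y hy hxy
    have e : s • (x - y) = (1 - s) • (a' - a) := by
      have he' : (1 - s) • a' + s • y = (1 - s) • a + s • x := he
      have : s • (x - y) - (1 - s) • (a' - a) = ((1 - s) • a + s • x) - ((1 - s) • a' + s • y) := by
        module
      rw [← sub_eq_zero, this, he', sub_self]
    have h2 : dist a' a ≤ 4 * √n := by
      have := dist_triangle_right a' a b
      have h3 := Metric.mem_closedBall.1 ha.2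
      have h4 := Metric.mem_closedBall.1 ha'.2
      linarith
    have h5 : s * dist x y = (1 - s) * dist a' a := by
      have := congrArg norm e
      rw [norm_smul, norm_smul, Real.norm_of_nonneg hs0.le,
        Real.norm_of_nonneg (by linarith : 0 ≤ 1 - s), ← dist_eq_norm, ← dist_eq_norm] at this
      exact this
    have h6 : 4 * √n < s * dist x y := by
      calc 4 * √n = s * (τ * √n) := by rw [← mul_assoc, hsτ]
        _ < _ := by gcongr
    have h7 : (1 - s) * dist a' a ≤ 1 * (4 * √n) := by
      gcongr
      linarith
    linarith
  have hsub : (⋃ x ∈ X, φ x '' A) ⊆ K := by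
    refine Set.iUnion₂_subset fun x hx => ?_
    rintro _ ⟨a, ha, rfl⟩
    exact h.cvx ha.1 (hX x hx) (by linarith) hs0.le (by ring)
  have hsum : (X.card : ℝ≥0∞) * (ENNReal.ofReal (Real.exp (-(3 * s * n))) * tv ξ A) ≤ tv ξ K := by
    calc _ = ∑ x ∈ X, ENNReal.ofReal (Real.exp (-(3 * s * n))) * tv ξ A := by
          rw [Finset.sum_const, nsmul_eq_mul]
      _ ≤ ∑ x ∈ X, tv ξ (φ x '' A) := Finset.sum_le_sum hlow
      _ = tv ξ (⋃ x ∈ X, φ x '' A) := by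
          unfold tv
          rw [lintegral_biUnion_finset hdisj (fun x _ => hφm x)]
      _ ≤ tv ξ K := lintegral_mono_set hsub
  have hfin : ENNReal.ofReal (X.card * Real.exp (-(3 * s * n)) * (3 / 4)) * tv ξ K ≤ 1 * tv ξ K := by
    rw [one_mul]
    refine le_trans ?_ hsum
    rw [ENNReal.ofReal_mul (by positivity), ENNReal.ofReal_mul (by positivity),
      ENNReal.ofReal_natCast, mul_assoc, mul_assoc]
    gcongr
    exact h.mass
  have h8 := (ENNReal.mul_le_mul_iff_left h.ne_zero h.ne_top).1 hfin
  rw [← ENNReal.ofReal_one, ENNReal.ofReal_le_ofReal_iff (by norm_num)] at h8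
  have e : 12 * (n : ℝ) / τ = 3 * s * n := by rw [hs]; field_simp; ring
  rw [e]
  rw [Real.exp_neg] at h8
  have hp := Real.exp_pos (3 * s * n)
  have h9 : (X.card : ℝ) * (Real.exp (3 * s * n))⁻¹ ≤ 4 / 3 := by linarith
  rwa [← div_eq_mul_inv, div_le_iff₀ hp] at h9

lemma Good.diam {n : ℕ} (hn : 1 ≤ n) {K : Set (Eu n)} {ξ b : Eu n} (h : Good K ξ b)
    {x y : Eu n} (hx : x ∈ K) (hy : y ∈ K) : dist x y ≤ 32 * n * √n := by
  classical
  by_contra hc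
  push Not at hc
  have hn' : (1 : ℝ) ≤ n := by exact_mod_cast hn
  have hne : x ≠ y := by
    rintro rfl
    rw [dist_self] at hc
    have : 0 ≤ 32 * (n : ℝ) * √n := by positivity
    linarith
  have := h.pack hn {x, y} (by simp [hx, hy]) (32 * n) (by linarith) (by
    intro a ha c hc' hac
    simp only [Finset.mem_insert, Finset.mem_singleton] at ha hc'
    rcases ha with rfl | rfl <;> rcases hc' with rfl | rfl
    · exact absurd rfl hac
    · exact hc
    · rw [dist_comm]; exact hc
    · exact absurd rfl hac)
  rw [Finset.card_pair hne] at this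
  have e : 12 * (n : ℝ) / (32 * n) = 3 / 8 := by field_simp; norm_num
  rw [e] at this
  have h3 : Real.exp (3 / 8) ^ 8 < (3 / 2) ^ 8 := by
    rw [← Real.exp_nat_mul]
    have : ((8 : ℕ) : ℝ) * (3 / 8) = ((3 : ℕ) : ℝ) * 1 := by norm_num
    rw [this, Real.exp_nat_mul]
    have := Real.exp_one_lt_d9
    calc Real.exp 1 ^ 3 < 2.7182818286 ^ 3 := by gcongr
      _ < _ := by norm_num
  have h4 := lt_of_pow_lt_pow_left₀ 8 (by norm_num) h3
  push_cast at this
  linarith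

lemma Good.net {n : ℕ} (hn : 1 ≤ n) {K : Set (Eu n)} {ξ b : Eu n} (h : Good K ξ b)
    (τ : ℝ) (hτ : 8 ≤ τ) :
    ∃ X : Finset (Eu n), (X.card : ℝ) ≤ 4 / 3 * Real.exp (12 * n / τ) ∧
      ∀ y ∈ K, ∃ x ∈ X, dist y x ≤ τ * √n := by
  classical
  let P : ℕ → Prop := fun m => ∃ X : Finset (Eu n), X.card = m ∧ (∀ x ∈ X, x ∈ K) ∧
    ∀ x ∈ X, ∀ y ∈ X, x ≠ y → τ * √n < dist x y
  obtain ⟨N, hN⟩ := exists_nat_ge (4 / 3 * Real.exp (12 * n / τ))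
  have hb : ∀ m, P m → m ≤ N := by
    rintro m ⟨X, rfl, h1, h2⟩
    have := (h.pack hn X h1 τ hτ h2).trans hN
    exact_mod_cast this
  have hP0 : P 0 := ⟨∅, by simp⟩
  obtain ⟨X, hXc, h1, h2⟩ := Nat.findGreatest_spec (P := P) (Nat.zero_le N) hP0
  refine ⟨X, h.pack hn X h1 τ hτ h2, fun y hy => ?_⟩
  by_contra hc
  push Not at hc
  have hyX : y ∉ X := by
    intro hyX
    have := hc y hyX
    rw [dist_self] at this
    have : 0 ≤ τ * √n := by positivity
    linarith
  have hP : P (X.card + 1) := by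
    refine ⟨insert y X, Finset.card_insert_of_notMem hyX, ?_, ?_⟩
    · intro x hx
      rcases Finset.mem_insert.1 hx with rfl | hx
      · exact hy
      · exact h1 x hx
    · intro x hx z hz hxz
      rcases Finset.mem_insert.1 hx with hx1 | hx1 <;>
        rcases Finset.mem_insert.1 hz with hz1 | hz1
      · exact absurd (hx1.trans hz1.symm) hxz
      · rw [hx1]; exact hc z hz1
      · rw [dist_comm, hz1]; exact hc x hx1
      · exact h2 x hx1 z hz1 hxz
  have := Nat.le_findGreatest (hb _ hP) hP
  omega

/-- Gaussian width estimate -/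
lemma Good.width {n : ℕ} (hn : 1 ≤ n) {K : Set (Eu n)} {ξ b : Eu n} (h : Good K ξ b)
    (τ ρ a l : ℝ) (hτ : 8 ≤ τ) (hρ : 0 < ρ) (ha : 0 ≤ a) (hl : a + 12 * τ * n ≤ l)
    (haρ : 24 * n / τ + 3 ≤ a ^ 2 / (2 * ρ ^ 2)) :
    ENNReal.ofReal (1 / 2) * gm n Set.univ ≤ gm n (l • pol (K - K) ρ) := by
  classical
  have hn' : (1 : ℝ) ≤ n := by exact_mod_cast hn
  have hl0 : 0 < l := by
    have : 0 < 12 * τ * n := by positivity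
    linarith
  obtain ⟨X, hXc, hX⟩ := h.net hn τ hτ
  -- representative of each cell
  let cell : Eu n × Eu n → Set (Eu n) := fun p =>
    {q | q ∈ K - K ∧ ‖q‖ ≤ ρ ∧ dist q (p.1 - p.2) ≤ 2 * τ * √n}
  let rep : Eu n × Eu n → Eu n := fun p => if hp : (cell p).Nonempty then hp.some else 0
  have hrep : ∀ p, ‖rep p‖ ≤ ρ := by
    intro p
    by_cases hp : (cell p).Nonempty
    · simp only [rep, dif_pos hp]; exact hp.some_mem.2.1
    · simp only [rep, dif_neg hp, norm_zero]; exact hρ.le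
  have hbad : (l • pol (K - K) ρ)ᶜ ⊆
      (⋃ p ∈ X ×ˢ X, {x : Eu n | a ≤ inner ℝ x (rep p)}) ∪ {x | 3 * √n ≤ ‖x‖} := by
    intro x hx
    by_contra hc
    simp only [Set.mem_union, Set.mem_iUnion, Set.mem_setOf_eq, not_or, not_exists, not_le] at hc
    obtain ⟨hc1, hc2⟩ := hc
    apply hx
    rw [Set.mem_smul_set_iff_inv_smul_mem₀ hl0.ne']
    intro q hq hqρ
    rw [inner_smul_left]
    simp only [conj_trivial]
    rw [inv_mul_le_iff₀ hl0, mul_one]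
    obtain ⟨y, hy, y', hy', rfl⟩ := hq
    obtain ⟨z, hz, hyz⟩ := hX y hy
    obtain ⟨z', hz', hyz'⟩ := hX y' hy'
    have hcell : y - y' ∈ cell (z, z') := by
      refine ⟨⟨y, hy, y', hy', rfl⟩, hqρ, ?_⟩
      have := dist_sub_sub_le y y' z z'
      linarith
    have hne : (cell (z, z')).Nonempty := ⟨_, hcell⟩
    have hr : rep (z, z') ∈ cell (z, z') := by
      simp only [rep, dif_pos hne]; exact hne.some_mem
    have h1 := hc1 (z, z') (Finset.mem_product.2 ⟨hz, hz'⟩)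
    have h2 : ‖(y - y') - rep (z, z')‖ ≤ 4 * τ * √n := by
      rw [← dist_eq_norm]
      have := dist_triangle_right (y - y') (rep (z, z')) (z - z')
      have h3 := hcell.2.2
      have h4 := hr.2.2
      simp only at h3 h4
      linarith
    have h5 : inner ℝ x ((y - y') - rep (z, z')) ≤ 12 * τ * n := by
      calc inner ℝ x ((y - y') - rep (z, z')) ≤ ‖x‖ * ‖(y - y') - rep (z, z')‖ :=
            real_inner_le_norm _ _
        _ ≤ (3 * √n) * (4 * τ * √n) := by gcongr
        _ = 12 * τ * (√n * √n) := by ring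
        _ = 12 * τ * n := by rw [Real.mul_self_sqrt (by positivity)]
    have e : inner ℝ x (y - y') = inner ℝ x (rep (z, z')) + inner ℝ x ((y - y') - rep (z, z')) := by
      rw [← inner_add_right]; congr 1; abel
    change inner ℝ x (y - y') ≤ l
    linarith
  have hbadm : gm n (l • pol (K - K) ρ)ᶜ ≤ ENNReal.ofReal (1 / 2) * gm n Set.univ := by
    calc gm n (l • pol (K - K) ρ)ᶜ ≤ gm n (⋃ p ∈ X ×ˢ X, {x : Eu n | a ≤ inner ℝ x (rep p)}) +
          gm n {x | 3 * √n ≤ ‖x‖} := (measure_mono hbad).trans (measure_union_le _ _)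
      _ ≤ (∑ p ∈ X ×ˢ X, gm n {x : Eu n | a ≤ inner ℝ x (rep p)}) +
          ENNReal.ofReal (1 / 4) * gm n Set.univ := by
          gcongr
          · exact measure_biUnion_finset_le _ _
          · exact gm_norm_tail hn
      _ ≤ (∑ p ∈ X ×ˢ X, ENNReal.ofReal (Real.exp (-(a ^ 2 / (2 * ρ ^ 2)))) * gm n Set.univ) +
          ENNReal.ofReal (1 / 4) * gm n Set.univ := by
          gcongr with p _
          exact gm_tail _ _ _ ha hρ (hrep p)
      _ = ENNReal.ofReal (X.card * X.card * Real.exp (-(a ^ 2 / (2 * ρ ^ 2))) + 1 / 4) *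
            gm n Set.univ := by
          rw [Finset.sum_const, Finset.card_product, nsmul_eq_mul,
            ENNReal.ofReal_add (by positivity) (by norm_num), add_mul,
            ENNReal.ofReal_mul (by positivity), ENNReal.ofReal_mul (by positivity)]
          push_cast
          simp only [ENNReal.ofReal_natCast, mul_assoc]
      _ ≤ _ := by
          gcongr
          have h1 : (X.card : ℝ) * X.card * Real.exp (-(a ^ 2 / (2 * ρ ^ 2))) ≤
              (4 / 3 * Real.exp (12 * n / τ)) * (4 / 3 * Real.exp (12 * n / τ)) *
                Real.exp (-(24 * n / τ + 3)) := by gcongr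
          have h2 : (4 / 3 * Real.exp (12 * n / τ)) * (4 / 3 * Real.exp (12 * n / τ)) *
                Real.exp (-(24 * n / τ + 3)) = 16 / 9 * Real.exp (-3) := by
            have : Real.exp (-3) = Real.exp (12 * n / τ) * Real.exp (12 * n / τ) *
                Real.exp (-(24 * n / τ + 3)) := by
              rw [← Real.exp_add, ← Real.exp_add]; congr 1; ring
            rw [this]; ring
          have h3 : Real.exp (-3) ≤ 1 / 8 := by
            rw [Real.exp_neg, inv_eq_one_div]
            apply one_div_le_one_div_of_le (by norm_num)
            have := Real.exp_one_gt_d9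
            have e : Real.exp 3 = Real.exp 1 ^ 3 := by rw [← Real.exp_nat_mul]; norm_num
            rw [e]
            calc (8 : ℝ) ≤ 2.7182818283 ^ 3 := by norm_num
              _ ≤ _ := by gcongr
          linarith
  have hm : MeasurableSet (l • pol (K - K) ρ) := ((pol_closed _ _).smul₀ l).measurableSet
  have htot := measure_add_measure_compl (μ := gm n) hm
  have h2 : ENNReal.ofReal (1 / 2) * gm n Set.univ + ENNReal.ofReal (1 / 2) * gm n Set.univ =
      gm n Set.univ := by
    rw [← add_mul, ← ENNReal.ofReal_add (by norm_num) (by norm_num)]; norm_num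
  have h3 : ENNReal.ofReal (1 / 2) * gm n Set.univ + ENNReal.ofReal (1 / 2) * gm n Set.univ ≤
      gm n (l • pol (K - K) ρ) + ENNReal.ofReal (1 / 2) * gm n Set.univ := by
    rw [h2, ← htot]; gcongr; rw [htot]; exact hbadm
  exact (ENNReal.add_le_add_iff_right
    (ENNReal.mul_ne_top ENNReal.ofReal_ne_top (gm_ne_top n))).1 h3

end MPos

namespace MPos

lemma pol_step {n : ℕ} (hn : 1 ≤ n) {K : Set (Eu n)} {ξ b : Eu n} (h : Good K ξ b)
    (hK : K.Nonempty) (k : ℕ) :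
    volume (pol (K - K) (64 ^ k * √n)) ≤
      ENNReal.ofReal (2 * Real.exp (n * (557569 * (1 / 2) ^ k))) *
        volume (pol (K - K) (64 ^ (k + 1) * √n)) := by
  have hn' : (1 : ℝ) ≤ n := by exact_mod_cast hn
  have hsn : 0 < √(n : ℝ) := Real.sqrt_pos.2 (by linarith)
  have hsq : √(n : ℝ) ^ 2 = n := Real.sq_sqrt (by linarith)
  by_cases hk : 32 * (n : ℝ) ≤ 64 ^ k
  · have hsub : pol (K - K) (64 ^ k * √n) ⊆ pol (K - K) (64 ^ (k + 1) * √n) := by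
      intro η hη q hq _
      refine hη q hq ?_
      obtain ⟨x, hx, y, hy, rfl⟩ := hq
      have := h.diam hn hx hy
      rw [dist_eq_norm] at this
      refine this.trans ?_
      gcongr
    refine (measure_mono hsub).trans ?_
    refine le_mul_of_one_le_left zero_le ?_
    rw [← ENNReal.ofReal_one]
    apply ENNReal.ofReal_le_ofReal
    have : 1 ≤ Real.exp (n * (557569 * (1 / 2) ^ k)) := Real.one_le_exp (by positivity)
    linarith
  push Not at hk
  obtain ⟨p, hp⟩ : ∃ p : ℝ, p = 2 ^ k := ⟨_, rfl⟩
  have hp1 : 1 ≤ p := by rw [hp]; exact one_le_pow₀ (by norm_num)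
  have e64 : (64 : ℝ) ^ k = p ^ 6 := by
    rw [hp, ← pow_mul, mul_comm, pow_mul]; norm_num
  have e12 : ((1 : ℝ) / 2) ^ k = 1 / p := by rw [hp]; simp
  rw [pow_succ, e64, e12]
  rw [e64] at hk
  have hQ : IsCompact (K - K) := by
    rw [sub_eq_add_neg]; exact h.cpt.add h.cpt.neg
  have hQc : Convex ℝ (K - K) := h.cvx.sub h.cvx
  have h0 : (0 : Eu n) ∈ K - K := by
    obtain ⟨x, hx⟩ := hK
    exact ⟨x, hx, x, hx, sub_self x⟩
  have hQs : ∀ x ∈ K - K, -x ∈ K - K := by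
    rintro _ ⟨x, hx, y, hy, rfl⟩
    exact ⟨y, hy, x, hx, by simp⟩
  have hp0 : 0 < p := by linarith
  have hw := h.width hn (8 * p ^ 4) (p ^ 6 * 64 * √n) (960 * n * p ^ 4) (1056 * n * p ^ 4)
    (by nlinarith [one_le_pow₀ hp1 (n := 4)]) (by positivity) (by positivity)
    (by nlinarith) (by
      have h1 : p ^ 4 ≤ 32 * n := by
        refine le_trans ?_ hk.le
        exact pow_le_pow_right₀ hp1 (by norm_num)
      have e1 : (960 * n * p ^ 4) ^ 2 / (2 * (p ^ 6 * 64 * √n) ^ 2) = (225 / 2) * n / p ^ 4 := by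
        rw [mul_pow (p ^ 6 * 64), hsq]
        field_simp
        norm_num
      rw [e1]
      have e2 : 24 * (n : ℝ) / (8 * p ^ 4) = 3 * n / p ^ 4 := by
        field_simp; norm_num
      rw [e2, div_add' _ _ _ (by positivity)]
      gcongr
      linarith)
  have hv := vol_step (n := n) (pol (K - K) (p ^ 6 * 64 * √n)) (pol (K - K) (p ^ 6 * √n))
    (pol_closed _ _) (pol_convex _ _) (pol_symm hQs _) (pol_closed _ _).measurableSet
    (1 / (p ^ 6 * √n)) (1 / p) (1056 * n * p ^ 4) (by positivity) (by positivity)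
    (pol_subset hQ hQc h0 (by positivity) (by positivity)) hw
  refine hv.trans ?_
  refine mul_le_mul_left (ENNReal.ofReal_le_ofReal ?_) _
  have e3 : (1 / (p ^ 6 * √n)) ^ 2 * (1056 * n * p ^ 4) ^ 2 / (2 * (1 / p) ^ 2) =
      557568 * n / p ^ 2 := by
    rw [div_pow, mul_pow (p ^ 6), hsq]
    field_simp
    norm_num
  rw [e3, mul_assoc]
  gcongr
  have h5 : (1 + 1 / p) ^ n ≤ Real.exp (n * (1 / p)) := by
    rw [Real.exp_nat_mul]
    gcongr
    rw [add_comm]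
    exact Real.add_one_le_exp _
  have h6 : 557568 * n / p ^ 2 ≤ n * (557568 * (1 / p)) := by
    rw [div_le_iff₀ (by positivity)]
    have : (n : ℝ) * (557568 * (1 / p)) * p ^ 2 = 557568 * n * p := by field_simp
    rw [this]
    exact le_mul_of_one_le_right (by positivity) hp1
  calc _ ≤ Real.exp (n * (1 / p)) * Real.exp (n * (557568 * (1 / p))) := by gcongr
    _ = _ := by rw [← Real.exp_add]; congr 1; ring

lemma pol_tele {n : ℕ} (hn : 1 ≤ n) {K : Set (Eu n)} {ξ b : Eu n} (h : Good K ξ b)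
    (hK : K.Nonempty) (k : ℕ) :
    volume (pol (K - K) (√n)) ≤
      ENNReal.ofReal (2 ^ k * Real.exp (n * (1115138 * (1 - (1 / 2) ^ k)))) *
        volume (pol (K - K) (64 ^ k * √n)) := by
  induction k with
  | zero => simp
  | succ k ih =>
    refine ih.trans ?_
    refine (mul_le_mul_right (pol_step hn h hK k) _).trans ?_
    rw [← mul_assoc, ← ENNReal.ofReal_mul (by positivity)]
    refine mul_le_mul_left (ENNReal.ofReal_le_ofReal ?_) _
    rw [pow_succ 2, mul_mul_mul_comm, ← Real.exp_add]
    gcongr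
    rw [pow_succ]
    nlinarith

lemma ball_lower (n : ℕ) : 1 ≤ volume (Metric.closedBall (0 : Eu n) (√n)) := by
  have hc : WithLp.toLp 2 '' (Set.pi Set.univ fun _ : Fin n => Set.Icc (0 : ℝ) 1) ⊆
      Metric.closedBall (0 : Eu n) (√n) := by
    rintro _ ⟨x, hx, rfl⟩
    rw [mem_closedBall_zero_iff, EuclideanSpace.norm_eq]
    apply Real.sqrt_le_sqrt
    calc ∑ i, ‖x i‖ ^ 2 ≤ ∑ i : Fin n, (1 : ℝ) := by
          refine Finset.sum_le_sum fun i _ => ?_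
          have := hx i (Set.mem_univ i)
          rw [Real.norm_eq_abs, sq_abs]
          nlinarith [this.1, this.2]
      _ = n := by simp
  refine le_trans ?_ (measure_mono hc)
  have hp := EuclideanSpace.volume_preserving_symm_measurableEquiv_toLp (Fin n)
  rw [show (WithLp.toLp 2 '' (Set.pi Set.univ fun _ : Fin n => Set.Icc (0 : ℝ) 1)) =
      (MeasurableEquiv.toLp 2 (Fin n → ℝ)).symm ⁻¹'
        (Set.pi Set.univ fun _ : Fin n => Set.Icc (0 : ℝ) 1) from ?_]
  · rw [hp.measure_preimage_equiv, volume_pi_pi]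
    simp
  · ext x
    constructor
    · rintro ⟨y, hy, rfl⟩; exact hy
    · intro hx; exact ⟨WithLp.ofLp x, hx, rfl⟩

/-- full polar -/
def fp {n : ℕ} (K : Set (Eu n)) : Set (Eu n) := {η | ∀ q ∈ K - K, inner ℝ η q ≤ 1}

noncomputable def cP : ℝ := Real.exp (-1115138) / 2

lemma Good.polar {n : ℕ} (hn : 1 ≤ n) {K : Set (Eu n)} {ξ b : Eu n} (h : Good K ξ b)
    (hK : K.Nonempty) :
    ENNReal.ofReal (cP ^ n) ≤ volume ((n : ℝ) • fp K) := by
  have hn' : (1 : ℝ) ≤ n := by exact_mod_cast hn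
  have hsn : 0 < √(n : ℝ) := Real.sqrt_pos.2 (by linarith)
  have hsq : √(n : ℝ) * √n = n := Real.mul_self_sqrt (by linarith)
  have h1 := pol_tele hn h hK n
  have h2 : pol (K - K) (64 ^ n * √n) ⊆ fp K := by
    intro η hη q hq
    refine hη q hq ?_
    obtain ⟨x, hx, y, hy, rfl⟩ := hq
    have := h.diam hn hx hy
    rw [dist_eq_norm] at this
    refine this.trans ?_
    gcongr
    have h64 : 1 + (n : ℝ) * 63 ≤ (1 + 63) ^ n := one_add_mul_le_pow (by norm_num) n
    norm_num at h64
    linarith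
  have h3 : Metric.closedBall (0 : Eu n) (√n) ⊆ (n : ℝ) • pol (K - K) (√n) := by
    intro η hη
    rw [mem_closedBall_zero_iff] at hη
    refine ⟨(n : ℝ)⁻¹ • η, fun q hq hqn => ?_, ?_⟩
    · rw [inner_smul_left]
      have := (real_inner_le_norm η q).trans (mul_le_mul hη hqn (norm_nonneg _) hsn.le)
      rw [hsq] at this
      simp only [conj_trivial]
      rw [inv_mul_le_iff₀ (by linarith)]
      linarith
    · show (n : ℝ) • (n : ℝ)⁻¹ • η = η
      rw [smul_inv_smul₀ (by positivity)]
  have h4 := (ball_lower n).trans (measure_mono h3)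
  rw [Measure.addHaar_smul_of_nonneg _ (by positivity)] at h4 ⊢
  have h5 : (1 : ℝ≥0∞) ≤ ENNReal.ofReal (2 ^ n * Real.exp (n * 1115138)) *
      (ENNReal.ofReal ((n : ℝ) ^ Module.finrank ℝ (Eu n)) * volume (fp K)) := by
    refine h4.trans ?_
    rw [mul_left_comm]
    gcongr
    refine h1.trans ?_
    gcongr
    have : (0 : ℝ) ≤ (1 / 2) ^ n := by positivity
    linarith
  calc ENNReal.ofReal (cP ^ n) = ENNReal.ofReal (cP ^ n) * 1 := (mul_one _).symm
    _ ≤ ENNReal.ofReal (cP ^ n) * _ := mul_le_mul_right h5 _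
    _ = _ := by
      rw [← mul_assoc, ← ENNReal.ofReal_mul (by unfold cP; positivity)]
      have : cP ^ n * (2 ^ n * Real.exp (n * 1115138)) = 1 := by
        rw [cP, Real.exp_nat_mul, ← mul_pow, ← mul_pow, Real.exp_neg]
        field_simp
        simp
      rw [this]; simp

end MPos

namespace MPos

section Klartag
variable {n : ℕ} {F : Type*} [NormedAddCommGroup F] [NormedSpace ℝ F]

/-- tilted integral -/
noncomputable def J (K : Set (Eu n)) (φ : Eu n → F) (ξ : Eu n) : F :=
  ∫ y in K, Real.exp (inner ℝ ξ y) • φ y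

lemma J_int {K : Set (Eu n)} (hK : IsCompact K) {φ : Eu n → F} (hφ : Continuous φ) (ξ : Eu n) :
    IntegrableOn (fun y => Real.exp (inner ℝ ξ y) • φ y) K := by
  refine ContinuousOn.integrableOn_compact (E := F) hK (Continuous.continuousOn ?_)
  fun_prop

lemma J_deriv [CompleteSpace F] {K : Set (Eu n)} (hK : IsCompact K) {φ : Eu n → F} (hφ : Continuous φ)
    (ξ : Eu n) :
    HasFDerivAt (J K φ) (J K (fun y => (innerSL ℝ y).smulRight (φ y)) ξ) ξ := by
  have hc : Continuous fun y : Eu n => (innerSL ℝ y).smulRight (φ y) := by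
    have h1 : Continuous fun y : Eu n => innerSL ℝ y := (innerSL ℝ).continuous
    have := (ContinuousLinearMap.smulRightL ℝ (Eu n) F).continuous₂.comp (h1.prodMk hφ)
    exact this
  unfold J
  refine hasFDerivAt_integral_of_dominated_of_fderiv_le (s := Metric.ball ξ 1)
    (F' := fun ξ y => Real.exp (inner ℝ ξ y) • (innerSL ℝ y).smulRight (φ y))
    (bound := fun y => Real.exp ((‖ξ‖ + 1) * ‖y‖) * (‖y‖ * ‖φ y‖))
    (Metric.ball_mem_nhds ξ one_pos) ?_ ?_ ?_ ?_ ?_ ?_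
  · exact Filter.Eventually.of_forall fun x => (J_int hK hφ x).aestronglyMeasurable
  · exact J_int hK hφ ξ
  · exact (J_int hK hc ξ).aestronglyMeasurable
  · refine Filter.Eventually.of_forall fun y x hx => ?_
    rw [norm_smul, Real.norm_eq_abs, Real.abs_exp, ContinuousLinearMap.norm_smulRight_apply,
      innerSL_apply_norm]
    gcongr
    refine (real_inner_le_norm _ _).trans ?_
    gcongr
    rw [mem_ball_iff_norm] at hx
    have := norm_add_le ξ (x - ξ)
    rw [add_sub_cancel] at this
    linarith
  · refine ContinuousOn.integrableOn_compact hK (Continuous.continuousOn ?_)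
    fun_prop
  · refine Filter.Eventually.of_forall fun y x _ => ?_
    have h1 : HasFDerivAt (fun x : Eu n => (inner ℝ x y : ℝ)) (innerSL ℝ y) x := by
      have := (innerSL ℝ y).hasFDerivAt (x := x)
      refine this.congr_of_eventuallyEq (Filter.Eventually.of_forall fun z => ?_)
      simp [real_inner_comm]
    have h2 := (h1.exp).smul_const (φ y)
    refine h2.congr_fderiv ?_
    ext v
    simp [mul_smul]

lemma J_deriv_apply [CompleteSpace F] {K : Set (Eu n)} (hK : IsCompact K) {φ : Eu n → F} (hφ : Continuous φ)
    (ξ v : Eu n) :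
    J K (fun y => (innerSL ℝ y).smulRight (φ y)) ξ v = J K (fun y => (inner ℝ y v : ℝ) • φ y) ξ := by
  have hc : Continuous fun y : Eu n => (innerSL ℝ y).smulRight (φ y) := by
    have h1 : Continuous fun y : Eu n => innerSL ℝ y := (innerSL ℝ).continuous
    have := (ContinuousLinearMap.smulRightL ℝ (Eu n) F).continuous₂.comp (h1.prodMk hφ)
    exact this
  unfold J
  rw [ContinuousLinearMap.integral_apply (J_int hK hc ξ)]
  simp

lemma J_inner {K : Set (Eu n)} (hK : IsCompact K) {φ : Eu n → Eu n} (hφ : Continuous φ)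
    (ξ v : Eu n) :
    inner ℝ (J K φ ξ) v = J K (fun y => (inner ℝ (φ y) v : ℝ)) ξ := by
  have h := (innerSL ℝ v).integral_comp_comm (J_int hK hφ ξ)
  rw [real_inner_comm]
  unfold J
  rw [← innerSL_apply_apply ℝ, ← h]
  simp [real_inner_comm, inner_smul_left, inner_smul_right]

lemma J_one_pos {K : Set (Eu n)} (hK : IsCompact K) (hv : volume K ≠ 0) (ξ : Eu n) :
    0 < J K (fun _ => (1 : ℝ)) ξ := by
  unfold J
  rw [setIntegral_pos_iff_support_of_nonneg_ae]
  · have : (Function.support fun y : Eu n => Real.exp (inner ℝ ξ y) • (1 : ℝ)) = Set.univ := by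
      ext y; simp [(Real.exp_pos _).ne']
    rw [this, Set.univ_inter]
    exact pos_iff_ne_zero.2 hv
  · exact Filter.Eventually.of_forall fun y => by simp [(Real.exp_pos _).le]
  · exact J_int hK continuous_const ξ

/-- barycentre of the tilted measure -/
noncomputable def gb (K : Set (Eu n)) (ξ : Eu n) : Eu n :=
  (J K (fun _ => (1 : ℝ)) ξ)⁻¹ • J K (fun y => y) ξ

lemma gb_inner {K : Set (Eu n)} (hK : IsCompact K) (hv : volume K ≠ 0) (ξ v : Eu n) :
    J K (fun y => (inner ℝ y v : ℝ)) ξ = J K (fun _ => (1 : ℝ)) ξ * inner ℝ (gb K ξ) v := by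
  have hZ := J_one_pos hK hv ξ
  rw [gb, inner_smul_left, J_inner hK continuous_id']
  simp only [conj_trivial]
  field_simp

/-- derivative of the barycentre -/
noncomputable def Dg (K : Set (Eu n)) (ξ : Eu n) : Eu n →L[ℝ] Eu n :=
  (J K (fun _ => (1 : ℝ)) ξ)⁻¹ • J K (fun y => (innerSL ℝ y).smulRight y) ξ +
    ((-((J K (fun _ => (1 : ℝ)) ξ) ^ 2)⁻¹) • J K (fun y => (innerSL ℝ y).smulRight (1 : ℝ)) ξ).smulRight
      (J K (fun y => y) ξ)

lemma gb_deriv {K : Set (Eu n)} (hK : IsCompact K) (hv : volume K ≠ 0) (ξ : Eu n) :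
    HasFDerivAt (gb K) (Dg K ξ) ξ := by
  have hZ := J_one_pos hK hv ξ
  have h1 := J_deriv hK (continuous_const (y := (1 : ℝ))) ξ
  have h2 := J_deriv hK (continuous_id (X := Eu n)) ξ
  have h3 := (hasDerivAt_inv hZ.ne').comp_hasFDerivAt ξ h1
  exact h3.smul h2

lemma Dg_inner {K : Set (Eu n)} (hK : IsCompact K) (hv : volume K ≠ 0) (ξ v w : Eu n) :
    J K (fun _ => (1 : ℝ)) ξ * inner ℝ (Dg K ξ v) w =
      J K (fun y => (inner ℝ (y - gb K ξ) v : ℝ) * inner ℝ (y - gb K ξ) w) ξ := by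
  have hZ := J_one_pos hK hv ξ
  set Z := J K (fun _ => (1 : ℝ)) ξ with hZd
  set g := gb K ξ with hg
  have hgv := gb_inner hK hv ξ v
  have hgw := gb_inner hK hv ξ w
  rw [← hZd, ← hg] at hgv hgw
  have e1 : J K (fun y => (inner ℝ (y - g) v : ℝ) * inner ℝ (y - g) w) ξ =
      J K (fun y => (inner ℝ y v : ℝ) * inner ℝ y w) ξ - Z * (inner ℝ g v * inner ℝ g w) := by
    have e : ∀ y : Eu n, Real.exp (inner ℝ ξ y) • ((inner ℝ (y - g) v : ℝ) * inner ℝ (y - g) w) =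
        ((Real.exp (inner ℝ ξ y) • ((inner ℝ y v : ℝ) * inner ℝ y w) -
        inner ℝ g v * (Real.exp (inner ℝ ξ y) • (inner ℝ y w : ℝ))) -
        inner ℝ g w * (Real.exp (inner ℝ ξ y) • (inner ℝ y v : ℝ))) +
        (inner ℝ g v * inner ℝ g w) * (Real.exp (inner ℝ ξ y) • (1 : ℝ)) := by
      intro y
      simp only [inner_sub_left, smul_eq_mul]
      ring
    have i1 := J_int hK (φ := fun y : Eu n => (inner ℝ y v : ℝ) * inner ℝ y w) (by fun_prop) ξ
    have i2 := J_int hK (φ := fun y : Eu n => (inner ℝ y v : ℝ)) (by fun_prop) ξ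
    have i3 := J_int hK (φ := fun y : Eu n => (inner ℝ y w : ℝ)) (by fun_prop) ξ
    have i4 := J_int hK (φ := fun y : Eu n => (1 : ℝ)) (by fun_prop) ξ
    rw [J]
    simp_rw [e]
    rw [integral_add, integral_sub, integral_sub, integral_const_mul, integral_const_mul,
      integral_const_mul]
    · change J K (fun y => (inner ℝ y v : ℝ) * inner ℝ y w) ξ -
        inner ℝ g v * J K (fun y => (inner ℝ y w : ℝ)) ξ -
        inner ℝ g w * J K (fun y => (inner ℝ y v : ℝ)) ξ + inner ℝ g v * inner ℝ g w * Z = _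
      rw [hgv, hgw]; ring
    · exact i1
    · exact i3.const_mul _
    · exact i1.sub (i3.const_mul _)
    · exact i2.const_mul _
    · exact (i1.sub (i3.const_mul _)).sub (i2.const_mul _)
    · exact i4.const_mul _
  rw [e1]
  have e2 : Dg K ξ v = Z⁻¹ • J K (fun y => (inner ℝ y v : ℝ) • y) ξ -
      ((Z ^ 2)⁻¹ * (Z * inner ℝ g v)) • J K (fun y => y) ξ := by
    rw [Dg]
    simp only [ContinuousLinearMap.add_apply, ContinuousLinearMap.smul_apply,
      ContinuousLinearMap.smulRight_apply]
    rw [J_deriv_apply hK continuous_id', J_deriv_apply hK continuous_const]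
    simp only [smul_eq_mul, mul_one]
    rw [hgv, ← hZd]
    simp only [neg_mul, neg_smul, ← sub_eq_add_neg]
  rw [e2, inner_sub_left, inner_smul_left, inner_smul_left, J_inner hK (by fun_prop),
    J_inner hK continuous_id', hgw]
  simp only [conj_trivial, inner_smul_left]
  field_simp

lemma Dg_pos {K : Set (Eu n)} (hK : IsCompact K) (hv : volume K ≠ 0) (ξ v : Eu n) (hv0 : v ≠ 0) :
    0 < inner ℝ (Dg K ξ v) v := by
  have hZ := J_one_pos hK hv ξ
  have h := Dg_inner hK hv ξ v v
  set g := gb K ξ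
  suffices hs : 0 < J K (fun y => (inner ℝ (y - g) v : ℝ) * inner ℝ (y - g) v) ξ by
    rw [← h] at hs
    exact pos_of_mul_pos_right hs hZ.le
  unfold J
  rw [setIntegral_pos_iff_support_of_nonneg_ae]
  · have hnull : volume {y : Eu n | inner ℝ (y - g) v = 0} = 0 := by
      have h1 : {y : Eu n | inner ℝ (y - g) v = 0} =
          (fun y => y + (-g)) ⁻¹' ((LinearMap.ker (innerSL ℝ v).toLinearMap : Submodule ℝ (Eu n)) : Set (Eu n)) := by
        ext y
        simp [real_inner_comm, sub_eq_add_neg]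
      rw [h1, measure_preimage_add_right]
      apply Measure.addHaar_submodule
      intro htop
      have : v ∈ LinearMap.ker (innerSL ℝ v).toLinearMap := by rw [htop]; trivial
      simp at this
      exact hv0 this
    have hsub : K ⊆ ((Function.support fun y : Eu n => Real.exp (inner ℝ ξ y) •
        ((inner ℝ (y - g) v : ℝ) * inner ℝ (y - g) v)) ∩ K) ∪ {y : Eu n | inner ℝ (y - g) v = 0} := by
      intro y hy
      by_cases h0 : (inner ℝ (y - g) v : ℝ) = 0
      · exact Or.inr h0
      · refine Or.inl ⟨?_, hy⟩
        rw [Function.mem_support, smul_eq_mul]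
        exact mul_ne_zero (Real.exp_pos _).ne' (mul_ne_zero h0 h0)
    refine pos_iff_ne_zero.2 fun h0 => hv ?_
    exact measure_mono_null hsub (measure_union_null h0 hnull)
  · exact Filter.Eventually.of_forall fun y =>
      mul_nonneg (Real.exp_pos _).le (mul_self_nonneg _)
  · exact J_int hK (φ := fun y => (inner ℝ (y - g) v : ℝ) * inner ℝ (y - g) v) (by fun_prop) ξ

lemma gb_inj {K : Set (Eu n)} (hK : IsCompact K) (hv : volume K ≠ 0) :
    Function.Injective (gb K) := by
  intro ξ ξ' he
  by_contra hne
  have hw : ξ' - ξ ≠ 0 := sub_ne_zero.2 (Ne.symm hne)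
  have hd : ∀ t : ℝ, HasDerivAt (fun t : ℝ => inner ℝ (gb K (ξ + t • (ξ' - ξ))) (ξ' - ξ))
      (inner ℝ (Dg K (ξ + t • (ξ' - ξ)) (ξ' - ξ)) (ξ' - ξ)) t := by
    intro t
    have h1 : HasDerivAt (fun t : ℝ => ξ + t • (ξ' - ξ)) (ξ' - ξ) t := by
      have := ((hasDerivAt_id t).smul_const (ξ' - ξ)).const_add ξ
      simpa using this
    have h2 := (gb_deriv hK hv (ξ + t • (ξ' - ξ))).comp_hasDerivAt t h1
    have h3 := h2.inner ℝ (hasDerivAt_const t (ξ' - ξ))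
    simpa using h3
  have hm : StrictMono (fun t : ℝ => inner ℝ (gb K (ξ + t • (ξ' - ξ))) (ξ' - ξ)) := by
    apply strictMono_of_deriv_pos
    intro t
    rw [(hd t).deriv]
    exact Dg_pos hK hv _ _ hw
  have := hm (zero_lt_one (α := ℝ))
  simp [he] at this

lemma gb_mem {K : Set (Eu n)} (hK : IsCompact K) (hKc : Convex ℝ K) (hv : volume K ≠ 0) (ξ : Eu n) :
    gb K ξ ∈ K := by
  by_contra hc
  obtain ⟨f, u, h1, h2⟩ := geometric_hahn_banach_closed_point hKc hK.isClosed hc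
  have hZ := J_one_pos hK hv ξ
  obtain ⟨a, rfl⟩ := (InnerProductSpace.toDual ℝ (Eu n)).surjective f
  simp only [InnerProductSpace.toDual_apply_apply] at h1 h2
  have h3 := gb_inner hK hv ξ a
  have h4 : J K (fun y => (inner ℝ y a : ℝ)) ξ ≤ J K (fun _ => (1 : ℝ)) ξ * u := by
    unfold J
    rw [← integral_mul_const]
    refine setIntegral_mono_on (J_int hK (by fun_prop) ξ)
      (Integrable.mul_const (J_int hK (φ := fun _ => (1 : ℝ)) (by fun_prop) ξ :) _)
      hK.measurableSet fun y hy => ?_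
    have := h1 y hy
    rw [real_inner_comm] at this
    simp only [smul_eq_mul, mul_one]
    gcongr
  rw [h3] at h4
  have := le_of_mul_le_mul_left h4 hZ
  rw [real_inner_comm] at this
  linarith

lemma fp_closed (K : Set (Eu n)) : IsClosed (fp K) := by
  have : fp K = ⋂ q ∈ K - K, {η | inner ℝ η q ≤ 1} := by ext; simp [fp]
  rw [this]
  refine isClosed_biInter fun q _ => isClosed_le (by fun_prop) (by fun_prop)

lemma fp_bdd {K : Set (Eu n)} (hK : IsCompact K) (hKc : Convex ℝ K) (hv : volume K ≠ 0) :
    Bornology.IsBounded (fp K) := by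
  have hi : (interior K).Nonempty := by
    by_contra h
    rw [Set.not_nonempty_iff_eq_empty] at h
    have h1 := hKc.addHaar_frontier volume
    rw [frontier, h, Set.diff_empty, hK.isClosed.closure_eq] at h1
    exact hv h1
  obtain ⟨x, hx⟩ := hi
  obtain ⟨ε, hε, hb⟩ := Metric.isOpen_iff.1 isOpen_interior x hx
  refine (Metric.isBounded_closedBall (x := (0 : Eu n)) (r := 2 / ε)).subset fun η hη => ?_
  rw [mem_closedBall_zero_iff]
  by_cases h0 : η = 0
  · rw [h0, norm_zero]; positivity
  have hn0 : 0 < ‖η‖ := norm_pos_iff.2 h0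
  have h1 : x + (ε / 2 / ‖η‖) • η ∈ K := by
    apply interior_subset
    apply hb
    rw [mem_ball_iff_norm, add_sub_cancel_left, norm_smul, Real.norm_eq_abs, abs_of_pos (by positivity)]
    rw [div_mul_cancel₀ _ hn0.ne']
    linarith
  have h2 := hη _ ⟨_, h1, x, interior_subset hx, rfl⟩
  rw [show (fun x1 x2 : Eu n => x1 - x2) (x + (ε / 2 / ‖η‖) • η) x = (ε / 2 / ‖η‖) • η by simp,
    inner_smul_right, real_inner_self_eq_norm_sq] at h2
  rw [le_div_iff₀ hε]
  have : ε / 2 / ‖η‖ * ‖η‖ ^ 2 = ε / 2 * ‖η‖ := by field_simp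
  rw [this] at h2
  linarith

lemma klartag {K : Set (Eu n)} (hK : IsCompact K) (hKc : Convex ℝ K) (hv : volume K ≠ 0) :
    ∃ ξ ∈ (n : ℝ) • fp K, ENNReal.ofReal |(Dg K ξ).det| * volume ((n : ℝ) • fp K) ≤ volume K := by
  set N := (n : ℝ) • fp K with hN
  have hcpt : IsCompact N :=
    (Metric.isCompact_of_isClosed_isBounded (fp_closed K) (fp_bdd hK hKc hv)).smul _
  by_cases h0 : volume N = 0
  · refine ⟨0, ⟨0, ?_, by simp⟩, by simp [h0]⟩
    intro q _; simp
  have ht : volume N ≠ ⊤ := hcpt.measure_lt_top.ne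
  have hd : ∀ x ∈ N, HasFDerivWithinAt (gb K) (Dg K x) N x := fun x _ =>
    (gb_deriv hK hv x).hasFDerivWithinAt
  have himg := lintegral_abs_det_fderiv_eq_addHaar_image volume hcpt.measurableSet hd
    (gb_inj hK hv).injOn
  obtain ⟨ξ, hξ, hle⟩ := exists_le_setLAverage h0 ht
    (aemeasurable_ofReal_abs_det_fderivWithin volume hcpt.measurableSet hd)
  refine ⟨ξ, hξ, ?_⟩
  rw [setLAverage_eq, himg] at hle
  calc _ ≤ (volume (gb K '' N) / volume N) * volume N := by gcongr
    _ = volume (gb K '' N) := ENNReal.div_mul_cancel h0 ht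
    _ ≤ volume K := measure_mono (by rintro _ ⟨x, _, rfl⟩; exact gb_mem hK hKc hv x)

end Klartag
end MPos

namespace MPos

lemma whiten {n : ℕ} (A : Eu n →L[ℝ] Eu n) (hs : ∀ v w, inner ℝ (A v) w = inner ℝ v (A w))
    (hpos : ∀ v, v ≠ 0 → 0 < inner ℝ (A v) v) :
    ∃ (T : Eu n →L[ℝ] Eu n) (u : OrthonormalBasis (Fin n) ℝ (Eu n)) (lam : Fin n → ℝ),
      (∀ i, 0 < lam i) ∧ (∀ i, A (u i) = lam i • u i) ∧
      (∀ x, ‖T x‖ ^ 2 = ∑ i, (lam i)⁻¹ * (inner ℝ x (u i)) ^ 2) ∧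
      (∀ x y, inner ℝ (T x) y = inner ℝ x (T y)) ∧ T.det ^ 2 * A.det = 1 := by
  have hA : (A : Eu n →ₗ[ℝ] Eu n).IsSymmetric := hs
  have hf : Module.finrank ℝ (Eu n) = n := by simp
  set u := hA.eigenvectorBasis hf with hu
  set lam := hA.eigenvalues hf with hlam
  have hAu : ∀ i, A (u i) = lam i • u i := fun i => hA.apply_eigenvectorBasis hf i
  have hl : ∀ i, 0 < lam i := by
    intro i
    have h1 := hpos (u i) (u.orthonormal.ne_zero i)
    rw [hAu, inner_smul_left, real_inner_self_eq_norm_sq, u.orthonormal.1 i] at h1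
    simpa using h1
  set d : Fin n → ℝ := fun i => (√(lam i))⁻¹ with hd
  set T0 := Matrix.toLin u.toBasis u.toBasis (Matrix.diagonal d) with hT0
  have hT : ∀ x, T0 x = ∑ j, (d j * inner ℝ (u j) x) • u j := by
    intro x
    rw [hT0, Matrix.toLin_apply]
    refine Finset.sum_congr rfl fun j _ => ?_
    rw [Matrix.mulVec_diagonal]
    simp [OrthonormalBasis.repr_apply_apply]
  have hTi : ∀ x i, inner ℝ (T0 x) (u i) = d i * inner ℝ x (u i) := by
    intro x i
    rw [hT, sum_inner]
    simp only [inner_smul_left]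
    rw [Finset.sum_eq_single i]
    · rw [real_inner_self_eq_norm_sq, u.orthonormal.1 i]
      simp [real_inner_comm]
    · intro j _ hj
      rw [u.orthonormal.2 hj]; simp
    · simp
  refine ⟨T0.toContinuousLinearMap, u, lam, hl, hAu, ?_, ?_, ?_⟩
  · intro x
    rw [← u.sum_sq_norm_inner_right]
    refine Finset.sum_congr rfl fun i _ => ?_
    rw [real_inner_comm]
    simp only [LinearMap.coe_toContinuousLinearMap', hTi, Real.norm_eq_abs, sq_abs]
    rw [mul_pow, hd]
    simp only [inv_pow]
    rw [Real.sq_sqrt (hl i).le]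
  · intro x y
    simp only [LinearMap.coe_toContinuousLinearMap']
    rw [← u.sum_inner_mul_inner (T0 x) y, ← u.sum_inner_mul_inner x (T0 y)]
    refine Finset.sum_congr rfl fun i _ => ?_
    rw [hTi, real_inner_comm (T0 y), hTi, real_inner_comm y]
    ring
  · have e1 : A.det = ∏ i, lam i := by
      have := hA.det_eq_prod_eigenvalues hf
      simpa using this
    have e2 : (T0.toContinuousLinearMap).det = ∏ i, d i := by
      have : (T0.toContinuousLinearMap).det = LinearMap.det T0 := rfl
      rw [this, hT0, LinearMap.det_toLin, Matrix.det_diagonal]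
    rw [e1, e2, ← Finset.prod_pow, ← Finset.prod_mul_distrib]
    refine Finset.prod_eq_one fun i _ => ?_
    rw [hd]
    simp only [inv_pow]
    rw [Real.sq_sqrt (hl i).le, inv_mul_cancel₀ (hl i).ne']

lemma ball_upper (n : ℕ) :
    volume (Metric.closedBall (0 : Eu n) (2 * √n)) ≤ ENNReal.ofReal ((Real.exp 2 * (2 * π)) ^ n) := by
  have h1 : ∀ x ∈ Metric.closedBall (0 : Eu n) (2 * √n),
      (1 : ℝ≥0∞) ≤ ENNReal.ofReal (Real.exp (2 * n)) * gd x := by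
    intro x hx
    rw [mem_closedBall_zero_iff] at hx
    rw [gd, ← ENNReal.ofReal_mul (by positivity), ← Real.exp_add, ← ENNReal.ofReal_one]
    apply ENNReal.ofReal_le_ofReal
    apply Real.one_le_exp
    have : ‖x‖ ^ 2 ≤ (2 * √n) ^ 2 := by gcongr
    rw [mul_pow, Real.sq_sqrt (by positivity)] at this
    linarith
  calc volume (Metric.closedBall (0 : Eu n) (2 * √n))
      = ∫⁻ x in Metric.closedBall (0 : Eu n) (2 * √n), 1 := by simp
    _ ≤ ∫⁻ x in Metric.closedBall (0 : Eu n) (2 * √n), ENNReal.ofReal (Real.exp (2 * n)) * gd x :=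
        setLIntegral_mono' Metric.isClosed_closedBall.measurableSet h1
    _ ≤ ∫⁻ x, ENNReal.ofReal (Real.exp (2 * n)) * gd x := setLIntegral_le_lintegral _ _
    _ = ENNReal.ofReal (Real.exp (2 * n)) * gm n Set.univ := by
        rw [lintegral_const_mul _ gd_meas, gm, withDensity_apply _ MeasurableSet.univ,
          Measure.restrict_univ]
    _ ≤ _ := by
        rw [gm_univ_eq, ← ENNReal.ofReal_mul (by positivity)]
        apply ENNReal.ofReal_le_ofReal
        rw [mul_pow, ← Real.exp_nat_mul, mul_comm (n : ℝ) 2]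
        gcongr
        rw [← Real.rpow_natCast]
        apply Real.rpow_le_rpow_of_exponent_le
        · linarith [Real.pi_gt_three]
        · have : (0 : ℝ) ≤ n := by positivity
          linarith

lemma tv_image {n : ℕ} (T : Eu n →L[ℝ] Eu n) (hT : T.det ≠ 0) (ξ ξ2 : Eu n)
    (h : ∀ y, inner ℝ ξ2 (T y) = inner ℝ ξ y) {S : Set (Eu n)} (hS : MeasurableSet S) :
    tv ξ2 (T '' S) = ENNReal.ofReal |T.det| * tv ξ S := by
  unfold tv
  have hinj : Function.Injective T :=
    (T.toContinuousLinearEquivOfDetNeZero hT).injective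
  rw [lintegral_image_eq_lintegral_abs_det_fderiv_mul volume hS (f' := fun _ => T)
    (fun x _ => T.hasFDerivAt.hasFDerivWithinAt) hinj.injOn]
  simp_rw [h]
  rw [lintegral_const_mul]
  fun_prop

lemma tv_eq_J {n : ℕ} {K : Set (Eu n)} (hK : IsCompact K) (ξ : Eu n) :
    tv ξ K = ENNReal.ofReal (J K (fun _ => (1 : ℝ)) ξ) := by
  unfold J tv
  rw [ofReal_integral_eq_lintegral_ofReal (J_int hK (φ := fun _ => (1 : ℝ)) continuous_const ξ)]
  · simp
  · exact Filter.Eventually.of_forall fun y => by simp [(Real.exp_pos _).le]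

lemma cheb {n : ℕ} (hn : 1 ≤ n) {K : Set (Eu n)} (hK : IsCompact K) (hv : volume K ≠ 0) (ξ : Eu n)
    (T : Eu n →L[ℝ] Eu n) (u : OrthonormalBasis (Fin n) ℝ (Eu n)) (lam : Fin n → ℝ)
    (hl : ∀ i, 0 < lam i) (hA : ∀ i, Dg K ξ (u i) = lam i • u i)
    (hT : ∀ x, ‖T x‖ ^ 2 = ∑ i, (lam i)⁻¹ * (inner ℝ x (u i)) ^ 2) :
    ENNReal.ofReal (3 / 4) * tv ξ K ≤ tv ξ (K ∩ {y | ‖T (y - gb K ξ)‖ ≤ 2 * √n}) := by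
  have hZ := J_one_pos hK hv ξ
  set Z := J K (fun _ => (1 : ℝ)) ξ with hZd
  set g := gb K ξ with hg
  set E := {y | ‖T (y - g)‖ ≤ 2 * √n} with hE
  have hEm : MeasurableSet E := by
    apply IsClosed.measurableSet
    exact isClosed_le (by fun_prop) (by fun_prop)
  have hn' : (1 : ℝ) ≤ n := by exact_mod_cast hn
  have hIntEq : J K (fun y => ‖T (y - g)‖ ^ 2) ξ = n * Z := by
    have e : ∀ y, Real.exp (inner ℝ ξ y) • ‖T (y - g)‖ ^ 2 =
        ∑ i, (lam i)⁻¹ * (Real.exp (inner ℝ ξ y) • ((inner ℝ (y - g) (u i) : ℝ) * inner ℝ (y - g) (u i))) := by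
      intro y
      rw [hT, Finset.smul_sum]
      refine Finset.sum_congr rfl fun i _ => ?_
      simp only [smul_eq_mul]; ring
    rw [J]
    simp_rw [e]
    rw [integral_finsetSum]
    · have : ∀ i ∈ (Finset.univ : Finset (Fin n)), ∫ y in K, (lam i)⁻¹ * (Real.exp (inner ℝ ξ y) •
          ((inner ℝ (y - g) (u i) : ℝ) * inner ℝ (y - g) (u i))) = Z := by
        intro i _
        rw [integral_const_mul]
        have h2 := Dg_inner hK hv ξ (u i) (u i)
        rw [← hZd, ← hg, J] at h2
        rw [← h2, hA, inner_smul_left, real_inner_self_eq_norm_sq, u.orthonormal.1 i]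
        have := (hl i).ne'
        simp only [conj_trivial]
        field_simp
      rw [Finset.sum_congr rfl this]
      simp
    · intro i _
      exact Integrable.const_mul (J_int hK (φ := fun y => (inner ℝ (y - g) (u i) : ℝ) *
        inner ℝ (y - g) (u i)) (by fun_prop) ξ :) _
  -- split
  have hZi := J_int hK (φ := fun _ => (1 : ℝ)) continuous_const ξ
  have hQi := J_int hK (φ := fun y => ‖T (y - g)‖ ^ 2) (by fun_prop) ξ
  have hKm := hK.measurableSet
  have key : 3 / 4 * Z ≤ ∫ y in K ∩ E, Real.exp (inner ℝ ξ y) • (1 : ℝ) := by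
    have hsplit := integral_inter_add_sdiff (μ := volume) (s := K) (t := E) hEm hZi
    have hsub : ∫ y in K \ E, Real.exp (inner ℝ ξ y) • (1 : ℝ) ≤ Z / 4 := by
      have h3 : ∫ y in K \ E, (4 * n : ℝ) * (Real.exp (inner ℝ ξ y) • (1 : ℝ)) ≤
          ∫ y in K \ E, Real.exp (inner ℝ ξ y) • ‖T (y - g)‖ ^ 2 := by
        refine setIntegral_mono_on ?_ ?_ (hKm.diff hEm) fun y hy => ?_
        · exact Integrable.const_mul (hZi.mono_set Set.sdiff_subset :) _
        · exact hQi.mono_set Set.sdiff_subset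
        · have h4 : 2 * √n < ‖T (y - g)‖ := not_le.1 hy.2
          have h5 : (2 * √n) ^ 2 ≤ ‖T (y - g)‖ ^ 2 := by gcongr
          rw [mul_pow, Real.sq_sqrt (by positivity)] at h5
          simp only [smul_eq_mul, mul_one]
          rw [mul_comm]
          gcongr
          linarith
      have h6 : ∫ y in K \ E, Real.exp (inner ℝ ξ y) • ‖T (y - g)‖ ^ 2 ≤ n * Z := by
        rw [← hIntEq, J]
        refine setIntegral_mono_set hQi ?_ (Filter.Eventually.of_forall Set.sdiff_subset)
        exact Filter.Eventually.of_forall fun y => by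
          simp only [Pi.zero_apply, smul_eq_mul]; positivity
      rw [integral_const_mul] at h3
      have h7 := h3.trans h6
      have : (n : ℝ) * (4 * ∫ y in K \ E, Real.exp (inner ℝ ξ y) • (1 : ℝ)) ≤ n * Z := by linarith
      have := le_of_mul_le_mul_left this (by linarith)
      linarith
    have hZJ : ∫ y in K, Real.exp (inner ℝ ξ y) • (1 : ℝ) = Z := rfl
    rw [hZJ] at hsplit
    linarith
  rw [tv_eq_J hK, ← ENNReal.ofReal_mul (by norm_num)]
  refine (ENNReal.ofReal_le_ofReal key).trans ?_
  rw [ofReal_integral_eq_lintegral_ofReal (hZi.mono_set Set.inter_subset_left)]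
  · simp [tv]
  · exact Filter.Eventually.of_forall fun y => by simp [(Real.exp_pos _).le]

end MPos

namespace MPos

noncomputable def CB : ℝ := Real.exp 2 * (2 * π) / cP

lemma cP_pos : 0 < cP := by unfold cP; positivity
lemma CB_pos : 0 < CB := by have := cP_pos; unfold CB; positivity

lemma fp_image {n : ℕ} (K : Set (Eu n)) (T : Eu n →L[ℝ] Eu n)
    (hs : ∀ x y, inner ℝ (T x) y = inner ℝ x (T y)) : fp (T '' K) = T ⁻¹' fp K := by
  ext η
  constructor
  · rintro h _ ⟨x, hx, y, hy, rfl⟩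
    have := h _ ⟨_, ⟨x, hx, rfl⟩, _, ⟨y, hy, rfl⟩, rfl⟩
    rw [hs]
    simpa using this
  · rintro h _ ⟨_, ⟨x, hx, rfl⟩, _, ⟨y, hy, rfl⟩, rfl⟩
    have := h _ ⟨x, hx, y, hy, rfl⟩
    rw [hs] at this
    simpa using this

/-- existence of an M-position for convex bodies -/
lemma mpos {n : ℕ} (hn : 1 ≤ n) {K : Set (Eu n)} (hK : IsCompact K) (hKc : Convex ℝ K)
    (hv : volume K ≠ 0) :
    ∃ (L : Eu n →L[ℝ] Eu n) (b : Eu n) (ρ : ℝ), |L.det| = 1 ∧ 0 < ρ ∧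
      volume (Metric.closedBall (0 : Eu n) ρ) ≤ ENNReal.ofReal (CB ^ n) * volume K ∧
      ENNReal.ofReal ((3 / 4 * Real.exp (-1)) ^ n) * volume K ≤
        volume (K ∩ {y | ‖L (y - b)‖ ≤ ρ}) := by
  have hn' : (1 : ℝ) ≤ n := by exact_mod_cast hn
  have hne : K.Nonempty := by
    by_contra h
    rw [Set.not_nonempty_iff_eq_empty] at h
    simp [h] at hv
  obtain ⟨ξ, hξ, hdet⟩ := klartag hK hKc hv
  have hZ := J_one_pos hK hv ξ
  have hosc : ∀ y ∈ K, ∀ y' ∈ K, inner ℝ ξ (y - y') ≤ n := by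
    intro y hy y' hy'
    obtain ⟨η, hη, rfl⟩ := hξ
    have := hη _ ⟨y, hy, y', hy', rfl⟩
    show inner ℝ ((n : ℝ) • η) (y - y') ≤ n
    rw [inner_smul_left]
    simp only [conj_trivial]
    have h2 : inner ℝ η (y - y') ≤ 1 := this
    nlinarith
  have hsym : ∀ v w, inner ℝ (Dg K ξ v) w = inner ℝ v (Dg K ξ w) := by
    intro v w
    have h1 := Dg_inner hK hv ξ v w
    have h2 := Dg_inner hK hv ξ w v
    have h3 : J K (fun y => (inner ℝ (y - gb K ξ) v : ℝ) * inner ℝ (y - gb K ξ) w) ξ =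
        J K (fun y => (inner ℝ (y - gb K ξ) w : ℝ) * inner ℝ (y - gb K ξ) v) ξ := by
      congr 1; ext y; ring
    rw [real_inner_comm (Dg K ξ w) v]
    refine mul_left_cancel₀ hZ.ne' ?_
    rw [h1, h2, h3]
  obtain ⟨T, u, lam, hl, hAu, hTn, hTs, hTd⟩ := whiten (Dg K ξ) hsym (Dg_pos hK hv ξ)
  have hch := cheb hn hK hv ξ T u lam hl hAu hTn
  set g := gb K ξ with hg
  have hT0 : T.det ≠ 0 := by
    intro h; rw [h] at hTd; norm_num at hTd
  set t := |T.det| with ht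
  have htp : 0 < t := abs_pos.2 hT0
  have hAd : |(Dg K ξ).det| = (t ^ 2)⁻¹ := by
    rw [ht, sq_abs]
    rw [eq_inv_of_mul_eq_one_right hTd, abs_of_nonneg (by positivity)]
  obtain ⟨ξ2, hξ2⟩ := (T.toContinuousLinearEquivOfDetNeZero hT0).surjective ξ
  have hξ2' : T ξ2 = ξ := hξ2
  have hin : ∀ y, inner ℝ ξ2 (T y) = inner ℝ ξ y := by
    intro y; rw [← hTs, hξ2']
  set E := {y | ‖T (y - g)‖ ≤ 2 * √n} with hE
  have hEm : MeasurableSet E := by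
    apply IsClosed.measurableSet
    exact isClosed_le (by fun_prop) (by fun_prop)
  have htK : tv ξ K ≠ 0 ∧ tv ξ K ≠ ⊤ := by
    rw [tv_eq_J hK]; exact ⟨by simpa using hZ, ENNReal.ofReal_ne_top⟩
  have hgood : Good (T '' K) ξ2 (T g) := by
    refine ⟨hK.image T.continuous, hKc.linear_image T.toLinearMap, ?_, ?_, ?_, ?_⟩
    · rintro _ ⟨y, hy, rfl⟩ _ ⟨y', hy', rfl⟩
      rw [← map_sub, hin]
      exact hosc y hy y' hy'
    · rw [tv_image T hT0 ξ ξ2 hin hK.measurableSet]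
      exact mul_ne_zero (by simpa using hT0) htK.1
    · rw [tv_image T hT0 ξ ξ2 hin hK.measurableSet]
      exact ENNReal.mul_ne_top ENNReal.ofReal_ne_top htK.2
    · have e : T '' K ∩ Metric.closedBall (T g) (2 * √n) = T '' (K ∩ E) := by
        ext z
        constructor
        · rintro ⟨⟨y, hy, rfl⟩, hz⟩
          refine ⟨y, ⟨hy, ?_⟩, rfl⟩
          rw [mem_closedBall_iff_norm, ← map_sub] at hz
          exact hz
        · rintro ⟨y, ⟨hy, hyE⟩, rfl⟩
          refine ⟨⟨y, hy, rfl⟩, ?_⟩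
          rw [mem_closedBall_iff_norm, ← map_sub]
          exact hyE
      rw [e, tv_image T hT0 ξ ξ2 hin hK.measurableSet,
        tv_image T hT0 ξ ξ2 hin (hK.measurableSet.inter hEm), mul_left_comm]
      gcongr
  have hpolar := hgood.polar hn (hne.image _)
  rw [fp_image K T hTs, Measure.addHaar_smul_of_nonneg _ (by positivity),
    Measure.addHaar_preimage_continuousLinearMap _ hT0, mul_left_comm,
    ← Measure.addHaar_smul_of_nonneg _ (by positivity)] at hpolar
  have habs : |(LinearMap.det (T : Eu n →ₗ[ℝ] Eu n))⁻¹| = t⁻¹ := by rw [abs_inv]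
  rw [habs] at hpolar
  have hvK : ENNReal.ofReal (cP ^ n / t) ≤ volume K := by
    refine le_trans ?_ hdet
    rw [hAd]
    calc ENNReal.ofReal (cP ^ n / t) = ENNReal.ofReal t⁻¹ * ENNReal.ofReal (cP ^ n) := by
          rw [← ENNReal.ofReal_mul (by positivity)]; congr 1; field_simp
      _ ≤ ENNReal.ofReal t⁻¹ * (ENNReal.ofReal t⁻¹ * volume ((n : ℝ) • fp K)) := by gcongr
      _ = _ := by
          rw [← mul_assoc, ← ENNReal.ofReal_mul (by positivity)]
          congr 2; field_simp
  -- normalise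
  set s := t ^ (-(1 / (n : ℝ))) with hs
  have hsp : 0 < s := Real.rpow_pos_of_pos htp _
  have hsn : s ^ n = t⁻¹ := by
    rw [hs, ← Real.rpow_natCast, ← Real.rpow_mul htp.le]
    rw [show -(1 / (n : ℝ)) * n = -1 by field_simp, Real.rpow_neg_one]
  refine ⟨s • T, g, s * (2 * √n), ?_, by positivity, ?_, ?_⟩
  · have : (s • T).det = s ^ n * T.det := by
      show LinearMap.det (s • (T : Eu n →ₗ[ℝ] Eu n)) = _
      rw [LinearMap.det_smul]
      simp
    rw [this, hsn, abs_mul, abs_of_pos (inv_pos.2 htp), ← ht, inv_mul_cancel₀ htp.ne']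
  · have e : Metric.closedBall (0 : Eu n) (s * (2 * √n)) =
        s • Metric.closedBall (0 : Eu n) (2 * √n) := by
      rw [smul_closedBall _ _ (by positivity)]
      simp [abs_of_pos hsp]
    rw [e, Measure.addHaar_smul_of_nonneg _ hsp.le]
    have hf : Module.finrank ℝ (Eu n) = n := by simp
    rw [hf, hsn]
    calc _ ≤ ENNReal.ofReal t⁻¹ * ENNReal.ofReal ((Real.exp 2 * (2 * π)) ^ n) := by
          gcongr; exact ball_upper n
      _ = ENNReal.ofReal (CB ^ n) * ENNReal.ofReal (cP ^ n / t) := by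
          have := cP_pos
          have := CB_pos
          rw [← ENNReal.ofReal_mul (by positivity), ← ENNReal.ofReal_mul (by positivity)]
          congr 1
          rw [CB, div_pow]
          field_simp
      _ ≤ _ := by gcongr
  · have eE : {y | ‖(s • T) (y - g)‖ ≤ s * (2 * √n)} = E := by
      ext y
      show ‖s • T (y - g)‖ ≤ s * (2 * √n) ↔ ‖T (y - g)‖ ≤ 2 * √n
      rw [norm_smul, Real.norm_eq_abs, abs_of_pos hsp, mul_le_mul_iff_right₀ hsp]
    rw [eE]
    obtain ⟨y0, hy0, hmin⟩ := hK.exists_isMinOn hne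
      (f := fun y : Eu n => (inner ℝ ξ y : ℝ)) (by fun_prop)
    set m : ℝ := inner ℝ ξ y0 with hm
    have h1 : ENNReal.ofReal (Real.exp m) * volume K ≤ tv ξ K := by
      unfold tv
      rw [← setLIntegral_const]
      refine setLIntegral_mono' hK.measurableSet fun y hy => ?_
      apply ENNReal.ofReal_le_ofReal
      exact Real.exp_le_exp.2 (hmin hy)
    have h2 : tv ξ (K ∩ E) ≤ ENNReal.ofReal (Real.exp (m + n)) * volume (K ∩ E) := by
      unfold tv
      rw [← setLIntegral_const]
      refine setLIntegral_mono' (hK.measurableSet.inter hEm) fun y hy => ?_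
      apply ENNReal.ofReal_le_ofReal
      refine Real.exp_le_exp.2 ?_
      have := hosc y hy.1 y0 hy0
      rw [inner_sub_right] at this
      linarith
    calc ENNReal.ofReal ((3 / 4 * Real.exp (-1)) ^ n) * volume K
        ≤ ENNReal.ofReal (Real.exp (-(m + n)) * (3 / 4) * Real.exp m) * volume K := by
          gcongr
          rw [mul_pow, ← Real.exp_nat_mul]
          have e3 : Real.exp (-(m + n)) * (3 / 4) * Real.exp m = 3 / 4 * Real.exp (n * -1) := by
            rw [mul_right_comm, ← Real.exp_add, mul_comm]; congr 2; ring
          rw [e3]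
          gcongr
          exact pow_le_of_le_one (by norm_num) (by norm_num) (by omega)
      _ = ENNReal.ofReal (Real.exp (-(m + n))) * (ENNReal.ofReal (3 / 4) *
            (ENNReal.ofReal (Real.exp m) * volume K)) := by
          rw [← mul_assoc, ← mul_assoc, ← ENNReal.ofReal_mul (by positivity),
            ← ENNReal.ofReal_mul (by positivity)]
      _ ≤ ENNReal.ofReal (Real.exp (-(m + n))) *
            (ENNReal.ofReal (Real.exp (m + n)) * volume (K ∩ E)) := by
          refine mul_le_mul_right ?_ _
          exact (mul_le_mul_right h1 _).trans (hch.trans h2)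
      _ = _ := by
          rw [← mul_assoc, ← ENNReal.ofReal_mul (by positivity), ← Real.exp_add]
          simp

end MPos

namespace MPos

section Red
variable {n : ℕ} {S : Set (Eu n)} {V : Eu n → ℝ}

/-- level sets -/
def Lv (S : Set (Eu n)) (V : Eu n → ℝ) (c : ℝ) : Set (Eu n) := {x ∈ S | V x < c}

lemma Lv_open (hS : IsOpen S) (hV : ConvexOn ℝ S V) (c : ℝ) : IsOpen (Lv S V c) := by
  have h1 : ContinuousOn V S := hV.continuousOn hS
  exact h1.isOpen_inter_preimage hS isOpen_Iio

lemma Lv_convex (hV : ConvexOn ℝ S V) (c : ℝ) : Convex ℝ (Lv S V c) := hV.convex_lt c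

lemma Lv_vol (hV : ConvexOn ℝ S V) {x0 : Eu n} (hx0 : x0 ∈ S) (δ s : ℝ) (hs : 1 ≤ s) :
    volume (Lv S V (V x0 + s * δ)) ≤ ENNReal.ofReal (s ^ n) * volume (Lv S V (V x0 + δ)) := by
  have hs0 : 0 < s := by linarith
  have hsub : AffineMap.homothety x0 (s⁻¹) '' Lv S V (V x0 + s * δ) ⊆ Lv S V (V x0 + δ) := by
    rintro _ ⟨x, hx, rfl⟩
    have hs1 : s⁻¹ ≤ 1 := inv_le_one_of_one_le₀ hs
    have e : AffineMap.homothety x0 (s⁻¹) x = s⁻¹ • x + (1 - s⁻¹) • x0 := by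
      rw [AffineMap.homothety_apply]
      simp only [vsub_eq_sub, vadd_eq_add]
      module
    rw [e]
    refine ⟨hV.1 hx.1 hx0 (by positivity) (by linarith) (by ring), ?_⟩
    have h1 := hV.2 hx.1 hx0 (by positivity : (0 : ℝ) ≤ s⁻¹)
      (by linarith : (0 : ℝ) ≤ 1 - s⁻¹) (by ring)
    simp only [smul_eq_mul] at h1
    have h2 : s⁻¹ * V x < s⁻¹ * (V x0 + s * δ) := by
      have := hx.2
      gcongr
    have h3 : s⁻¹ * (V x0 + s * δ) = s⁻¹ * V x0 + δ := by field_simp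
    linarith
  have h := measure_mono (μ := volume) hsub
  rw [Measure.addHaar_image_homothety] at h
  have hf : Module.finrank ℝ (Eu n) = n := by simp
  rw [hf, abs_of_pos (by positivity)] at h
  calc volume (Lv S V (V x0 + s * δ)) = ENNReal.ofReal (s ^ n) *
        (ENNReal.ofReal (s⁻¹ ^ n) * volume (Lv S V (V x0 + s * δ))) := by
        rw [← mul_assoc, ← ENNReal.ofReal_mul (by positivity), ← mul_pow, mul_inv_cancel₀ hs0.ne']
        simp
    _ ≤ _ := by gcongr

lemma lower_bd {m v β : ℝ} (hn : 1 ≤ n) (hm : 0 < m) (hv : 0 < v) (hβ : 0 < β)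
    (h : v < m + m * (n / β)) : m ^ (-β) * Real.exp (-n) ≤ v ^ (-β) := by
  have h0 : 0 < 1 + n / β := by positivity
  have h1 : v ≤ m * (1 + n / β) := by linarith
  have h2 : (m * (1 + n / β)) ^ (-β) ≤ v ^ (-β) :=
    Real.rpow_le_rpow_of_nonpos hv h1 (by linarith)
  refine le_trans ?_ h2
  rw [Real.mul_rpow hm.le h0.le]
  gcongr
  rw [Real.rpow_neg h0.le, Real.exp_neg]
  gcongr
  calc (1 + n / β) ^ β ≤ (Real.exp (n / β)) ^ β := by
        gcongr
        rw [add_comm]; exact Real.add_one_le_exp _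
    _ = Real.exp n := by rw [← Real.exp_mul]; congr 1; field_simp

lemma upper_bd {m v β β₀ s : ℝ} (hn : 1 ≤ n) (hm : 0 < m) (hβ₀ : 1 < β₀) (hβ : β₀ * n ≤ β)
    (hs : 1 ≤ s) (h : m + s * (m * (n / β)) ≤ v) :
    v ^ (-β) ≤ m ^ (-β) * ((s / β₀) ^ (-β₀)) ^ n := by
  have hn' : (1 : ℝ) ≤ n := by exact_mod_cast hn
  have hbn : 0 < β₀ * n := by positivity
  have hβp : 0 < β := by linarith
  have h0 : 0 < 1 + s * (n / β) := by positivity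
  have h1 : m * (1 + s * (n / β)) ≤ v := by linarith
  have h2 : v ^ (-β) ≤ (m * (1 + s * (n / β))) ^ (-β) :=
    Real.rpow_le_rpow_of_nonpos (by positivity) h1 (by linarith)
  refine h2.trans ?_
  rw [Real.mul_rpow hm.le h0.le]
  gcongr
  have hp : 1 ≤ β / (β₀ * n) := by rw [le_div_iff₀ hbn]; linarith
  have hb := one_add_mul_self_le_rpow_one_add (s := s * (n / β)) (by
    have : 0 ≤ s * (n / β) := by positivity
    linarith) hp
  have e1 : β / (β₀ * n) * (s * (n / β)) = s / β₀ := by field_simp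
  rw [e1] at hb
  have e2 : (1 + s * (n / β)) ^ (-β) =
      ((1 + s * (n / β)) ^ (β / (β₀ * n))) ^ (-(β₀ * n)) := by
    rw [← Real.rpow_mul h0.le]; congr 1; field_simp
  have e3 : ((s / β₀) ^ (-β₀)) ^ n = (s / β₀) ^ (-(β₀ * n)) := by
    rw [← Real.rpow_natCast, ← Real.rpow_mul (by positivity)]; congr 1; ring
  rw [e2, e3]
  refine Real.rpow_le_rpow_of_nonpos (by positivity) ?_ (by linarith)
  linarith

/-- constant in the comparison with the level set -/
noncomputable def CL (β₀ : ℝ) : ℝ := 2 + 2 * β₀ ^ β₀ * (1 - 2 ^ (1 - β₀))⁻¹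

lemma q_bd {β₀ : ℝ} (hβ₀ : 1 < β₀) : (0 : ℝ) < 2 ^ (1 - β₀) ∧ (2 : ℝ) ^ (1 - β₀) < 1 :=
  ⟨by positivity, Real.rpow_lt_one_of_one_lt_of_neg (by norm_num) (by linarith)⟩

lemma term_bd {β₀ : ℝ} (hn : 1 ≤ n) (hβ₀ : 1 < β₀) (k : ℕ) :
    (((2 : ℝ) ^ k / β₀) ^ (-β₀)) ^ n * ((2 : ℝ) ^ (k + 1)) ^ n ≤
      (2 * β₀ ^ β₀) ^ n * ((2 : ℝ) ^ (1 - β₀)) ^ k := by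
  obtain ⟨hq0, hq1⟩ := q_bd hβ₀
  have e : ((2 : ℝ) ^ k / β₀) ^ (-β₀) * (2 : ℝ) ^ (k + 1) =
      2 * β₀ ^ β₀ * ((2 : ℝ) ^ (1 - β₀)) ^ k := by
    rw [Real.div_rpow (by positivity) (by positivity), Real.rpow_neg (by linarith : (0 : ℝ) ≤ β₀),
      div_inv_eq_mul]
    have : ((2 : ℝ) ^ (1 - β₀)) ^ k = ((2 : ℝ) ^ k) ^ (-β₀) * 2 ^ k := by
      rw [← Real.rpow_natCast, ← Real.rpow_natCast, ← Real.rpow_mul (by norm_num),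
        ← Real.rpow_mul (by norm_num), ← Real.rpow_add (by norm_num)]
      congr 1; ring
    rw [this]; ring
  rw [← mul_pow, e, mul_pow]
  gcongr
  exact pow_le_of_le_one (by positivity) (pow_le_one₀ hq0.le hq1.le) (by omega)

lemma CL_bd {β₀ : ℝ} (hn : 1 ≤ n) (hβ₀ : 1 < β₀) :
    2 + (2 * β₀ ^ β₀) ^ n * (1 - 2 ^ (1 - β₀))⁻¹ ≤ CL β₀ ^ n := by
  obtain ⟨hq0, hq1⟩ := q_bd hβ₀
  have hG : 1 ≤ (1 - (2 : ℝ) ^ (1 - β₀))⁻¹ := by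
    rw [one_le_inv₀ (by linarith)]; linarith
  have h1 : (2 : ℝ) ≤ 2 ^ n := le_self_pow₀ (by norm_num) (by omega)
  have h2 : (1 - (2 : ℝ) ^ (1 - β₀))⁻¹ ≤ (1 - (2 : ℝ) ^ (1 - β₀))⁻¹ ^ n :=
    le_self_pow₀ hG (by omega)
  have hb : 0 < 2 * β₀ ^ β₀ := by positivity
  calc _ ≤ 2 ^ n + (2 * β₀ ^ β₀) ^ n * (1 - (2 : ℝ) ^ (1 - β₀))⁻¹ ^ n := by gcongr
    _ = 2 ^ n + (2 * β₀ ^ β₀ * (1 - (2 : ℝ) ^ (1 - β₀))⁻¹) ^ n := by rw [mul_pow (2 * β₀ ^ β₀)]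
    _ ≤ _ := pow_add_pow_le (by norm_num) (by
          have : 0 < 1 - (2 : ℝ) ^ (1 - β₀) := by linarith
          positivity) (by omega)

lemma mass_bd {β₀ β : ℝ} (hn : 1 ≤ n) (hβ₀ : 1 < β₀) (hβ : β₀ * n ≤ β) (hS : IsOpen S)
    (hV : ConvexOn ℝ S V) (hVp : ∀ x ∈ S, 0 < V x) (f : Eu n → ℝ)
    (hf : ∀ x ∈ S, f x = V x ^ (-β)) (hf0 : ∀ x ∉ S, f x = 0) {x0 : Eu n} (hx0 : x0 ∈ S)
    (hM : ∀ᵐ x, ENNReal.ofReal (f x) ≤ ENNReal.ofReal (2 * f x0))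
    (h1 : ∫⁻ x, ENNReal.ofReal (f x) = 1) :
    1 ≤ ENNReal.ofReal (f x0 * CL β₀ ^ n) * volume (Lv S V (V x0 + V x0 * (n / β))) := by
  have hn' : (1 : ℝ) ≤ n := by exact_mod_cast hn
  have hβp : 0 < β := lt_of_lt_of_le (by positivity) hβ
  set m := V x0 with hm
  have hmp : 0 < m := hVp x0 hx0
  set δ := m * (n / β) with hδ
  have hδp : 0 < δ := by positivity
  set a := f x0 with ha
  have ha' : a = m ^ (-β) := hf x0 hx0
  have hap : 0 < a := by rw [ha']; positivity
  obtain ⟨hq0, hq1⟩ := q_bd hβ₀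
  set q := (2 : ℝ) ^ (1 - β₀) with hq
  set L : ℕ → Set (Eu n) := fun k => Lv S V (m + 2 ^ k * δ) with hL
  have hLm : ∀ k, MeasurableSet (L k) := fun k => (Lv_open hS hV _).measurableSet
  have hcover : S ⊆ L 0 ∪ ⋃ k, (L (k + 1) \ L k) := by
    intro x hx
    by_cases h0 : x ∈ L 0
    · exact Or.inl h0
    right
    have hex : ∃ k, x ∈ L k := by
      obtain ⟨k, hk⟩ := pow_unbounded_of_one_lt ((V x - m) / δ) (by norm_num : (1 : ℝ) < 2)
      refine ⟨k, hx, ?_⟩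
      rw [div_lt_iff₀ hδp] at hk
      linarith
    classical
    have hspec := Nat.find_spec hex
    have hpos : Nat.find hex ≠ 0 := fun h => h0 (by rw [h] at hspec; exact hspec)
    obtain ⟨j, hj⟩ := Nat.exists_eq_succ_of_ne_zero hpos
    refine Set.mem_iUnion.2 ⟨j, ?_, Nat.find_min hex (by omega)⟩
    rw [hj] at hspec; exact hspec
  have hterm : ∀ k, ∫⁻ x in L (k + 1) \ L k, ENNReal.ofReal (f x) ≤
      ENNReal.ofReal (a * ((2 * β₀ ^ β₀) ^ n * q ^ k)) * volume (L 0) := by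
    intro k
    calc ∫⁻ x in L (k + 1) \ L k, ENNReal.ofReal (f x)
        ≤ ∫⁻ x in L (k + 1) \ L k, ENNReal.ofReal (a * (((2 : ℝ) ^ k / β₀) ^ (-β₀)) ^ n) := by
          refine setLIntegral_mono' ((hLm _).diff (hLm _)) fun x hx => ?_
          apply ENNReal.ofReal_le_ofReal
          rw [hf x hx.1.1, ha']
          refine upper_bd hn hmp hβ₀ hβ (one_le_pow₀ (by norm_num)) ?_
          by_contra hc
          exact hx.2 ⟨hx.1.1, not_le.1 hc⟩
      _ = ENNReal.ofReal (a * (((2 : ℝ) ^ k / β₀) ^ (-β₀)) ^ n) * volume (L (k + 1) \ L k) :=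
          setLIntegral_const _ _
      _ ≤ ENNReal.ofReal (a * (((2 : ℝ) ^ k / β₀) ^ (-β₀)) ^ n) *
          (ENNReal.ofReal (((2 : ℝ) ^ (k + 1)) ^ n) * volume (L 0)) := by
          gcongr
          refine (measure_mono Set.sdiff_subset).trans ?_
          have := Lv_vol hV hx0 δ (2 ^ (k + 1)) (one_le_pow₀ (by norm_num))
          simpa [hL] using this
      _ ≤ _ := by
          rw [← mul_assoc, ← ENNReal.ofReal_mul (by positivity), mul_assoc]
          refine mul_le_mul_left (ENNReal.ofReal_le_ofReal ?_) _
          exact mul_le_mul_of_nonneg_left (term_bd hn hβ₀ k) hap.le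
  have h0 : ∫⁻ x in L 0, ENNReal.ofReal (f x) ≤ ENNReal.ofReal (2 * a) * volume (L 0) := by
    rw [← setLIntegral_const]
    exact lintegral_mono_ae (ae_restrict_of_ae hM)
  have hsum : ∑' k : ℕ, ENNReal.ofReal (a * ((2 * β₀ ^ β₀) ^ n * q ^ k)) =
      ENNReal.ofReal (a * ((2 * β₀ ^ β₀) ^ n * (1 - q)⁻¹)) := by
    rw [← ENNReal.ofReal_tsum_of_nonneg]
    · rw [tsum_mul_left, tsum_mul_left, tsum_geometric_of_lt_one hq0.le hq1]
    · intro k; positivity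
    · exact ((summable_geometric_of_lt_one hq0.le hq1).mul_left _).mul_left _
  have hS1 : ∫⁻ x, ENNReal.ofReal (f x) = ∫⁻ x in S, ENNReal.ofReal (f x) := by
    rw [← lintegral_indicator hS.measurableSet]
    refine lintegral_congr fun x => ?_
    by_cases hx : x ∈ S
    · rw [Set.indicator_of_mem hx]
    · rw [Set.indicator_of_notMem hx, hf0 x hx]; simp
  have hL0 : L 0 = Lv S V (m + δ) := by simp [hL]
  rw [← hL0, ← h1, hS1]
  calc ∫⁻ x in S, ENNReal.ofReal (f x)
      ≤ ∫⁻ x in L 0 ∪ ⋃ k, (L (k + 1) \ L k), ENNReal.ofReal (f x) := lintegral_mono_set hcover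
    _ ≤ (∫⁻ x in L 0, ENNReal.ofReal (f x)) + ∫⁻ x in ⋃ k, (L (k + 1) \ L k), ENNReal.ofReal (f x) :=
        lintegral_union_le _ _ _
    _ ≤ (∫⁻ x in L 0, ENNReal.ofReal (f x)) +
        ∑' k, ∫⁻ x in (L (k + 1) \ L k), ENNReal.ofReal (f x) := by
        gcongr; exact lintegral_iUnion_le _ _
    _ ≤ ENNReal.ofReal (2 * a) * volume (L 0) +
        ∑' k : ℕ, ENNReal.ofReal (a * ((2 * β₀ ^ β₀) ^ n * q ^ k)) * volume (L 0) :=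
        add_le_add h0 (ENNReal.tsum_le_tsum hterm)
    _ = ENNReal.ofReal (a * (2 + (2 * β₀ ^ β₀) ^ n * (1 - q)⁻¹)) * volume (L 0) := by
        have : 0 < 1 - q := by linarith
        rw [ENNReal.tsum_mul_right, hsum, ← add_mul, ← ENNReal.ofReal_add (by positivity) (by positivity)]
        congr 2; ring
    _ ≤ _ := by
        gcongr
        exact CL_bd hn hβ₀

end Red
end MPos

namespace MPos

noncomputable def C1 : ℝ := 2 * Real.exp 1 * CB + 1

lemma C1_gt : 1 < C1 := by have := CB_pos; unfold C1; linarith [show 0 < 2 * Real.exp 1 * CB by positivity]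

noncomputable def c0 (β₀ : ℝ) : ℝ :=
  Real.exp (-1) * (1 / (4 * C1)) * (3 / 4 * Real.exp (-1)) * (CL β₀)⁻¹ * (1 / 2)

lemma CL_ge {β₀ : ℝ} (hβ₀ : 1 < β₀) : 2 ≤ CL β₀ := by
  obtain ⟨hq0, hq1⟩ := q_bd hβ₀
  have : 0 < 1 - (2 : ℝ) ^ (1 - β₀) := by linarith
  unfold CL
  have : 0 < 2 * β₀ ^ β₀ * (1 - (2 : ℝ) ^ (1 - β₀))⁻¹ := by positivity
  linarith

lemma c0_pos {β₀ : ℝ} (hβ₀ : 1 < β₀) : 0 < c0 β₀ := by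
  have := CL_ge hβ₀
  have := C1_gt
  have : 0 < CL β₀ := by linarith
  unfold c0; positivity

lemma c0_lt {β₀ : ℝ} (hβ₀ : 1 < β₀) : c0 β₀ < 1 := by
  have h1 := CL_ge hβ₀
  have h2 := C1_gt
  have h3 : 0 < CL β₀ := by linarith
  have e1 : Real.exp (-1) ≤ 1 := Real.exp_le_one_iff.2 (by norm_num)
  have e2 : 1 / (4 * C1) ≤ 1 := by rw [div_le_one (by linarith)]; linarith
  have e3 : 3 / 4 * Real.exp (-1) ≤ 1 := by linarith
  have e4 : (CL β₀)⁻¹ ≤ 1 := inv_le_one_of_one_le₀ (by linarith)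
  have : c0 β₀ ≤ 1 * 1 * 1 * 1 * (1 / 2) := by
    unfold c0; gcongr
  linarith

/-- truncation of an open convex set of finite volume -/
lemma trunc {n : ℕ} {W : Set (Eu n)} (x0 : Eu n) (h0 : volume W ≠ 0) (ht : volume W ≠ ⊤) :
    ∃ R : ℝ, volume W / 2 ≤ volume (W ∩ Metric.ball x0 R) := by
  have hU : W = ⋃ k : ℕ, W ∩ Metric.ball x0 k := by
    rw [← Set.inter_iUnion, Metric.iUnion_ball_nat, Set.inter_univ]
  have hm : Monotone fun k : ℕ => W ∩ Metric.ball x0 k := by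
    intro i j hij
    exact Set.inter_subset_inter_right _ (Metric.ball_subset_ball (by exact_mod_cast hij))
  have hs := hm.measure_iUnion (μ := volume)
  rw [← hU] at hs
  have hlt : volume W / 2 < ⨆ k : ℕ, volume (W ∩ Metric.ball x0 k) := by
    rw [← hs]; exact ENNReal.half_lt_self h0 ht
  obtain ⟨k, hk⟩ := lt_iSup_iff.1 hlt
  exact ⟨k, hk.le⟩

lemma final {n : ℕ} {S : Set (Eu n)} {V : Eu n → ℝ} {β₀ β : ℝ} (hn : 1 ≤ n) (hβ₀ : 1 < β₀)
    (hβ : β₀ * n ≤ β) (hS : IsOpen S)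
    (hV : ConvexOn ℝ S V) (hVp : ∀ x ∈ S, 0 < V x) (f : Eu n → ℝ)
    (hf : ∀ x ∈ S, f x = V x ^ (-β)) (hf0 : ∀ x ∉ S, f x = 0) {x0 : Eu n} (hx0 : x0 ∈ S)
    (hM : ∀ᵐ x, ENNReal.ofReal (f x) ≤ ENNReal.ofReal (2 * f x0)) (hhalf : 1 / 2 ≤ f x0)
    (h1 : ∫⁻ x, ENNReal.ofReal (f x) = 1) :
    ∃ (L : Eu n →L[ℝ] Eu n) (z : Eu n), |L.det| = 1 ∧ ∀ r : ℝ, 0 < r →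
      volume (Metric.ball (0 : Eu n) r) = 1 →
      ENNReal.ofReal (c0 β₀ ^ n) ≤ ∫⁻ x in {y | ‖L (y - z)‖ < r}, ENNReal.ofReal (f x) := by
  have hmass := mass_bd hn hβ₀ hβ hS hV hVp f hf hf0 hx0 hM h1
  have hn' : (1 : ℝ) ≤ n := by exact_mod_cast hn
  have hβp : 0 < β := lt_of_lt_of_le (by positivity) hβ
  have hfin : Module.finrank ℝ (Eu n) = n := by simp
  set m := V x0 with hm
  have hmp : 0 < m := hVp x0 hx0
  set a := f x0 with ha
  have ha' : a = m ^ (-β) := hf x0 hx0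
  have hap : 0 < a := by rw [ha']; positivity
  set Λ := Lv S V (m + m * (n / β)) with hΛ
  have hΛo : IsOpen Λ := Lv_open hS hV _
  have hΛc : Convex ℝ Λ := Lv_convex hV _
  have hlow : ∀ y ∈ Λ, ENNReal.ofReal (a * Real.exp (-n)) ≤ ENNReal.ofReal (f y) := by
    intro y hy
    apply ENNReal.ofReal_le_ofReal
    rw [hf y hy.1, ha']
    exact lower_bd hn hmp (hVp y hy.1) hβp hy.2
  have hlowS : ∀ Y ⊆ Λ, MeasurableSet Y → ENNReal.ofReal (a * Real.exp (-n)) * volume Y ≤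
      ∫⁻ x in Y, ENNReal.ofReal (f x) := by
    intro Y hY hYm
    rw [← setLIntegral_const]
    exact setLIntegral_mono' hYm fun y hy => hlow y (hY hy)
  have hΛ0 : volume Λ ≠ 0 := by
    intro h; rw [h] at hmass; simp at hmass
  have hΛv : volume Λ ≤ ENNReal.ofReal (2 * Real.exp n) := by
    have h2 : ENNReal.ofReal (a * Real.exp (-n)) * volume Λ ≤ 1 := by
      refine (hlowS Λ subset_rfl hΛo.measurableSet).trans ?_
      rw [← h1]; exact setLIntegral_le_lintegral _ _
    calc volume Λ = ENNReal.ofReal (a⁻¹ * Real.exp n) *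
          (ENNReal.ofReal (a * Real.exp (-n)) * volume Λ) := by
          rw [← mul_assoc, ← ENNReal.ofReal_mul (by positivity), Real.exp_neg]
          rw [show a⁻¹ * Real.exp n * (a * (Real.exp n)⁻¹) = 1 by field_simp]
          simp
      _ ≤ ENNReal.ofReal (a⁻¹ * Real.exp n) * 1 := by gcongr
      _ ≤ _ := by
          rw [mul_one]
          apply ENNReal.ofReal_le_ofReal
          gcongr
          rw [inv_le_comm₀ hap (by norm_num)]
          linarith
  have hΛt : volume Λ ≠ ⊤ := ne_top_of_le_ne_top ENNReal.ofReal_ne_top hΛv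
  obtain ⟨R, hR⟩ := trunc x0 hΛ0 hΛt
  set W := Λ ∩ Metric.ball x0 R with hW
  have hWc : Convex ℝ W := hΛc.inter (convex_ball _ _)
  have hWo : IsOpen W := hΛo.inter Metric.isOpen_ball
  have hfr : volume (frontier W) = 0 := hWc.addHaar_frontier volume
  have hclos : closure W ⊆ W ∪ frontier W := by
    intro x hx
    by_cases h : x ∈ W
    · exact Or.inl h
    · refine Or.inr ⟨hx, ?_⟩
      rwa [hWo.interior_eq]
  set K := closure W with hKd
  have hWK : volume W ≤ volume K := measure_mono subset_closure
  have hKW : volume K ≤ volume W := by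
    refine (measure_mono hclos).trans ((measure_union_le _ _).trans ?_)
    rw [hfr, add_zero]
  have hhalf0 : volume Λ / 2 ≠ 0 := (ENNReal.half_pos hΛ0).ne'
  have hK0 : volume K ≠ 0 := fun h => hhalf0 (by
    have := hR.trans hWK
    rw [h] at this
    exact le_antisymm this zero_le)
  have hKcpt : IsCompact K := by
    refine Metric.isCompact_of_isClosed_isBounded isClosed_closure ?_
    exact (Metric.isBounded_ball.subset Set.inter_subset_right).closure
  obtain ⟨L, b, ρ, hL, hρ, hball, hcap⟩ := mpos hn hKcpt hWc.closure hK0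
  set E := {y | ‖L (y - b)‖ ≤ ρ} with hE
  have hEm : MeasurableSet E := by
    apply IsClosed.measurableSet
    exact isClosed_le (by fun_prop) (by fun_prop)
  set Y := W ∩ E with hY
  have hYv : ENNReal.ofReal ((3 / 4 * Real.exp (-1)) ^ n) * (volume Λ / 2) ≤ volume Y := by
    calc _ ≤ ENNReal.ofReal ((3 / 4 * Real.exp (-1)) ^ n) * volume K := by
          gcongr; exact hR.trans hWK
      _ ≤ volume (K ∩ E) := hcap
      _ ≤ volume (Y ∪ frontier W) := by
          apply measure_mono
          rintro y ⟨hy, hyE⟩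
          rcases hclos hy with h | h
          · exact Or.inl ⟨h, hyE⟩
          · exact Or.inr h
      _ ≤ volume Y + volume (frontier W) := measure_union_le _ _
      _ = volume Y := by rw [hfr, add_zero]
  have hYne : Y.Nonempty := by
    by_contra h
    rw [Set.not_nonempty_iff_eq_empty] at h
    rw [h, measure_empty] at hYv
    have h3 := le_antisymm hYv zero_le
    rcases mul_eq_zero.1 h3 with h4 | h4
    · rw [ENNReal.ofReal_eq_zero] at h4
      have : 0 < (3 / 4 * Real.exp (-1)) ^ n := by positivity
      linarith
    · exact hhalf0 h4
  obtain ⟨z, hz⟩ := hYne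
  refine ⟨L, z, hL, fun r hr hvr => ?_⟩
  have hC1 := C1_gt
  have hCB := CB_pos
  have hρr : ρ ≤ C1 * r := by
    by_contra hc
    push Not at hc
    have h5 : volume (Metric.ball (0 : Eu n) (C1 * r)) = ENNReal.ofReal (C1 ^ n) := by
      rw [Measure.addHaar_ball_mul_of_pos _ _ (by linarith), hvr, hfin, mul_one]
    have h6 : volume (Metric.ball (0 : Eu n) (C1 * r)) ≤ ENNReal.ofReal ((2 * Real.exp 1 * CB) ^ n) := by
      calc _ ≤ volume (Metric.closedBall (0 : Eu n) ρ) :=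
            measure_mono ((Metric.ball_subset_ball hc.le).trans Metric.ball_subset_closedBall)
        _ ≤ ENNReal.ofReal (CB ^ n) * volume K := hball
        _ ≤ ENNReal.ofReal (CB ^ n) * ENNReal.ofReal (2 * Real.exp n) := by
            gcongr
            exact hKW.trans ((measure_mono Set.inter_subset_left).trans hΛv)
        _ ≤ _ := by
            rw [← ENNReal.ofReal_mul (by positivity)]
            apply ENNReal.ofReal_le_ofReal
            rw [mul_pow, mul_pow, ← Real.exp_nat_mul, mul_one, mul_comm]
            gcongr
            exact le_self_pow₀ (by norm_num) (by omega)
    rw [h5] at h6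
    have h7 := (ENNReal.ofReal_le_ofReal_iff (by positivity)).1 h6
    have h8 : (2 * Real.exp 1 * CB) ^ n < C1 ^ n := by
      apply pow_lt_pow_left₀ _ (by positivity) (by omega)
      unfold C1; linarith
    linarith
  set κ := 1 / (4 * C1) with hκ
  have hκp : 0 < κ := by positivity
  have hκ1 : κ ≤ 1 := by rw [hκ, div_le_one (by linarith)]; linarith
  set Y' := AffineMap.homothety z κ '' Y with hY'
  have hYm : MeasurableSet Y := hWo.measurableSet.inter hEm
  have hY'v : volume Y' = ENNReal.ofReal (κ ^ n) * volume Y := by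
    rw [hY', Measure.addHaar_image_homothety, hfin, abs_of_pos (by positivity)]
  have hhom : ∀ y, AffineMap.homothety z κ y = κ • y + (1 - κ) • z := by
    intro y
    rw [AffineMap.homothety_apply]
    simp only [vsub_eq_sub, vadd_eq_add]
    module
  have hY'Λ : Y' ⊆ Λ := by
    rintro _ ⟨y, hy, rfl⟩
    rw [hhom]
    exact hΛc hy.1.1 hz.1.1 hκp.le (by linarith) (by ring)
  have hY'm : MeasurableSet Y' := by
    have : Y' = (fun x => κ⁻¹ • (x - (1 - κ) • z)) ⁻¹' Y := by
      ext x
      constructor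
      · rintro ⟨y, hy, rfl⟩
        show κ⁻¹ • (AffineMap.homothety z κ y - (1 - κ) • z) ∈ Y
        rw [hhom, add_sub_cancel_right, inv_smul_smul₀ hκp.ne']
        exact hy
      · intro hx
        refine ⟨_, hx, ?_⟩
        rw [hhom, smul_inv_smul₀ hκp.ne', sub_add_cancel]
    rw [this]
    exact hYm.preimage (by fun_prop)
  have hY'b : Y' ⊆ {y | ‖L (y - z)‖ < r} := by
    rintro _ ⟨y, hy, rfl⟩
    show ‖L (AffineMap.homothety z κ y - z)‖ < r
    have e : AffineMap.homothety z κ y - z = κ • ((y - b) - (z - b)) := by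
      rw [hhom]; module
    rw [e, map_smul, map_sub, norm_smul, Real.norm_eq_abs, abs_of_pos hκp]
    have h9 : ‖L (y - b) - L (z - b)‖ ≤ ρ + ρ :=
      (norm_sub_le _ _).trans (add_le_add hy.2 hz.2)
    calc κ * ‖L (y - b) - L (z - b)‖ ≤ κ * (C1 * r + C1 * r) := by
          gcongr; linarith
      _ = r / 2 := by rw [hκ]; field_simp; ring
      _ < r := by linarith
  have hCL := CL_ge hβ₀
  have hCLp : 0 < CL β₀ := by linarith
  calc ENNReal.ofReal (c0 β₀ ^ n)
      ≤ ENNReal.ofReal (Real.exp (-n) * κ ^ n * (3 / 4 * Real.exp (-1)) ^ n * (CL β₀)⁻¹ ^ n * (1 / 2)) := by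
        apply ENNReal.ofReal_le_ofReal
        rw [c0, mul_pow, mul_pow, mul_pow, mul_pow (Real.exp (-1)), ← Real.exp_nat_mul, mul_neg_one]
        gcongr
        exact pow_le_of_le_one (by norm_num) (by norm_num) (by omega)
    _ ≤ ENNReal.ofReal (Real.exp (-n) * κ ^ n * (3 / 4 * Real.exp (-1)) ^ n * (CL β₀)⁻¹ ^ n * (1 / 2)) *
          (ENNReal.ofReal (a * CL β₀ ^ n) * volume Λ) := le_mul_of_one_le_right zero_le hmass
    _ = ENNReal.ofReal (a * Real.exp (-n)) * (ENNReal.ofReal (κ ^ n) *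
          (ENNReal.ofReal ((3 / 4 * Real.exp (-1)) ^ n) * (volume Λ / 2))) := by
        have e2 : volume Λ / 2 = ENNReal.ofReal (1 / 2) * volume Λ := by
          rw [ENNReal.div_eq_inv_mul, one_div, ENNReal.ofReal_inv_of_pos (by norm_num)]
          simp
        rw [e2]
        rw [← mul_assoc, ← mul_assoc, ← mul_assoc, ← mul_assoc, ← ENNReal.ofReal_mul (by positivity),
          ← ENNReal.ofReal_mul (by positivity), ← ENNReal.ofReal_mul (by positivity),
          ← ENNReal.ofReal_mul (by positivity)]
        congr 2
        rw [inv_pow]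
        field_simp
    _ ≤ ENNReal.ofReal (a * Real.exp (-n)) * (ENNReal.ofReal (κ ^ n) * volume Y) :=
        mul_le_mul_right (mul_le_mul_right hYv _) _
    _ = ENNReal.ofReal (a * Real.exp (-n)) * volume Y' := by rw [hY'v]
    _ ≤ ∫⁻ x in Y', ENNReal.ofReal (f x) := hlowS Y' hY'Λ hY'm
    _ ≤ _ := lintegral_mono_set hY'b

end MPos

/-- M-position for convex measures (Proposition 6.2): a sufficiently convex probability
measure with ‖f‖ ≥ 1 can be put, by an (affine) volume preserving map, in a position where
it gives mass at least c₀ⁿ to the Euclidean ball of volume one centered at the origin. -/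
theorem statement15 (β₀ : ℝ) (hβ₀ : 1 < β₀) :
    ∃ c₀ : ℝ, 0 < c₀ ∧ c₀ < 1 ∧
      ∀ (n : ℕ), 1 ≤ n → ∀ β : ℝ, (n : ℝ) + 1 ≤ β → β₀ * n ≤ β →
      ∀ (μ : Measure (EuclideanSpace ℝ (Fin n)))
        (f : EuclideanSpace ℝ (Fin n) → ℝ),
        μ = volume.withDensity (fun x => ENNReal.ofReal (f x)) →
        IsProbabilityMeasure μ → ConvexForm f β → 1 ≤ densSup f →
        ∃ u : EuclideanSpace ℝ (Fin n) →ᵃ[ℝ] EuclideanSpace ℝ (Fin n),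
          |LinearMap.det u.linear| = 1 ∧
          ∀ r : ℝ, 0 < r →
            volume (Metric.ball (0 : EuclideanSpace ℝ (Fin n)) r) = 1 →
            ENNReal.ofReal (c₀ ^ n) ≤ Measure.map u μ (Metric.ball 0 r) := by
  refine ⟨MPos.c0 β₀, MPos.c0_pos hβ₀, MPos.c0_lt hβ₀, ?_⟩
  intro n hn β _ hβ μ f hμ hP hcf hsup
  obtain ⟨S, V, hS, _, hV, hVp, hf, hf0⟩ := hcf
  unfold densSup at hsup
  set Mt : ℝ≥0∞ := essSup (fun x => ENNReal.ofReal (f x)) volume with hMt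
  have hMtop : Mt ≠ ⊤ := by
    intro h
    rw [h] at hsup
    norm_num at hsup
  have hM0 : Mt ≠ 0 := by
    intro h
    rw [h] at hsup
    norm_num at hsup
  obtain ⟨x0, hx0⟩ : ∃ x0, Mt / 2 < ENNReal.ofReal (f x0) := by
    by_contra hcon
    push Not at hcon
    have h2 : Mt ≤ Mt / 2 := essSup_le_of_ae_le _ (Filter.Eventually.of_forall hcon)
    exact absurd (ENNReal.half_lt_self hM0 hMtop) (not_lt.mpr h2)
  have hfx : Mt.toReal / 2 < f x0 := by
    have h3 := (ENNReal.lt_ofReal_iff_toReal_lt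
      (ENNReal.div_ne_top hMtop (by norm_num))).mp hx0
    simpa [ENNReal.toReal_div] using h3
  have hhalf : 1 / 2 ≤ f x0 := by linarith
  have hxS : x0 ∈ S := by
    by_contra h
    have := hf0 x0 h
    linarith
  have hMle : Mt ≤ ENNReal.ofReal (2 * f x0) := by
    rw [ENNReal.le_ofReal_iff_toReal_le hMtop (by linarith)]
    linarith
  have hM : ∀ᵐ x, ENNReal.ofReal (f x) ≤ ENNReal.ofReal (2 * f x0) := by
    filter_upwards [ENNReal.ae_le_essSup (μ := volume) (fun x => ENNReal.ofReal (f x))] with x hx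
    exact hx.trans hMle
  have h1 : ∫⁻ x, ENNReal.ofReal (f x) = 1 := by
    have h := hP.measure_univ
    rw [hμ, withDensity_apply _ MeasurableSet.univ, Measure.restrict_univ] at h
    exact h
  obtain ⟨L, z, hdet, hL⟩ := MPos.final hn hβ₀ hβ hS hV hVp f hf hf0 hxS hM hhalf h1
  let u : EuclideanSpace ℝ (Fin n) →ᵃ[ℝ] EuclideanSpace ℝ (Fin n) :=
    { toFun := fun y => L (y - z)
      linear := L.toLinearMap
      map_vadd' := by
        intro p v
        simp only [vadd_eq_add, ContinuousLinearMap.coe_coe]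
        rw [← map_add, add_sub_assoc] }
  have hu : ∀ y, u y = L (y - z) := fun _ => rfl
  refine ⟨u, hdet, ?_⟩
  intro r hr hvol
  have hum : Measurable u := by
    have hc : Continuous (fun y => L (y - z)) := by fun_prop
    exact hc.measurable
  rw [Measure.map_apply hum measurableSet_ball, hμ,
    withDensity_apply _ (hum measurableSet_ball)]
  have hset : u ⁻¹' Metric.ball 0 r = {y | ‖L (y - z)‖ < r} := by
    ext y
    simp [hu]
  rw [hset]
  exact hL r hr hvol
end
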